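/- arXiv:math/9211207 — 4 statements merged into one kernel-verified Lean document; each statement's English description precedes it below -/
import Mathlib

section
/- Let Z be a quasi-Banach space of cotype 2 and let X be a quasi-Banach space subordinate to Z. Assume that either X or Z has the strong approximation property. If Y is a closed subspace of X whose dual Y* has cotype 2, then Y is locally convex (its quasi-norm is equivalent to a norm). -/
open scoped ENNReal NNReal BigOperators

universe uX uY uZ uW uE uO uG uV

/-- The sign `±1` attached to a Boolean. -/
noncomputable def rsign (b : Bool) : ℝ := if b then 1 else -1

section Defs

variable {X : Type uX} {Y : Type uY} {Z : Type uZ} {W : Type uW}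
  [AddCommGroup X] [Module ℝ X] [AddCommGroup Y] [Module ℝ Y]
  [AddCommGroup Z] [Module ℝ Z] [AddCommGroup W] [Module ℝ W]

/-- A quasi-norm on a real vector space. -/
structure QuasiNormOn (X : Type uX) [AddCommGroup X] [Module ℝ X] : Type uX where
  q : X → ℝ
  nonneg : ∀ x, 0 ≤ q x
  eq_zero_iff : ∀ x, q x = 0 ↔ x = 0
  smul_eq : ∀ (a : ℝ) (x : X), q (a • x) = |a| * q x
  k : ℝ
  one_le_k : 1 ≤ k
  tri : ∀ x y, q (x + y) ≤ k * (q x + q y)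

/-- Completeness of a quasi-normed space, via Cauchy sequences for the quasi-norm
(the induced topology is metrizable, so sequences suffice). -/
def CauchyComplete (q : X → ℝ) : Prop :=
  ∀ f : ℕ → X, (∀ ε > (0:ℝ), ∃ N, ∀ m ≥ N, ∀ n ≥ N, q (f m - f n) < ε) →
    ∃ x, ∀ ε > (0:ℝ), ∃ N, ∀ n ≥ N, q (f n - x) < ε

/-- `u` is bounded by `M` as an operator `(X,qX) → (Y,qY)`. -/
def OpBoundedBy (qX : X → ℝ) (qY : Y → ℝ) (u : X →ₗ[ℝ] Y) (M : ℝ) : Prop :=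
  ∀ x, qY (u x) ≤ M * qX x

/-- `u` is a bounded operator `(X,qX) → (Y,qY)`. -/
def IsBddOp (qX : X → ℝ) (qY : Y → ℝ) (u : X →ₗ[ℝ] Y) : Prop :=
  ∃ M, 0 ≤ M ∧ OpBoundedBy qX qY u M

/-- The operator (quasi-)norm of `u : (X,qX) → (Y,qY)`. -/
noncomputable def opQNorm (qX : X → ℝ) (qY : Y → ℝ) (u : X →ₗ[ℝ] Y) : ℝ :=
  sInf {M | 0 ≤ M ∧ OpBoundedBy qX qY u M}

/-- The `L_p`-average of `q (∑ᵢ εᵢ xᵢ)` over all choices of signs `εᵢ = ±1`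
(the normalized counting measure on `D_n = {-1,1}ⁿ`). -/
noncomputable def radAvg (q : X → ℝ) (p : ℝ) {n : ℕ} (x : Fin n → X) : ℝ :=
  (((2:ℝ) ^ n)⁻¹ * ∑ ε : Fin n → Bool, q (∑ i, rsign (ε i) • x i) ^ p) ^ (1 / p)

/-- `(X,q)` has cotype `p` with constant at most `C`. -/
def CotypeConstLe (q : X → ℝ) (p C : ℝ) : Prop :=
  ∀ (n : ℕ) (x : Fin n → X), (∑ i, q (x i) ^ p) ^ (1 / p) ≤ C * radAvg q p x

/-- `(X,q)` has cotype `p`. -/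
def HasCotype (q : X → ℝ) (p : ℝ) : Prop := ∃ C, 0 < C ∧ CotypeConstLe q p C

/-- `(X,q)` has type 2 constant at most `C`. -/
def Type2ConstLe (q : X → ℝ) (C : ℝ) : Prop :=
  ∀ (n : ℕ) (x : Fin n → X),
    radAvg q (2:ℝ) x ≤ C * (∑ i, q (x i) ^ (2:ℝ)) ^ (1/2 : ℝ)

/-- A linear functional bounded with respect to the quasi-norm `q`. -/
def DualBdd (q : X → ℝ) (f : X →ₗ[ℝ] ℝ) : Prop := ∃ M, 0 ≤ M ∧ ∀ x, |f x| ≤ M * q x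

/-- The dual norm of a linear functional on `(X,q)`. -/
noncomputable def dualNorm (q : X → ℝ) (f : X →ₗ[ℝ] ℝ) : ℝ :=
  sInf {M | 0 ≤ M ∧ ∀ x, |f x| ≤ M * q x}

/-- The dual space `X*` of `(X,q)` has cotype 2 (as a Banach space with the dual norm). -/
def DualHasCotype2 (q : X → ℝ) : Prop :=
  ∃ C, 0 < C ∧ ∀ (n : ℕ) (f : Fin n → (X →ₗ[ℝ] ℝ)), (∀ i, DualBdd q (f i)) →
    (∑ i, dualNorm q (f i) ^ (2:ℝ)) ^ (1/2:ℝ) ≤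
      C * ((((2:ℝ) ^ n)⁻¹ *
        ∑ ε : Fin n → Bool, dualNorm q (∑ i, rsign (ε i) • f i) ^ (2:ℝ)) ^ (1/2:ℝ))

/-- `(X,qX)` is subordinate to `(Z,qZ)` : `X` is isomorphic to a (closed) subspace of
`ℓ_∞(I; Z)` for some index set `I`. -/
def Subordinate (qX : X → ℝ) (qZ : Z → ℝ) : Prop :=
  ∃ (I : Type uX) (_ : Nonempty I) (T : X →ₗ[ℝ] (I → Z)) (c C : ℝ), 0 < c ∧ 0 < C ∧
    (∀ x i, qZ (T x i) ≤ C * qX x) ∧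
    (∀ x, c * qX x ≤ sSup (Set.range fun i => qZ (T x i)))

/-- `S` is a closed subset of `(X,q)` (sequences suffice, the topology being metrizable). -/
def QClosed (q : X → ℝ) (S : Set X) : Prop :=
  ∀ (f : ℕ → X) (x : X), (∀ n, f n ∈ S) →
    Filter.Tendsto (fun n => q (f n - x)) Filter.atTop (nhds 0) → x ∈ S

/-- The quasi-norm `q` is equivalent to a (genuine) norm, i.e. the space is locally convex. -/
def IsLocallyConvexQN (q : X → ℝ) : Prop :=
  ∃ (N : X → ℝ) (c C : ℝ), 0 < c ∧
    (∀ x y, N (x + y) ≤ N x + N y) ∧ (∀ (a : ℝ) (x : X), N (a • x) = |a| * N x) ∧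
    ∀ x, c * N x ≤ q x ∧ q x ≤ C * N x

/-- `S` is closed under pointwise limits of bounded nets (equivalently, filters). -/
def NetClosed (qX : X → ℝ) (qY : Y → ℝ) (S : Set (X →ₗ[ℝ] Y)) : Prop :=
  ∀ l : Filter (X →ₗ[ℝ] Y), l.NeBot →
    (∀ᶠ w in l, w ∈ S) →
    (∃ B, ∀ᶠ w in l, OpBoundedBy qX qY w B) →
    ∀ u : X →ₗ[ℝ] Y,
      (∀ x, Filter.Tendsto (fun w : X →ₗ[ℝ] Y => qY (w x - u x)) l (nhds 0)) → u ∈ S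

/-- `u` belongs to the smallest subspace of `L(X,Y)` which contains the finite-rank
operators and is closed under pointwise convergence of bounded nets. -/
def StronglyApproximable (qX : X → ℝ) (qY : Y → ℝ) (u : X →ₗ[ℝ] Y) : Prop :=
  ∀ S : Set (X →ₗ[ℝ] Y),
    (∀ w ∈ S, IsBddOp qX qY w) →
    (∀ w w', w ∈ S → w' ∈ S → w + w' ∈ S) →
    (∀ (a : ℝ) (w : X →ₗ[ℝ] Y), w ∈ S → a • w ∈ S) →
    (∀ w : X →ₗ[ℝ] Y, IsBddOp qX qY w → Module.Finite ℝ (LinearMap.range w) → w ∈ S) →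
    NetClosed qX qY S → u ∈ S

end Defs

section Part1
open scoped Pointwise

section Basic
variable {E : Type uE} [AddCommGroup E] [Module ℝ E]

namespace QuasiNormOn
variable (Q : QuasiNormOn E)

lemma k_pos : 0 < Q.k := lt_of_lt_of_le one_pos Q.one_le_k

lemma q_zero : Q.q 0 = 0 := (Q.eq_zero_iff 0).2 rfl

lemma q_neg (x : E) : Q.q (-x) = Q.q x := by
  have := Q.smul_eq (-1) x
  simpa using this

lemma q_sum_le {ι : Type*} (s : Finset ι) (f : ι → E) :
    Q.q (∑ i ∈ s, f i) ≤ Q.k ^ s.card * ∑ i ∈ s, Q.q (f i) := by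
  classical
  induction s using Finset.induction_on with
  | empty => simp [Q.q_zero]
  | insert a s ha ih =>
    rw [Finset.sum_insert ha, Finset.sum_insert ha, Finset.card_insert_of_notMem ha]
    have h1 := Q.tri (f a) (∑ i ∈ s, f i)
    have hk : 1 ≤ Q.k ^ s.card := one_le_pow₀ Q.one_le_k
    have h2 : Q.q (f a) ≤ Q.k ^ s.card * Q.q (f a) := le_mul_of_one_le_left (Q.nonneg _) hk
    calc _ ≤ _ := h1
      _ ≤ Q.k * (Q.k ^ s.card * Q.q (f a) + Q.k ^ s.card * ∑ i ∈ s, Q.q (f i)) := by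
        have := Q.k_pos
        gcongr
      _ = _ := by ring

lemma tri_sq (x y : E) : Q.q (x + y) ^ 2 ≤ 2 * Q.k ^ 2 * (Q.q x ^ 2 + Q.q y ^ 2) := by
  have h := Q.tri x y
  have h0 := Q.nonneg (x + y)
  calc Q.q (x + y) ^ 2 ≤ (Q.k * (Q.q x + Q.q y)) ^ 2 := by gcongr
    _ = Q.k ^ 2 * (Q.q x + Q.q y) ^ 2 := by ring
    _ ≤ Q.k ^ 2 * (2 * (Q.q x ^ 2 + Q.q y ^ 2)) := by
      gcongr
      nlinarith [sq_nonneg (Q.q x - Q.q y)]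
    _ = _ := by ring

/-- The closed unit ball. -/
def ball : Set E := {x | Q.q x ≤ 1}

/-- The seminorm of the Banach envelope. -/
noncomputable def env (x : E) : ℝ := gauge (convexHull ℝ Q.ball) x

lemma ball_balanced : Balanced ℝ Q.ball := by
  rintro a ha _ ⟨x, hx, rfl⟩
  have hx' : Q.q x ≤ 1 := hx
  show Q.q (a • x) ≤ 1
  rw [Q.smul_eq]
  exact mul_le_one₀ (by simpa using ha) (Q.nonneg _) hx'

lemma hull_balanced : Balanced ℝ (convexHull ℝ Q.ball) := Q.ball_balanced.convexHull

lemma mem_smul_ball {x : E} {r : ℝ} (hr : 0 < r) (h : Q.q x ≤ r) : x ∈ r • Q.ball := by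
  refine ⟨r⁻¹ • x, ?_, by simp [smul_smul, hr.ne']⟩
  show Q.q _ ≤ 1
  rw [Q.smul_eq, abs_of_pos (inv_pos.2 hr)]
  rw [inv_mul_le_iff₀ hr]; simpa

lemma hull_absorbent : Absorbent ℝ (convexHull ℝ Q.ball) := by
  refine Absorbent.mono ?_ (subset_convexHull ℝ _)
  intro x
  refine Absorbs.of_norm (𝕜 := ℝ) ?_
  refine ⟨Q.q x + 1, fun c hc => ?_⟩
  rw [Set.singleton_subset_iff]
  have hc' : Q.q x + 1 ≤ |c| := hc
  have := Q.nonneg x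
  have h0 : 0 < |c| := by linarith
  have hc0 : c ≠ 0 := abs_pos.1 h0
  refine ⟨c⁻¹ • x, ?_, by simp [smul_smul, hc0]⟩
  show Q.q _ ≤ 1
  rw [Q.smul_eq, abs_inv, inv_mul_le_iff₀ h0]; linarith

lemma env_nonneg (x : E) : 0 ≤ Q.env x := gauge_nonneg x

lemma env_add_le (x y : E) : Q.env (x + y) ≤ Q.env x + Q.env y :=
  gauge_add_le (convex_convexHull ℝ _) Q.hull_absorbent x y

lemma env_smul (a : ℝ) (x : E) : Q.env (a • x) = |a| * Q.env x :=
  gauge_smul Q.hull_balanced a x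

lemma env_sum_le {ι : Type*} (s : Finset ι) (f : ι → E) :
    Q.env (∑ i ∈ s, f i) ≤ ∑ i ∈ s, Q.env (f i) :=
  gauge_sum_le (convex_convexHull ℝ _) Q.hull_absorbent s f

lemma env_le (x : E) : Q.env x ≤ Q.q x := by
  refine le_of_forall_pos_le_add fun e he => ?_
  have h := Q.nonneg x
  refine gauge_le_of_mem (by positivity) ?_
  exact Set.smul_set_mono (subset_convexHull ℝ _) (Q.mem_smul_ball (by positivity) (by linarith))

lemma exists_of_env_lt {x : E} {r : ℝ} (h : Q.env x < r) :
    ∃ (ι : Type) (_ : Fintype ι) (w : ι → ℝ) (z : ι → E), (∀ i, 0 ≤ w i) ∧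
      ∑ i, w i = 1 ∧ (∀ i, Q.q (z i) ≤ 1) ∧ x = r • ∑ i, w i • z i := by
  obtain ⟨b, hb, hbr, hx⟩ := exists_lt_of_gauge_lt Q.hull_absorbent h
  obtain ⟨y, hy, rfl⟩ := hx
  obtain ⟨ι, _, w, z, h1, h2, h3, h4⟩ := mem_convexHull_iff_exists_fintype.1 hy
  refine ⟨ι, inferInstance, w, fun i => (b / r) • z i, h1, h2, fun i => ?_, ?_⟩
  · have hr : 0 < r := hb.trans hbr
    have : Q.q (z i) ≤ 1 := h3 i
    rw [Q.smul_eq, abs_of_pos (by positivity)]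
    have h5 : b / r ≤ 1 := (div_le_one hr).2 hbr.le
    exact mul_le_one₀ h5 (Q.nonneg _) this
  · have hr : r ≠ 0 := (hb.trans hbr).ne'
    have : b = r * (b / r) := by field_simp
    simp only [← h4, Finset.smul_sum, smul_smul]
    refine Finset.sum_congr rfl fun i _ => ?_
    congr 1
    field_simp

end QuasiNormOn

/-- The Lindenstrauss–Pelczynski type criterion for factoring through a Hilbert space. -/
def Crit {E : Type uE} {Z : Type uZ} [AddCommGroup E] [Module ℝ E] [AddCommGroup Z] [Module ℝ Z]
    (qE : E → ℝ) (qZ : Z → ℝ) (u : E →ₗ[ℝ] Z) (G : ℝ) : Prop :=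
  ∀ (ι κ : Type) [Fintype ι] [Fintype κ] (a : ι → κ → ℝ),
    (∀ v : κ → ℝ, ∑ i, (∑ j, a i j * v j) ^ 2 ≤ ∑ j, v j ^ 2) →
    ∀ x : κ → E, ∑ i, qZ (u (∑ j, a i j • x j)) ^ 2 ≤ G * ∑ j, qE (x j) ^ 2

variable {Z : Type uZ} [AddCommGroup Z] [Module ℝ Z]

/-- scaled version -/
lemma Crit.scaled {QE : QuasiNormOn E} {QZ : QuasiNormOn Z} {u : E →ₗ[ℝ] Z} {G : ℝ}
    (h : Crit QE.q QZ.q u G) {ι κ : Type} [Fintype ι] [Fintype κ] (a : ι → κ → ℝ) {c : ℝ}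
    (hc : 0 < c)
    (ha : ∀ v : κ → ℝ, ∑ i, (∑ j, a i j * v j) ^ 2 ≤ c * ∑ j, v j ^ 2) (x : κ → E) :
    ∑ i, QZ.q (u (∑ j, a i j • x j)) ^ 2 ≤ c * G * ∑ j, QE.q (x j) ^ 2 := by
  have hs : 0 < √c := Real.sqrt_pos.2 hc
  have hsq : √c ^ 2 = c := Real.sq_sqrt hc.le
  have := h ι κ (fun i j => (√c)⁻¹ * a i j) (fun v => ?_) (fun j => √c • x j)
  · simp only [smul_smul, QE.smul_eq, mul_pow, sq_abs, hsq] at this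
    rw [← Finset.mul_sum] at this
    calc _ = _ := ?_
      _ ≤ _ := this
      _ = _ := by ring
    refine Finset.sum_congr rfl fun i _ => ?_
    congr 3
    refine Finset.sum_congr rfl fun j _ => ?_
    congr 1
    field_simp
  · have h2 := ha v
    have : ∀ i, (∑ j, (√c)⁻¹ * a i j * v j) = (√c)⁻¹ * ∑ j, a i j * v j := fun i => by
      rw [Finset.mul_sum]; simp only [mul_assoc]
    simp only [this, mul_pow, inv_pow, hsq, ← Finset.mul_sum]
    rwa [inv_mul_le_iff₀ hc]

lemma Crit.env_aux {QE : QuasiNormOn E} {QZ : QuasiNormOn Z} {u : E →ₗ[ℝ] Z} {G : ℝ} (hG : 0 ≤ G)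
    (h : Crit QE.q QZ.q u G) {ι κ : Type} [Fintype ι] [Fintype κ] (a : ι → κ → ℝ)
    {c : ℝ} (hc : 0 < c)
    (ha : ∀ v : κ → ℝ, ∑ i, (∑ j, a i j * v j) ^ 2 ≤ c * ∑ j, v j ^ 2) (x : κ → E)
    (r : κ → ℝ) (hr : ∀ j, QE.env (x j) < r j) :
    ∑ i, QZ.q (u (∑ j, a i j • x j)) ^ 2 ≤ c * G * ∑ j, r j ^ 2 := by
  choose L hL w z hw hw1 hz hx using fun j => QE.exists_of_env_lt (hr j)
  have key := h.scaled (ι := ι) (κ := Σ j, L j) (fun i p => a i p.1 * √(w p.1 p.2)) hc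
    (fun v => ?_) (fun p => (r p.1 * √(w p.1 p.2)) • z p.1 p.2)
  · calc _ = _ := ?_
      _ ≤ _ := key
      _ ≤ _ := ?_
    · refine Finset.sum_congr rfl fun i _ => ?_
      congr 3
      rw [Fintype.sum_sigma]
      refine Finset.sum_congr rfl fun j _ => ?_
      conv_lhs => rw [hx j]
      simp only [Finset.smul_sum, smul_smul]
      refine Finset.sum_congr rfl fun l _ => ?_
      congr 1
      have := Real.mul_self_sqrt (hw j l)
      linear_combination (-(a i j * r j)) * this
    · gcongr
      rw [Fintype.sum_sigma]
      refine Finset.sum_le_sum fun j _ => ?_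
      calc _ ≤ ∑ l, r j ^ 2 * w j l := ?_
        _ = _ := by rw [← Finset.mul_sum, hw1, mul_one]
      refine Finset.sum_le_sum fun l _ => ?_
      have h1 := hz j l
      have h0 := QE.nonneg (z j l)
      rw [QE.smul_eq, mul_pow, sq_abs, mul_pow, Real.sq_sqrt (hw j l)]
      have := hw j l
      have h2 : QE.q (z j l) ^ 2 ≤ 1 := pow_le_one₀ h0 h1
      exact mul_le_of_le_one_right (by positivity) h2
  · have h2 := ha (fun j => ∑ l, √(w j l) * v ⟨j, l⟩)
    calc _ = _ := ?_
      _ ≤ _ := h2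
      _ ≤ _ := ?_
    · refine Finset.sum_congr rfl fun i _ => ?_
      congr 1
      rw [Fintype.sum_sigma]
      simp only [Finset.mul_sum, mul_assoc]
    · gcongr
      rw [Fintype.sum_sigma]
      refine Finset.sum_le_sum fun j _ => ?_
      have := Finset.sum_mul_sq_le_sq_mul_sq Finset.univ (fun l => √(w j l)) (fun l => v ⟨j, l⟩)
      simpa [Real.sq_sqrt (hw j _), hw1] using this

/-- the criterion extends to the Banach envelope -/
lemma Crit.env {QE : QuasiNormOn E} {QZ : QuasiNormOn Z} {u : E →ₗ[ℝ] Z} {G : ℝ} (hG : 0 ≤ G)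
    (h : Crit QE.q QZ.q u G) {ι κ : Type} [Fintype ι] [Fintype κ] (a : ι → κ → ℝ)
    {c : ℝ} (hc : 0 < c)
    (ha : ∀ v : κ → ℝ, ∑ i, (∑ j, a i j * v j) ^ 2 ≤ c * ∑ j, v j ^ 2) (x : κ → E) :
    ∑ i, QZ.q (u (∑ j, a i j • x j)) ^ 2 ≤ c * G * ∑ j, QE.env (x j) ^ 2 := by
  have hcont : Continuous fun e : ℝ => c * G * ∑ j, (QE.env (x j) + e) ^ 2 := by fun_prop
  have ht := (hcont.tendsto 0).mono_left (nhdsWithin_le_nhds (s := Set.Ioi 0))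
  simp only [add_zero] at ht
  refine ge_of_tendsto ht ?_
  filter_upwards [self_mem_nhdsWithin] with e he
  exact h.env_aux hG a hc ha x _ (fun j => by simpa using he)

lemma Crit.single {QE : QuasiNormOn E} {QZ : QuasiNormOn Z} {u : E →ₗ[ℝ] Z} {G : ℝ} (hG : 0 ≤ G)
    (h : Crit QE.q QZ.q u G) (x : E) : QZ.q (u x) ^ 2 ≤ G * QE.env x ^ 2 := by
  have := h.env hG (ι := Unit) (κ := Unit) (fun _ _ => 1) one_pos (by simp) (fun _ => x)
  simpa using this

end Basic

end Part1

section Part2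
open scoped Pointwise

section Sampling
variable {E : Type uE} [AddCommGroup E] [Module ℝ E]
variable {Z : Type uZ} [AddCommGroup Z] [Module ℝ Z]

lemma QuasiNormOn.exists_of_env_lt_pos (Q : QuasiNormOn E) {x : E} {r : ℝ} (h : Q.env x < r) :
    ∃ (ι : Type) (_ : Fintype ι) (w : ι → ℝ) (z : ι → E), (∀ i, 0 < w i) ∧
      ∑ i, w i = 1 ∧ (∀ i, Q.q (z i) ≤ 1) ∧ x = r • ∑ i, w i • z i := by
  classical
  obtain ⟨ι, _, w, z, h1, h2, h3, h4⟩ := Q.exists_of_env_lt h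
  have key : ∀ {A : Type uE} [AddCommMonoid A] (f : ι → A), (∀ i, w i = 0 → f i = 0) →
      ∑ i : {i // w i ≠ 0}, f i = ∑ i, f i := by
    intro A _ f hf
    rw [← Finset.sum_subtype (p := fun i => w i ≠ 0) (Finset.univ.filter (fun i => w i ≠ 0)) (by simp) f]
    · rw [Finset.sum_filter_of_ne]
      · intro i _ hi h0
        exact hi (hf i h0)
  have key' : ∀ (f : ι → ℝ), (∀ i, w i = 0 → f i = 0) →
      ∑ i : {i // w i ≠ 0}, f i = ∑ i, f i := by
    intro f hf
    rw [← Finset.sum_subtype (p := fun i => w i ≠ 0) (Finset.univ.filter (fun i => w i ≠ 0)) (by simp) f]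
    · rw [Finset.sum_filter_of_ne]
      · intro i _ hi h0
        exact hi (hf i h0)
  refine ⟨{i // w i ≠ 0}, inferInstance, fun i => w i, fun i => z i, fun i => lt_of_le_of_ne (h1 i) (Ne.symm i.2), ?_, fun i => h3 i, ?_⟩
  · rw [key' w (fun i hi => hi), h2]
  · rw [key (fun i => w i • z i) (fun i hi => by simp [hi]), h4]

lemma sampling {ι : Type} [Fintype ι] (w : ι → ℝ) (hw : ∀ i, 0 ≤ w i) (hw1 : ∑ i, w i = 1) (m : ℕ) :
    ∃ (Ω : Type) (_ : Fintype Ω) (P : Ω → ℝ) (c : Ω → Fin m → ι), (∀ ω, 0 ≤ P ω) ∧ ∑ ω, P ω = 1 ∧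
      ∀ g : ι → ℝ, ∑ i, w i * g i = 0 →
        ∑ ω, P ω * ∑ r, g (c ω r) = 0 ∧
        ∑ ω, P ω * (∑ r, g (c ω r)) ^ 2 = m * ∑ i, w i * g i ^ 2 := by
  induction m with
  | zero => exact ⟨Unit, inferInstance, fun _ => 1, fun _ => Fin.elim0, by simp, by simp, by simp⟩
  | succ m ih =>
    obtain ⟨Ω, _, P, c, hP, hP1, h⟩ := ih
    refine ⟨Ω × ι, inferInstance, fun p => P p.1 * w p.2, fun p => Fin.cons p.2 (c p.1),
      fun p => mul_nonneg (hP _) (hw _), ?_, fun g hg => ?_⟩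
    · rw [Fintype.sum_prod_type]
      simp [← Finset.mul_sum, hw1, hP1]
    · obtain ⟨h1, h2⟩ := h g hg
      have e1 : ∀ S : ℝ, ∑ i, w i * (g i + S) = S := fun S => by
        simp only [mul_add, Finset.sum_add_distrib, hg, ← Finset.sum_mul, hw1]; ring
      have e2 : ∀ S : ℝ, ∑ i, w i * (g i + S) ^ 2 = ∑ i, w i * g i ^ 2 + S ^ 2 := fun S => by
        have : ∀ i, w i * (g i + S) ^ 2 = w i * g i ^ 2 + 2 * S * (w i * g i) + w i * S ^ 2 :=
          fun i => by ring
        simp only [this, Finset.sum_add_distrib, ← Finset.mul_sum, hg, ← Finset.sum_mul, hw1]; ring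
      simp only [Fintype.sum_prod_type, Fin.sum_univ_succ, Fin.cons_zero, Fin.cons_succ, mul_assoc,
        ← Finset.mul_sum, e1, e2]
      refine ⟨h1, ?_⟩
      simp only [mul_add, Finset.sum_add_distrib, h2, ← Finset.sum_mul, hP1]
      push_cast; ring

lemma Crit.weighted {QE : QuasiNormOn E} {QZ : QuasiNormOn Z} {u : E →ₗ[ℝ] Z} {G : ℝ}
    (h : Crit QE.q QZ.q u G) {ι κ : Type} [Fintype ι] [Fintype κ] (b : ι → κ → ℝ)
    (P : ι → ℝ) (hP : ∀ i, 0 ≤ P i) (w : κ → ℝ) (hw : ∀ i, 0 < w i)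
    {c : ℝ} (hc : 0 < c)
    (hb : ∀ v : κ → ℝ, ∑ i, P i * (∑ j, b i j * v j) ^ 2 ≤ c * ∑ j, w j * v j ^ 2) (x : κ → E) :
    ∑ i, P i * QZ.q (u (∑ j, b i j • x j)) ^ 2 ≤ c * G * ∑ j, w j * QE.q (x j) ^ 2 := by
  have hs : ∀ j, √(w j) ≠ 0 := fun j => (Real.sqrt_pos.2 (hw j)).ne'
  have key := h.scaled (fun i j => √(P i) * b i j / √(w j)) hc (fun v => ?_) (fun j => √(w j) • x j)
  · simp only [smul_smul, QE.smul_eq, mul_pow, sq_abs, Real.sq_sqrt (hw _).le] at key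
    calc _ = _ := ?_
      _ ≤ _ := key
    refine Finset.sum_congr rfl fun i _ => ?_
    have : ∑ j, (√(P i) * b i j / √(w j) * √(w j)) • x j = √(P i) • ∑ j, b i j • x j := by
      rw [Finset.smul_sum]
      refine Finset.sum_congr rfl fun j _ => ?_
      rw [smul_smul, div_mul_cancel₀ _ (hs j)]
    rw [this, map_smul, QZ.smul_eq, mul_pow, sq_abs, Real.sq_sqrt (hP i)]
  · have := hb (fun j => v j / √(w j))
    calc _ = _ := ?_
      _ ≤ _ := this
      _ = _ := ?_
    · refine Finset.sum_congr rfl fun i _ => ?_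
      rw [← Real.sq_sqrt (hP i), ← mul_pow, Finset.mul_sum, Real.sq_sqrt (hP i)]
      congr 1
      refine Finset.sum_congr rfl fun j _ => ?_
      ring
    · congr 1
      refine Finset.sum_congr rfl fun j _ => ?_
      rw [div_pow, Real.sq_sqrt (hw j).le]
      have := (hw j).ne'
      field_simp

lemma Crit.sample_aux {QE : QuasiNormOn E} {QZ : QuasiNormOn Z} {u : E →ₗ[ℝ] Z} {G M : ℝ}
    (hG : 0 ≤ G) (hM : 0 ≤ M) (hu : OpBoundedBy QE.q QZ.q u M)
    (h : Crit QE.q QZ.q u G) (m : ℕ) (hm : 0 < m)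
    {ι : Type} [Fintype ι] (w : ι → ℝ) (hw : ∀ i, 0 < w i) (hw1 : ∑ i, w i = 1)
    (x : ι → E) (hx : ∀ i, QE.q (x i) ≤ 1) :
    QZ.q (u (∑ i, w i • x i)) ^ 2 ≤ 2 * QZ.k ^ 2 * (G / m + (M * QE.k ^ m) ^ 2) := by
  classical
  obtain ⟨Ω, _, P, c, hP, hP1, hg⟩ := sampling w (fun i => (hw i).le) hw1 m
  have hm' : (0:ℝ) < m := by exact_mod_cast hm
  let b : Ω → ι → ℝ := fun ω l => w l - (m:ℝ)⁻¹ * ∑ r, if c ω r = l then 1 else 0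
  have hbx : ∀ ω, ∑ l, b ω l • x l = ∑ l, w l • x l - (m:ℝ)⁻¹ • ∑ r, x (c ω r) := fun ω => by
    simp only [b, sub_smul, Finset.sum_sub_distrib, mul_smul, ← Finset.smul_sum, Finset.sum_smul]
    rw [Finset.sum_comm]
    simp
  have hbv : ∀ (v : ι → ℝ) ω, ∑ l, b ω l * v l = ∑ l, w l * v l - (m:ℝ)⁻¹ * ∑ r, v (c ω r) := by
    intro v ω
    simp only [b, sub_mul, Finset.sum_sub_distrib, mul_assoc, ← Finset.mul_sum, Finset.sum_mul]
    rw [Finset.sum_comm]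
    simp
  have key := h.weighted b P hP w hw (c := (m:ℝ)⁻¹) (by positivity) (fun v => ?_) x
  · have h1 : ∑ j, w j * QE.q (x j) ^ 2 ≤ 1 := by
      rw [← hw1]
      refine Finset.sum_le_sum fun j _ => ?_
      exact mul_le_of_le_one_right (hw j).le (pow_le_one₀ (QE.nonneg _) (hx j))
    have h2 : ∑ ω, P ω * QZ.q (u (∑ j, b ω j • x j)) ^ 2 ≤ G / m := by
      refine key.trans ?_
      rw [div_eq_inv_mul]
      exact mul_le_of_le_one_right (by positivity) h1
    obtain ⟨ω, hω⟩ : ∃ ω, QZ.q (u (∑ j, b ω j • x j)) ^ 2 ≤ G / m := by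
      by_contra hcon
      push Not at hcon
      have hne : ∃ ω, 0 < P ω := by
        by_contra hz
        push Not at hz
        have : ∑ ω, P ω ≤ 0 := Finset.sum_nonpos fun ω _ => hz ω
        linarith
      obtain ⟨ω0, hω0⟩ := hne
      have : ∑ ω, P ω * (G / m) < ∑ ω, P ω * QZ.q (u (∑ j, b ω j • x j)) ^ 2 := by
        refine Finset.sum_lt_sum (fun ω _ => mul_le_mul_of_nonneg_left (hcon ω).le (hP ω))
          ⟨ω0, Finset.mem_univ _, mul_lt_mul_of_pos_left (hcon ω0) hω0⟩
      rw [← Finset.sum_mul, hP1, one_mul] at this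
      linarith
    have e : ∑ l, w l • x l = ∑ j, b ω j • x j + (m:ℝ)⁻¹ • ∑ r, x (c ω r) := by
      rw [hbx]; abel
    rw [e, map_add]
    refine (QZ.tri_sq _ _).trans ?_
    have h3 : QZ.q (u ((m:ℝ)⁻¹ • ∑ r, x (c ω r))) ≤ M * QE.k ^ m := by
      refine (hu _).trans ?_
      gcongr
      rw [QE.smul_eq, abs_of_pos (by positivity), inv_mul_le_iff₀ hm']
      refine (QE.q_sum_le _ _).trans ?_
      simp only [Finset.card_univ, Fintype.card_fin]
      rw [mul_comm]
      have := QE.k_pos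
      gcongr
      calc _ ≤ ∑ r : Fin m, (1:ℝ) := Finset.sum_le_sum fun r _ => hx _
        _ = m := by simp
    have h4 := QZ.nonneg (u ((m:ℝ)⁻¹ • ∑ r, x (c ω r)))
    gcongr
  · set S := ∑ l, w l * v l with hS
    have hg0 : ∑ i, w i * (S - v i) = 0 := by
      simp only [mul_sub, Finset.sum_sub_distrib, ← Finset.sum_mul, hw1]; rw [← hS]; ring
    have := (hg (fun l => S - v l) hg0).2
    have e : ∀ ω, ∑ l, b ω l * v l = (m:ℝ)⁻¹ * ∑ r, (S - v (c ω r)) := fun ω => by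
      rw [hbv, Finset.sum_sub_distrib]
      simp only [Finset.sum_const, Finset.card_univ, Fintype.card_fin, nsmul_eq_mul]
      rw [← hS]
      field_simp
    simp only [e, mul_pow]
    calc _ = (m:ℝ)⁻¹ ^ 2 * ∑ ω, P ω * (∑ r, (S - v (c ω r))) ^ 2 := by
          rw [Finset.mul_sum]; refine Finset.sum_congr rfl fun ω _ => by ring
      _ = (m:ℝ)⁻¹ * ∑ i, w i * (S - v i) ^ 2 := by rw [this]; field_simp
      _ ≤ _ := ?_
    refine mul_le_mul_of_nonneg_left ?_ (by positivity)
    have e3 : ∀ i, w i * (S - v i) ^ 2 = S ^ 2 * w i - 2 * S * (w i * v i) + w i * v i ^ 2 :=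
      fun i => by ring
    simp only [e3, Finset.sum_add_distrib, Finset.sum_sub_distrib, ← Finset.mul_sum, hw1]
    rw [← hS]
    nlinarith [sq_nonneg S]

lemma Crit.sample {QE : QuasiNormOn E} {QZ : QuasiNormOn Z} {u : E →ₗ[ℝ] Z} {G M : ℝ}
    (hG : 0 ≤ G) (hM : 0 ≤ M) (hu : OpBoundedBy QE.q QZ.q u M)
    (h : Crit QE.q QZ.q u G) (m : ℕ) (hm : 0 < m) (x : E) :
    QZ.q (u x) ^ 2 ≤ 2 * QZ.k ^ 2 * (G / m + (M * QE.k ^ m) ^ 2) * QE.env x ^ 2 := by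
  have hcont : Continuous fun e : ℝ =>
    2 * QZ.k ^ 2 * (G / m + (M * QE.k ^ m) ^ 2) * (QE.env x + e) ^ 2 := by fun_prop
  have ht := (hcont.tendsto 0).mono_left (nhdsWithin_le_nhds (s := Set.Ioi 0))
  simp only [add_zero] at ht
  refine ge_of_tendsto ht ?_
  filter_upwards [self_mem_nhdsWithin] with e he
  obtain ⟨ι, _, w, z, h1, h2, h3, h4⟩ :=
    QE.exists_of_env_lt_pos (x := x) (r := QE.env x + e) (by simpa using he)
  have := h.sample_aux hG hM hu m hm w h1 h2 z h3
  conv_lhs => rw [h4]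
  rw [map_smul, QZ.smul_eq, mul_pow, sq_abs, mul_comm]
  gcongr

end Sampling

end Part2

section Part3
open scoped Pointwise

section Walsh

lemma rsign_mul_self (b : Bool) : rsign b * rsign b = 1 := by cases b <;> simp [rsign]

lemma rsign_sq (b : Bool) : rsign b ^ 2 = 1 := by cases b <;> simp [rsign]

lemma abs_rsign (b : Bool) : |rsign b| = 1 := by cases b <;> simp [rsign]

lemma sum_rsign : ∑ b : Bool, rsign b = 0 := by simp [rsign]

variable {n : ℕ}

/-- Walsh functions -/
noncomputable def walsh (A : Finset (Fin n)) (t : Fin n → Bool) : ℝ := ∏ j ∈ A, rsign (t j)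

lemma walsh_eq (A : Finset (Fin n)) (t : Fin n → Bool) :
    walsh A t = ∏ j, if j ∈ A then rsign (t j) else 1 := by
  rw [walsh, Finset.prod_ite_mem, Finset.univ_inter]

lemma walsh_orth (A B : Finset (Fin n)) :
    ∑ t : Fin n → Bool, walsh A t * walsh B t = if A = B then (2:ℝ) ^ n else 0 := by
  classical
  simp only [walsh_eq, ← Finset.prod_mul_distrib]
  have h := Finset.prod_univ_sum (fun _ : Fin n => (Finset.univ : Finset Bool))
    (fun j b => (if j ∈ A then rsign b else 1) * (if j ∈ B then rsign b else 1))
  rw [Fintype.piFinset_univ] at h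
  rw [← h]
  split_ifs with hAB
  · subst hAB
    rw [Finset.prod_congr rfl (g := fun _ => (2:ℝ))]
    · simp
    · intro j _
      by_cases hj : j ∈ A <;> simp [hj, rsign] <;> norm_num
  · obtain ⟨j, hj⟩ : ∃ j, ¬ (j ∈ A ↔ j ∈ B) := by
      by_contra hcon
      push Not at hcon
      exact hAB (Finset.ext hcon)
    refine Finset.prod_eq_zero (Finset.mem_univ j) ?_
    by_cases h1 : j ∈ A <;> by_cases h2 : j ∈ B <;> simp [h1, h2] at hj ⊢ <;> simp [rsign]

/-- Riesz kernel -/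
noncomputable def riesz (d : ℝ) (t s : Fin n → Bool) : ℝ :=
  ∏ j, (1 + d * (rsign (t j) * rsign (s j)))

lemma riesz_eq (d : ℝ) (t s : Fin n → Bool) :
    riesz d t s = ∑ A : Finset (Fin n), d ^ A.card * (walsh A t * walsh A s) := by
  rw [riesz, Finset.prod_one_add]
  simp [walsh, Finset.prod_mul_distrib]

lemma riesz_comm (d : ℝ) (t s : Fin n → Bool) : riesz d t s = riesz d s t := by
  simp only [riesz, mul_comm]

lemma riesz_nonneg {d : ℝ} (hd : |d| ≤ 1) (t s : Fin n → Bool) : 0 ≤ riesz d t s := by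
  refine Finset.prod_nonneg fun j _ => ?_
  have : |d * (rsign (t j) * rsign (s j))| ≤ 1 := by
    simpa [abs_mul, abs_rsign] using hd
  linarith [(abs_le.1 this).1]

lemma riesz_sum (d : ℝ) (t : Fin n → Bool) : ∑ s, riesz d t s = 2 ^ n := by
  simp only [riesz_eq]
  rw [Finset.sum_comm]
  have : ∀ A : Finset (Fin n), ∑ s, d ^ A.card * (walsh A t * walsh A s) =
      if A = ∅ then 2 ^ n else 0 := by
    intro A
    have h := walsh_orth A ∅
    simp only [walsh, Finset.prod_empty, mul_one] at h
    simp only [← Finset.mul_sum, walsh]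
    rw [h]
    split_ifs with hA
    · subst hA; simp
    · simp
  simp [this]

lemma sum_filter_card_one (f : Finset (Fin n) → ℝ) :
    ∑ j : Fin n, f {j} = ∑ A : Finset (Fin n), if A.card = 1 then f A else 0 := by
  rw [← Finset.sum_filter]
  refine Finset.sum_bij (fun j _ => {j}) (by simp) (by simp) ?_ (by simp)
  intro A hA
  simp only [Finset.mem_filter, Finset.mem_univ, true_and, Finset.card_eq_one] at hA
  obtain ⟨a, rfl⟩ := hA
  exact ⟨a, Finset.mem_univ _, rfl⟩

/-- the kernel of the error term -/
noncomputable def errK (d : ℝ) (t s : Fin n → Bool) : ℝ :=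
  (riesz d t s - riesz (-d) t s) / (2 * d) - ∑ j, rsign (t j) * rsign (s j)

noncomputable def errCoef (d : ℝ) (A : Finset (Fin n)) : ℝ :=
  (d ^ A.card - (-d) ^ A.card) / (2 * d) - if A.card = 1 then 1 else 0

lemma errK_eq (d : ℝ) (t s : Fin n → Bool) :
    errK d t s = ∑ A, errCoef d A * (walsh A t * walsh A s) := by
  have h1 : ∑ j, rsign (t j) * rsign (s j) =
      ∑ A : Finset (Fin n), (if A.card = 1 then 1 else 0) * (walsh A t * walsh A s) := by
    have := sum_filter_card_one (n := n) (fun A => walsh A t * walsh A s)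
    simp only [ite_mul, one_mul, zero_mul]
    rw [← this]
    simp [walsh]
  rw [errK, h1, riesz_eq, riesz_eq, ← Finset.sum_sub_distrib, Finset.sum_div,
    ← Finset.sum_sub_distrib]
  refine Finset.sum_congr rfl fun A _ => ?_
  rw [errCoef]; ring

lemma errCoef_sq_le {d : ℝ} (hd : 0 < d) (hd1 : d ≤ 1) (A : Finset (Fin n)) :
    errCoef d A ^ 2 ≤ d ^ 4 := by
  have key : |errCoef d A| ≤ d ^ 2 := by
    rw [errCoef]
    rcases Nat.even_or_odd A.card with h | h
    · rw [h.neg_pow]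
      have : A.card ≠ 1 := by rintro h1; rw [h1] at h; exact absurd h (by decide)
      simp [this]; positivity
    · rw [h.neg_pow]
      by_cases h1 : A.card = 1
      · simp [h1]
        have : (d + d) / (2 * d) = 1 := by field_simp; norm_num
        rw [this]; simp; positivity
      · obtain ⟨m, hm⟩ : ∃ m, A.card = m + 3 := by
          obtain ⟨l, hl⟩ := h
          exact ⟨A.card - 3, by omega⟩
        rw [if_neg h1, hm]
        have : (d ^ (m + 3) - -d ^ (m + 3)) / (2 * d) - 0 = d ^ 2 * d ^ m := by
          field_simp; ring
        rw [this, abs_of_pos (by positivity)]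
        exact mul_le_of_le_one_right (by positivity) (pow_le_one₀ hd.le hd1)
  calc errCoef d A ^ 2 = |errCoef d A| ^ 2 := (sq_abs _).symm
    _ ≤ (d ^ 2) ^ 2 := by gcongr
    _ = d ^ 4 := by ring

lemma parseval (c : Finset (Fin n) → ℝ) :
    ∑ t : Fin n → Bool, (∑ A, c A * walsh A t) ^ 2 = 2 ^ n * ∑ A, c A ^ 2 := by
  classical
  have : ∀ t : Fin n → Bool, (∑ A, c A * walsh A t) ^ 2 =
      ∑ A, ∑ B, c A * c B * (walsh A t * walsh B t) := fun t => by
    rw [sq, Finset.sum_mul_sum]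
    refine Finset.sum_congr rfl fun A _ => Finset.sum_congr rfl fun B _ => by ring
  simp only [this]
  rw [Finset.sum_comm, Finset.mul_sum]
  refine Finset.sum_congr rfl fun A _ => ?_
  rw [Finset.sum_comm]
  simp only [← Finset.mul_sum, walsh_orth]
  simp; ring

lemma bessel (f : (Fin n → Bool) → ℝ) :
    2 ^ n * ∑ A, (((2:ℝ) ^ n)⁻¹ * ∑ s, walsh A s * f s) ^ 2 ≤ ∑ s, f s ^ 2 := by
  set c : Finset (Fin n) → ℝ := fun A => ((2:ℝ) ^ n)⁻¹ * ∑ s, walsh A s * f s with hc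
  have h0 : 0 ≤ ∑ s, (f s - ∑ A, c A * walsh A s) ^ 2 := Finset.sum_nonneg fun s _ => sq_nonneg _
  have e : ∀ s, (f s - ∑ A, c A * walsh A s) ^ 2 =
      f s ^ 2 - 2 * ∑ A, c A * (walsh A s * f s) + (∑ A, c A * walsh A s) ^ 2 := fun s => by
    have : ∑ A, c A * (walsh A s * f s) = (∑ A, c A * walsh A s) * f s := by
      rw [Finset.sum_mul]; simp only [mul_assoc]
    rw [this]; ring
  simp only [e, Finset.sum_add_distrib, Finset.sum_sub_distrib, parseval, ← Finset.mul_sum] at h0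
  rw [Finset.sum_comm] at h0
  have e2 : ∑ A, ∑ s, c A * (walsh A s * f s) = 2 ^ n * ∑ A, c A ^ 2 := by
    rw [Finset.mul_sum]
    refine Finset.sum_congr rfl fun A _ => ?_
    rw [← Finset.mul_sum]
    have : ∑ s, walsh A s * f s = 2 ^ n * c A := by simp [hc]
    rw [this]; ring
  rw [e2] at h0
  linarith

lemma errK_contr {d : ℝ} (hd : 0 < d) (hd1 : d ≤ 1) (v : (Fin n → Bool) → ℝ) :
    ∑ t, (∑ s, (((2:ℝ) ^ n)⁻¹ * errK d t s) * v s) ^ 2 ≤ d ^ 4 * ∑ s, v s ^ 2 := by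
  set c : Finset (Fin n) → ℝ := fun A => ((2:ℝ) ^ n)⁻¹ * ∑ s, walsh A s * v s with hc
  have e : ∀ t, ∑ s, (((2:ℝ) ^ n)⁻¹ * errK d t s) * v s = ∑ A, (errCoef d A * c A) * walsh A t := by
    intro t
    simp only [errK_eq, Finset.mul_sum, Finset.sum_mul]
    rw [Finset.sum_comm]
    refine Finset.sum_congr rfl fun A _ => ?_
    rw [hc]
    simp only [Finset.mul_sum, Finset.sum_mul]
    refine Finset.sum_congr rfl fun s _ => by ring
  simp only [e, parseval]
  calc _ ≤ 2 ^ n * ∑ A, d ^ 4 * c A ^ 2 := by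
        gcongr with A _
        rw [mul_pow]
        gcongr
        exact errCoef_sq_le hd hd1 A
    _ = d ^ 4 * (2 ^ n * ∑ A, c A ^ 2) := by rw [← Finset.mul_sum]; ring
    _ ≤ _ := by gcongr; exact bessel v

variable {E : Type uE} [AddCommGroup E] [Module ℝ E]
variable {Z : Type uZ} [AddCommGroup Z] [Module ℝ Z]

lemma riesz_env (Q : QuasiNormOn E) {d : ℝ} (hd : 0 < d) (hd1 : d ≤ 1) (F : (Fin n → Bool) → E) :
    ∑ t, Q.env (∑ s, (((2:ℝ) ^ n)⁻¹ * ((riesz d t s - riesz (-d) t s) / (2 * d))) • F s) ^ 2 ≤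
      (d ^ 2)⁻¹ * ∑ s, Q.env (F s) ^ 2 := by
  have hab : |d| ≤ 1 := by rwa [abs_of_pos hd]
  have hab' : |-d| ≤ 1 := by rwa [abs_neg]
  set p : (Fin n → Bool) → (Fin n → Bool) → ℝ :=
    fun t s => ((2:ℝ) ^ n)⁻¹ * ((riesz d t s + riesz (-d) t s) / 2) with hp
  have p0 : ∀ t s, 0 ≤ p t s := fun t s => by
    have := riesz_nonneg hab t s
    have := riesz_nonneg hab' t s
    positivity
  have p1 : ∀ t, ∑ s, p t s = 1 := fun t => by
    simp only [hp, ← Finset.mul_sum, ← Finset.sum_div, Finset.sum_add_distrib, riesz_sum]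
    field_simp; norm_num
  have p2 : ∀ t s, p t s = p s t := fun t s => by
    simp only [hp, riesz_comm _ t s]
  have h1 : ∀ t, Q.env (∑ s, (((2:ℝ) ^ n)⁻¹ * ((riesz d t s - riesz (-d) t s) / (2 * d))) • F s) ≤
      d⁻¹ * ∑ s, p t s * Q.env (F s) := fun t => by
    refine (Q.env_sum_le _ _).trans ?_
    rw [Finset.mul_sum]
    refine Finset.sum_le_sum fun s _ => ?_
    rw [Q.env_smul, ← mul_assoc]
    refine mul_le_mul_of_nonneg_right ?_ (Q.env_nonneg _)
    have a1 := riesz_nonneg hab t s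
    have a2 := riesz_nonneg hab' t s
    rw [abs_mul, abs_of_pos (by positivity), hp, abs_div, abs_of_pos (show 0 < 2 * d by positivity)]
    have : |riesz d t s - riesz (-d) t s| ≤ riesz d t s + riesz (-d) t s :=
      abs_le.2 ⟨by linarith, by linarith⟩
    calc _ ≤ ((2:ℝ) ^ n)⁻¹ * ((riesz d t s + riesz (-d) t s) / (2 * d)) := by gcongr
      _ = _ := by field_simp
  calc _ ≤ ∑ t, (d⁻¹ * ∑ s, p t s * Q.env (F s)) ^ 2 := by
        gcongr with t _
        · exact Q.env_nonneg _
        · exact h1 t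
    _ ≤ ∑ t, (d ^ 2)⁻¹ * ∑ s, p t s * Q.env (F s) ^ 2 := by
        gcongr with t _
        rw [mul_pow, inv_pow]
        gcongr
        have := Finset.sum_mul_sq_le_sq_mul_sq Finset.univ (fun s => √(p t s))
          (fun s => √(p t s) * Q.env (F s))
        simp only [← mul_assoc, Real.mul_self_sqrt (p0 t _), mul_pow, Real.sq_sqrt (p0 t _), p1,
          one_mul] at this
        exact this
    _ = (d ^ 2)⁻¹ * ∑ s, (∑ t, p t s) * Q.env (F s) ^ 2 := by
        rw [← Finset.mul_sum, Finset.sum_comm]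
        simp only [Finset.sum_mul]
    _ = _ := by
        have : ∀ s, ∑ t, p t s = 1 := fun s => by simp only [p2 _ s, p1]
        simp only [this, one_mul]

lemma type2_of_lift {QE : QuasiNormOn E} {QZ : QuasiNormOn Z} {u : E →ₗ[ℝ] Z} {G M : ℝ}
    (hG : 0 ≤ G) (hM : 0 ≤ M) (hu : OpBoundedBy QE.q QZ.q u M)
    (h : Crit QE.q QZ.q u G) (m : ℕ) (hm : 0 < m) {d : ℝ} (hd : 0 < d) (hd1 : d ≤ 1)
    (x : Fin n → E) (F : (Fin n → Bool) → E)
    (hF : ∀ j, ((2:ℝ) ^ n)⁻¹ • ∑ s, rsign (s j) • F s = x j) :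
    ∑ t : Fin n → Bool, QZ.q (u (∑ j, rsign (t j) • x j)) ^ 2 ≤
      2 * QZ.k ^ 2 * (2 * QZ.k ^ 2 * (G / m + (M * QE.k ^ m) ^ 2) * (d ^ 2)⁻¹ + d ^ 4 * G) *
        ∑ s, QE.env (F s) ^ 2 := by
  set L := 2 * QZ.k ^ 2 * (G / m + (M * QE.k ^ m) ^ 2) with hL
  have hL0 : 0 ≤ L := by positivity
  let F' : (Fin n → Bool) → E :=
    fun t => ∑ s, (((2:ℝ) ^ n)⁻¹ * ((riesz d t s - riesz (-d) t s) / (2 * d))) • F s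
  let H : (Fin n → Bool) → E := fun t => ∑ s, (((2:ℝ) ^ n)⁻¹ * errK d t s) • F s
  have e : ∀ t : Fin n → Bool, ∑ j, rsign (t j) • x j = F' t + (-1:ℝ) • H t := fun t => by
    have : F' t + (-1:ℝ) • H t = ∑ s, (((2:ℝ) ^ n)⁻¹ * ∑ j, rsign (t j) * rsign (s j)) • F s := by
      simp only [F', H, Finset.smul_sum, ← Finset.sum_add_distrib, smul_smul, ← add_smul]
      refine Finset.sum_congr rfl fun s _ => ?_
      congr 1
      rw [errK]; ring
    rw [this]
    simp only [← hF, Finset.mul_sum, Finset.sum_smul, Finset.smul_sum, smul_smul]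
    rw [Finset.sum_comm]
    refine Finset.sum_congr rfl fun s _ => Finset.sum_congr rfl fun j _ => ?_
    congr 1; ring
  have h1 : ∑ t, QZ.q (u (F' t)) ^ 2 ≤ L * ((d ^ 2)⁻¹ * ∑ s, QE.env (F s) ^ 2) := by
    calc _ ≤ ∑ t, L * QE.env (F' t) ^ 2 := Finset.sum_le_sum fun t _ => h.sample hG hM hu m hm (F' t)
      _ = L * ∑ t, QE.env (F' t) ^ 2 := by rw [Finset.mul_sum]
      _ ≤ _ := by gcongr; exact riesz_env QE hd hd1 F
  have h2 : ∑ t, QZ.q (u (H t)) ^ 2 ≤ d ^ 4 * G * ∑ s, QE.env (F s) ^ 2 :=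
    h.env hG (fun t s => ((2:ℝ) ^ n)⁻¹ * errK d t s) (by positivity) (errK_contr hd hd1) F
  calc _ ≤ ∑ t, 2 * QZ.k ^ 2 * (QZ.q (u (F' t)) ^ 2 + QZ.q (u (H t)) ^ 2) := by
        refine Finset.sum_le_sum fun t _ => ?_
        rw [e, map_add, map_smul]
        refine (QZ.tri_sq _ _).trans ?_
        rw [QZ.smul_eq]; simp
    _ = 2 * QZ.k ^ 2 * (∑ t, QZ.q (u (F' t)) ^ 2 + ∑ t, QZ.q (u (H t)) ^ 2) := by
        rw [← Finset.mul_sum, Finset.sum_add_distrib]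
    _ ≤ 2 * QZ.k ^ 2 * (L * ((d ^ 2)⁻¹ * ∑ s, QE.env (F s) ^ 2) + d ^ 4 * G * ∑ s, QE.env (F s) ^ 2) := by
        gcongr
    _ = _ := by ring

end Walsh

end Part3

section Part4
open scoped Pointwise

section Lift
variable {E : Type uE} [AddCommGroup E] [Module ℝ E]

lemma dualNorm_nonneg (q : E → ℝ) (f : E →ₗ[ℝ] ℝ) : 0 ≤ dualNorm q f :=
  Real.sInf_nonneg fun _ h => h.1

lemma le_dualNorm (Q : QuasiNormOn E) {f : E →ₗ[ℝ] ℝ} (hf : DualBdd Q.q f) (x : E) :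
    |f x| ≤ dualNorm Q.q f * Q.q x := by
  rcases (Q.nonneg x).eq_or_lt with h | h
  · have : x = 0 := (Q.eq_zero_iff x).1 h.symm
    simp [this, Q.q_zero]
  · rw [← div_le_iff₀ h]
    refine le_csInf hf fun M hM => ?_
    rw [div_le_iff₀ h]
    exact hM.2 x

lemma dualNorm_approx (Q : QuasiNormOn E) (f : E →ₗ[ℝ] ℝ) {θ : ℝ} (h0 : 0 ≤ θ) (h1 : θ < 1) :
    ∃ x, Q.q x ≤ 1 ∧ θ * dualNorm Q.q f ≤ f x := by
  rcases (dualNorm_nonneg Q.q f).eq_or_lt with h | h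
  · exact ⟨0, by simp [Q.q_zero], by simp [← h]⟩
  have hlt : θ * dualNorm Q.q f < dualNorm Q.q f := mul_lt_of_lt_one_left h h1
  have : ∃ x, θ * dualNorm Q.q f * Q.q x < |f x| := by
    by_contra hcon
    push Not at hcon
    have : dualNorm Q.q f ≤ θ * dualNorm Q.q f :=
      csInf_le ⟨0, fun _ h => h.1⟩ ⟨by positivity, hcon⟩
    linarith
  obtain ⟨x, hx⟩ := this
  have hq : 0 < Q.q x := by
    rcases (Q.nonneg x).eq_or_lt with h | h
    · have : x = 0 := (Q.eq_zero_iff x).1 h.symm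
      subst this
      simp [Q.q_zero] at hx
    · exact h
  have key : ∃ y, Q.q y = Q.q x ∧ f y = |f x| := by
    rcases abs_choice (f x) with h | h
    · exact ⟨x, rfl, h.symm⟩
    · exact ⟨-x, Q.q_neg x, by simp [h]⟩
  obtain ⟨y, hy, hy'⟩ := key
  refine ⟨(Q.q x)⁻¹ • y, ?_, ?_⟩
  · rw [Q.smul_eq, hy, abs_of_pos (by positivity), inv_mul_cancel₀ hq.ne']
  · rw [map_smul, hy', smul_eq_mul, le_inv_mul_iff₀ hq]
    linarith

variable {n : ℕ}

/-- Rademacher coefficients -/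
noncomputable def radCoef : ((Fin n → Bool) → E) →ₗ[ℝ] (Fin n → E) :=
  LinearMap.pi fun j => ((2:ℝ) ^ n)⁻¹ • ∑ s : Fin n → Bool, rsign (s j) • LinearMap.proj s

lemma radCoef_apply (F : (Fin n → Bool) → E) (j : Fin n) :
    radCoef F j = ((2:ℝ) ^ n)⁻¹ • ∑ s, rsign (s j) • F s := by
  simp [radCoef]

lemma sum_rsign_mul (i j : Fin n) :
    ∑ s : Fin n → Bool, rsign (s i) * rsign (s j) = if i = j then (2:ℝ) ^ n else 0 := by
  have := walsh_orth (n := n) {i} {j}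
  simpa [walsh] using this

lemma radCoef_rad (x : Fin n → E) : radCoef (fun s => ∑ j, rsign (s j) • x j) = x := by
  ext j
  rw [radCoef_apply]
  simp only [Finset.smul_sum, smul_smul]
  rw [Finset.sum_comm]
  simp only [← Finset.sum_smul]
  simp only [← Finset.mul_sum, sum_rsign_mul]
  simp

def l2ball (Q : QuasiNormOn E) (n : ℕ) : Set ((Fin n → Bool) → E) :=
  {F | ∑ s, Q.env (F s) ^ 2 ≤ 2 ^ n}

lemma l2ball_convex (Q : QuasiNormOn E) : Convex ℝ (l2ball Q n) := by
  intro F hF H hH a b ha hb hab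
  have hF' : ∑ s, Q.env (F s) ^ 2 ≤ 2 ^ n := hF
  have hH' : ∑ s, Q.env (H s) ^ 2 ≤ 2 ^ n := hH
  show ∑ s, Q.env (a • F s + b • H s) ^ 2 ≤ 2 ^ n
  calc _ ≤ ∑ s, (a * Q.env (F s) ^ 2 + b * Q.env (H s) ^ 2) := by
        refine Finset.sum_le_sum fun s _ => ?_
        have h1 : Q.env (a • F s + b • H s) ≤ a * Q.env (F s) + b * Q.env (H s) := by
          refine (Q.env_add_le _ _).trans ?_
          rw [Q.env_smul, Q.env_smul, abs_of_nonneg ha, abs_of_nonneg hb]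
        have h0 := Q.env_nonneg (a • F s + b • H s)
        calc _ ≤ (a * Q.env (F s) + b * Q.env (H s)) ^ 2 := by gcongr
          _ ≤ _ := by
            have : b = 1 - a := by linarith
            subst this
            nlinarith [mul_nonneg (mul_nonneg ha hb) (sq_nonneg (Q.env (F s) - Q.env (H s)))]
    _ = a * ∑ s, Q.env (F s) ^ 2 + b * ∑ s, Q.env (H s) ^ 2 := by
        rw [Finset.sum_add_distrib, Finset.mul_sum, Finset.mul_sum]
    _ ≤ a * 2 ^ n + b * 2 ^ n := by gcongr
    _ = 2 ^ n := by rw [← add_mul, hab, one_mul]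

/-- if the l2 norm is at most `r` then the image is in `r • image` -/
lemma mem_smul_image (Q : QuasiNormOn E) {F : (Fin n → Bool) → E} {r : ℝ} (hr : 0 < r)
    (h : ∑ s, Q.env (F s) ^ 2 ≤ 2 ^ n * r ^ 2) : radCoef F ∈ r • (radCoef '' l2ball Q n) := by
  refine ⟨radCoef (r⁻¹ • F), ⟨r⁻¹ • F, ?_, rfl⟩, ?_⟩
  · show ∑ s, Q.env (r⁻¹ • F s) ^ 2 ≤ 2 ^ n
    simp only [Q.env_smul, mul_pow, ← Finset.mul_sum, sq_abs, inv_pow]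
    rw [inv_mul_le_iff₀ (by positivity)]
    linarith
  · show r • radCoef (r⁻¹ • F) = _
    rw [map_smul, smul_smul, mul_inv_cancel₀ hr.ne', one_smul]

lemma image_absorbent (Q : QuasiNormOn E) : Absorbent ℝ (radCoef '' l2ball Q n) := by
  intro x
  set F : (Fin n → Bool) → E := fun s => ∑ j, rsign (s j) • x j with hF
  have hx : radCoef F = x := radCoef_rad x
  refine Absorbs.of_norm (𝕜 := ℝ) ?_
  set S := ∑ s, Q.env (F s) ^ 2 with hS
  have hS0 : 0 ≤ S := Finset.sum_nonneg fun s _ => sq_nonneg _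
  refine ⟨S + 1, fun c hc => ?_⟩
  rw [Set.singleton_subset_iff]
  have hc' : S + 1 ≤ |c| := hc
  have h0 : 0 < |c| := by linarith
  have hc0 : c ≠ 0 := abs_pos.1 h0
  refine ⟨radCoef (c⁻¹ • F), ⟨c⁻¹ • F, ?_, rfl⟩, ?_⟩
  · show ∑ s, Q.env (c⁻¹ • F s) ^ 2 ≤ 2 ^ n
    simp only [Q.env_smul, mul_pow, ← Finset.mul_sum, sq_abs, inv_pow]
    rw [inv_mul_le_iff₀ (by positivity), ← hS]
    have h1 : (1:ℝ) ≤ 2 ^ n := one_le_pow₀ (by norm_num)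
    have h2 : S ≤ c ^ 2 := by rw [← sq_abs]; nlinarith
    nlinarith [sq_nonneg c]
  · show c • radCoef (c⁻¹ • F) = _
    rw [map_smul, smul_smul, mul_inv_cancel₀ hc0, one_smul, hx]

lemma exists_norming {V : Type uE} [AddCommGroup V] [Module ℝ V] {s : Set V} (hs : Convex ℝ s)
    (ha : Absorbent ℝ s) (x : V) :
    ∃ g : V →ₗ[ℝ] ℝ, g x = gauge s x ∧ ∀ y, g y ≤ gauge s y := by
  by_cases hx : x = 0
  · subst hx
    exact ⟨0, by simp, fun y => by simpa using gauge_nonneg y⟩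
  have hhom : ∀ c : ℝ, 0 < c → ∀ y, gauge s (c • y) = c * gauge s y := fun c hc y => by
    rw [gauge_smul_of_nonneg hc.le, smul_eq_mul]
  obtain ⟨g, hg, hg'⟩ := exists_extension_of_le_sublinear
    (LinearPMap.mkSpanSingleton x (gauge s x) hx) (gauge s) hhom
    (gauge_add_le hs ha) (fun y => by
      obtain ⟨y, hy⟩ := y
      obtain ⟨c, rfl⟩ := Submodule.mem_span_singleton.1 hy
      have h0 : (LinearPMap.mkSpanSingleton x (gauge s x) hx) ⟨c • x, hy⟩ = c • gauge s x :=
        LinearPMap.mkSpanSingleton'_apply _ _ _ _ _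
      rw [h0]
      simp only [smul_eq_mul]
      rcases le_or_gt 0 c with hc | hc
      · rw [gauge_smul_of_nonneg hc, smul_eq_mul]
      · exact (mul_nonpos_of_nonpos_of_nonneg hc.le (gauge_nonneg x)).trans (gauge_nonneg _))
  refine ⟨g, ?_, hg'⟩
  have := hg ⟨x, Submodule.mem_span_singleton_self x⟩
  have h1 : (LinearPMap.mkSpanSingleton x (gauge s x) hx)
      ⟨x, Submodule.mem_span_singleton_self x⟩ = gauge s x :=
    LinearPMap.mkSpanSingleton_apply (σ := RingHom.id ℝ) ℝ ℝ hx (gauge s x)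
  exact this.trans h1

lemma exists_lift (Q : QuasiNormOn E) {C : ℝ} (hC : 0 < C)
    (hdual : ∀ (n : ℕ) (f : Fin n → (E →ₗ[ℝ] ℝ)), (∀ i, DualBdd Q.q (f i)) →
    (∑ i, dualNorm Q.q (f i) ^ (2:ℝ)) ^ (1/2:ℝ) ≤
      C * ((((2:ℝ) ^ n)⁻¹ *
        ∑ ε : Fin n → Bool, dualNorm Q.q (∑ i, rsign (ε i) • f i) ^ (2:ℝ)) ^ (1/2:ℝ)))
    (x : Fin n → E) :
    ∃ F : (Fin n → Bool) → E, (∀ j, ((2:ℝ) ^ n)⁻¹ • ∑ s, rsign (s j) • F s = x j) ∧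
      ∑ s, Q.env (F s) ^ 2 ≤ 2 ^ n * (4 * C ^ 2 * ∑ j, Q.q (x j) ^ 2) := by
  classical
  have hconv : Convex ℝ (radCoef '' l2ball Q n) := (l2ball_convex Q).linear_image radCoef
  have habs := image_absorbent (n := n) Q
  obtain ⟨g, hgx, hg⟩ := exists_norming hconv habs x
  set φ : Fin n → (E →ₗ[ℝ] ℝ) := fun j => g ∘ₗ LinearMap.single ℝ (fun _ => E) j with hφ
  have hgsum : ∀ y : Fin n → E, g y = ∑ j, φ j (y j) := fun y => by
    conv_lhs => rw [← Finset.univ_sum_single y]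
    rw [map_sum]; rfl
  -- boundedness
  have hle : ∀ j z, φ j z ≤ Q.q z := fun j z => by
    refine (hg _).trans ?_
    refine le_of_forall_pos_le_add fun e he => ?_
    have h0 := Q.nonneg z
    refine gauge_le_of_mem (by positivity) ?_
    have : radCoef (fun s : Fin n → Bool => ∑ i, rsign (s i) • (Pi.single j z : Fin n → E) i) =
      Pi.single j z := radCoef_rad _
    show (Pi.single j z : Fin n → E) ∈ _
    rw [← this]
    refine mem_smul_image Q (by positivity) ?_
    calc _ ≤ ∑ s : Fin n → Bool, (Q.q z + e) ^ 2 := by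
          refine Finset.sum_le_sum fun s _ => ?_
          have h1 : ∑ i, rsign (s i) • (Pi.single j z : Fin n → E) i = rsign (s j) • z := by
            rw [Finset.sum_eq_single j]
            · simp
            · intro b _ hb; simp [hb]
            · simp
          rw [h1, Q.env_smul, abs_rsign, one_mul]
          have := Q.env_le z
          have := Q.env_nonneg z
          gcongr
          linarith
      _ = _ := by simp
  have hbdd : ∀ j, DualBdd Q.q (φ j) := fun j => ⟨1, zero_le_one, fun z => by
    rw [one_mul]
    refine abs_le.2 ⟨?_, hle j z⟩
    have := hle j (-z)
    rw [map_neg, Q.q_neg] at this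
    linarith⟩
  set Ψ : (Fin n → Bool) → (E →ₗ[ℝ] ℝ) := fun s => ∑ i, rsign (s i) • φ i with hΨ
  have hav : ∀ F : (Fin n → Bool) → E, g (radCoef F) = ((2:ℝ) ^ n)⁻¹ * ∑ s, Ψ s (F s) := fun F => by
    rw [hgsum]
    simp only [radCoef_apply, hΨ, map_smul, map_sum, LinearMap.sum_apply, LinearMap.smul_apply,
      smul_eq_mul]
    rw [← Finset.mul_sum, Finset.sum_comm]
  -- the L2 norm of Ψ is at most 1
  have hΨ1 : ∑ s, dualNorm Q.q (Ψ s) ^ 2 ≤ 2 ^ n := by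
    have key : ∀ θ : ℝ, 0 ≤ θ → θ < 1 → θ ^ 2 * ∑ s, dualNorm Q.q (Ψ s) ^ 2 ≤ 2 ^ n := by
      intro θ h0 h1
      choose y hy hy' using fun s => dualNorm_approx Q (Ψ s) h0 h1
      set S := θ ^ 2 * ∑ s, dualNorm Q.q (Ψ s) ^ 2 with hS
      have hS0 : 0 ≤ S := by positivity
      rcases hS0.eq_or_lt with h | hSpos
      · rw [← h]; positivity
      set F : (Fin n → Bool) → E := fun s => (θ * dualNorm Q.q (Ψ s)) • y s with hF
      have hF2 : ∑ s, Q.env (F s) ^ 2 ≤ S := by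
        rw [hS, Finset.mul_sum]
        refine Finset.sum_le_sum fun s _ => ?_
        rw [hF, Q.env_smul, mul_pow, sq_abs, mul_pow]
        have := (Q.env_le (y s)).trans (hy s)
        exact mul_le_of_le_one_right (by positivity) (pow_le_one₀ (Q.env_nonneg _) this)
      have h2 : g (radCoef F) ≤ √(S / 2 ^ n) := by
        refine (hg _).trans (gauge_le_of_mem (Real.sqrt_nonneg _) ?_)
        refine mem_smul_image Q (Real.sqrt_pos.2 (by positivity)) ?_
        rw [Real.sq_sqrt (by positivity)]
        refine hF2.trans (le_of_eq ?_)
        field_simp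
      have h3 : S / 2 ^ n ≤ g (radCoef F) := by
        rw [hav, div_eq_inv_mul, hS, Finset.mul_sum]
        refine mul_le_mul_of_nonneg_left ?_ (by positivity)
        refine Finset.sum_le_sum fun s _ => ?_
        have hd := dualNorm_nonneg Q.q (Ψ s)
        rw [hF, map_smul, smul_eq_mul]
        calc _ = θ * dualNorm Q.q (Ψ s) * (θ * dualNorm Q.q (Ψ s)) := by ring
          _ ≤ _ := mul_le_mul_of_nonneg_left (hy' s) (by positivity)
      have h4 : S / 2 ^ n ≤ 1 := by
        have h5 := h3.trans h2
        have h6 : 0 < √(S / 2 ^ n) := Real.sqrt_pos.2 (by positivity)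
        have h7 := Real.mul_self_sqrt (show 0 ≤ S / 2 ^ n by positivity)
        nlinarith
      rwa [div_le_one (by positivity)] at h4
    have hcont : Continuous fun θ : ℝ => θ ^ 2 * ∑ s, dualNorm Q.q (Ψ s) ^ 2 := by fun_prop
    have ht := (hcont.tendsto 1).mono_left (nhdsWithin_le_nhds (s := Set.Iio 1))
    simp only [one_pow, one_mul] at ht
    refine le_of_tendsto ht ?_
    filter_upwards [self_mem_nhdsWithin, nhdsWithin_le_nhds (lt_mem_nhds (zero_lt_one' ℝ))]
      with θ h1 h0 using key θ h0.le h1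
  have hφ2 : ∑ j, dualNorm Q.q (φ j) ^ 2 ≤ C ^ 2 := by
    have h := hdual n φ hbdd
    simp only [Real.rpow_two, ← Real.sqrt_eq_rpow] at h
    have h1 : √(((2:ℝ) ^ n)⁻¹ * ∑ s, dualNorm Q.q (Ψ s) ^ 2) ≤ 1 := by
      rw [Real.sqrt_le_left zero_le_one, one_pow, inv_mul_le_iff₀ (by positivity), mul_one]
      exact hΨ1
    have h2 : √(∑ j, dualNorm Q.q (φ j) ^ 2) ≤ C := h.trans (mul_le_of_le_one_right hC.le h1)
    exact (Real.sqrt_le_left hC.le).1 h2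
  set S := ∑ j, Q.q (x j) ^ 2 with hS
  have hS0 : 0 ≤ S := Finset.sum_nonneg fun s _ => sq_nonneg _
  rcases hS0.eq_or_lt with h | hSpos
  · have hx0 : ∀ j, x j = 0 := fun j => by
      have := (Finset.sum_eq_zero_iff_of_nonneg (fun j _ => sq_nonneg (Q.q (x j)))).1 (hS ▸ h.symm)
        j (Finset.mem_univ _)
      exact (Q.eq_zero_iff _).1 (pow_eq_zero_iff (two_ne_zero) |>.1 this)
    refine ⟨fun _ => 0, fun j => by simp [hx0], ?_⟩
    have : Q.env 0 = 0 := gauge_zero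
    simp only [this]
    rw [← h]; simp
  have hgx2 : g x ≤ C * √S := by
    rw [hgsum]
    calc _ ≤ ∑ j, dualNorm Q.q (φ j) * Q.q (x j) :=
          Finset.sum_le_sum fun j _ => (le_abs_self _).trans (le_dualNorm Q (hbdd j) _)
      _ ≤ √(∑ j, dualNorm Q.q (φ j) ^ 2) * √S := Real.sum_mul_le_sqrt_mul_sqrt _ _ _
      _ ≤ C * √S := by
          gcongr
          exact (Real.sqrt_le_left hC.le).2 hφ2
  have hlt : gauge (radCoef '' l2ball Q n) x < 2 * C * √S := by
    rw [← hgx]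
    have : 0 < C * √S := mul_pos hC (Real.sqrt_pos.2 hSpos)
    linarith
  obtain ⟨b, hb, hbr, hx⟩ := exists_lt_of_gauge_lt habs hlt
  obtain ⟨_, ⟨F, hF, rfl⟩, hFx⟩ := hx
  have hF' : ∑ s, Q.env (F s) ^ 2 ≤ 2 ^ n := hF
  refine ⟨b • F, fun j => ?_, ?_⟩
  · rw [← radCoef_apply, map_smul]
    exact congrFun hFx j
  · have : ∀ s, Q.env ((b • F) s) ^ 2 = b ^ 2 * Q.env (F s) ^ 2 := fun s => by
      rw [Pi.smul_apply, Q.env_smul, mul_pow, sq_abs]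
    simp only [this, ← Finset.mul_sum]
    have hb2 : b ^ 2 ≤ 4 * C ^ 2 * S := by
      calc b ^ 2 ≤ (2 * C * √S) ^ 2 := by gcongr
        _ = 4 * C ^ 2 * (√S ^ 2) := by ring
        _ = _ := by rw [Real.sq_sqrt hS0]
    calc _ ≤ (4 * C ^ 2 * S) * 2 ^ n := by gcongr
      _ = _ := by ring

end Lift

end Part4

section Part5
open scoped Pointwise

section Gauss
open MeasureTheory ProbabilityTheory

lemma exists_reg {V : Type*} [NormedAddCommGroup V] (f : V → ℝ) {k L : ℝ} (hk : 1 ≤ k)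
    (hL : 0 ≤ L) (h0 : ∀ v, 0 ≤ f v) (hf : ∀ v, f v ≤ L * ‖v‖)
    (htri : ∀ v w, f (v + w) ≤ k * (f v + f w)) :
    ∃ p : V → ℝ, Continuous p ∧ (∀ v, 0 ≤ p v) ∧ (∀ v, p v ≤ f v) ∧ ∀ v, f v ≤ k * p v := by
  have hbd : ∀ w, BddBelow (Set.range fun h => f h + L * ‖w - h‖) := fun w =>
    ⟨0, by rintro _ ⟨h, rfl⟩; have := h0 h; positivity⟩
  have hlip : ∀ w w', (⨅ h, (f h + L * ‖w - h‖)) ≤ (⨅ h, (f h + L * ‖w' - h‖)) + L * ‖w - w'‖ := by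
    intro w w'
    rw [← sub_le_iff_le_add]
    refine le_ciInf fun h => ?_
    rw [sub_le_iff_le_add]
    refine (ciInf_le (hbd w) h).trans ?_
    have h1 : ‖w - h‖ ≤ ‖w' - h‖ + ‖w - w'‖ := by
      have := norm_add_le (w' - h) (w - w')
      have e : w' - h + (w - w') = w - h := by abel
      rwa [e] at this
    nlinarith
  refine ⟨fun w => ⨅ h, (f h + L * ‖w - h‖), ?_, ?_, ?_, ?_⟩
  · refine (LipschitzWith.of_dist_le_mul (K := ⟨L, hL⟩) fun w w' => ?_).continuous
    rw [Real.dist_eq, dist_eq_norm, abs_le]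
    have h1 := hlip w w'
    have h2 := hlip w' w
    rw [norm_sub_rev w' w] at h2
    constructor
    · show -(L * _) ≤ _
      linarith
    · show _ ≤ L * _
      linarith
  · intro v
    exact le_ciInf fun h => by have := h0 h; positivity
  · intro v
    refine (ciInf_le (hbd v) v).trans ?_
    simp
  · intro v
    have hk0 : 0 < k := by linarith
    rw [← div_le_iff₀' hk0]
    refine le_ciInf fun h => ?_
    rw [div_le_iff₀' hk0]
    have := htri h (v - h)
    rw [add_sub_cancel] at this
    refine this.trans ?_
    have := hf (v - h)
    gcongr

lemma stdGaussian_map_of_adj {m κ : Type} [Fintype m] [Fintype κ]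
    (U : EuclideanSpace ℝ m → EuclideanSpace ℝ κ) (hU : Continuous U)
    (W : EuclideanSpace ℝ κ → EuclideanSpace ℝ m)
    (h : ∀ x t, inner ℝ (U x) t = inner ℝ x (W t)) (hW : ∀ t, ‖W t‖ = ‖t‖) :
    (stdGaussian (EuclideanSpace ℝ m)).map U = stdGaussian (EuclideanSpace ℝ κ) := by
  have : IsProbabilityMeasure ((stdGaussian (EuclideanSpace ℝ m)).map U) :=
    Measure.isProbabilityMeasure_map hU.aemeasurable
  apply Measure.ext_of_charFun
  ext t
  rw [charFun_stdGaussian, charFun_apply, integral_map hU.aemeasurable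
    (Continuous.aestronglyMeasurable (by fun_prop))]
  simp_rw [h]
  rw [← charFun_apply, charFun_stdGaussian, hW]

lemma integral_sq_stdGaussian {m : Type} [Fintype m] [DecidableEq m] (i : m) :
    Integrable (fun g : EuclideanSpace ℝ m => g i ^ 2) (stdGaussian (EuclideanSpace ℝ m)) ∧
    ∫ g, g i ^ 2 ∂(stdGaussian (EuclideanSpace ℝ m)) = 1 := by
  have hm : MemLp (fun g : EuclideanSpace ℝ m => g i) 2 (stdGaussian (EuclideanSpace ℝ m)) := by
    have := IsGaussian.memLp_dual (stdGaussian (EuclideanSpace ℝ m))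
      (EuclideanSpace.proj i) 2 (by simp)
    exact this
  refine ⟨hm.integrable_sq, ?_⟩
  have h1 := variance_dual_stdGaussian (E := EuclideanSpace ℝ m) (EuclideanSpace.proj i)
  have h2 := integral_strongDual_stdGaussian (E := EuclideanSpace ℝ m) (EuclideanSpace.proj i)
  rw [variance_of_integral_eq_zero (by fun_prop) h2] at h1
  have h3 : ‖(EuclideanSpace.proj i : StrongDual ℝ (EuclideanSpace ℝ m))‖ = 1 := by
    have : (EuclideanSpace.proj i : StrongDual ℝ (EuclideanSpace ℝ m)) =
      innerSL ℝ (EuclideanSpace.single i 1) := by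
      ext x; simp [EuclideanSpace.inner_single_left]
    rw [this, innerSL_apply_norm]; simp
  rw [h3] at h1
  simpa using h1

lemma gauss_main {m κ : Type} [Fintype m] [Fintype κ] [DecidableEq m] [DecidableEq κ] (V : m → κ → ℝ)
    (hV : ∀ t : κ → ℝ, ∑ i, (∑ j, V i j * t j) ^ 2 = ∑ j, t j ^ 2)
    (f : EuclideanSpace ℝ κ → ℝ) {k L D T : ℝ} (hk : 1 ≤ k) (hL : 0 ≤ L) (hD : 0 ≤ D)
    (h0 : ∀ v, 0 ≤ f v) (hf : ∀ v, f v ≤ L * ‖v‖)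
    (htri : ∀ v w, f (v + w) ≤ k * (f v + f w)) (α : m → ℝ) (β : κ → ℝ)
    (H1 : ∀ g : m → ℝ, 2 ^ Fintype.card m * ∑ i, g i ^ 2 * α i ≤
      D * ∑ ε : m → Bool, f (WithLp.toLp 2 fun j => ∑ i, rsign (ε i) * g i * V i j) ^ 2)
    (H2 : ∀ g : κ → ℝ, ∑ ε : κ → Bool, f (WithLp.toLp 2 fun j => rsign (ε j) * g j) ^ 2 ≤
      2 ^ Fintype.card κ * (T * ∑ j, g j ^ 2 * β j)) :
    ∑ i, α i ≤ D * k ^ 2 * T * ∑ j, β j := by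
  obtain ⟨p, hpc, hp0, hpf, hfp⟩ := exists_reg f hk hL h0 hf htri
  set γm := stdGaussian (EuclideanSpace ℝ m)
  set γκ := stdGaussian (EuclideanSpace ℝ κ)
  have hpint : Integrable (fun v => p v ^ 2) γκ := by
    have h2 : Integrable (fun v : EuclideanSpace ℝ κ => L ^ 2 * ‖v‖ ^ 2) γκ :=
      ((IsGaussian.memLp_two_id (μ := γκ)).norm.integrable_sq).const_mul _
    refine h2.mono' (by fun_prop) (Filter.Eventually.of_forall fun v => ?_)
    rw [Real.norm_of_nonneg (sq_nonneg _), ← mul_pow]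
    have := (hpf v).trans (hf v)
    have := hp0 v
    gcongr
  set J := ∫ v, p v ^ 2 ∂γκ with hJ
  -- invariance
  have hA : ∀ ε : m → Bool, γm.map (fun g : EuclideanSpace ℝ m =>
      (WithLp.toLp 2 fun j => ∑ i, rsign (ε i) * g i * V i j : EuclideanSpace ℝ κ)) = γκ := by
    intro ε
    refine stdGaussian_map_of_adj _ (by fun_prop)
      (fun t => WithLp.toLp 2 fun i => rsign (ε i) * ∑ j, V i j * t j) ?_ ?_
    · intro x t
      simp only [PiLp.inner_apply, RCLike.inner_apply, conj_trivial, Finset.mul_sum,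
        Finset.sum_mul]
      rw [Finset.sum_comm]
      refine Finset.sum_congr rfl fun i _ => Finset.sum_congr rfl fun j _ => ?_
      ring
    · intro t
      rw [EuclideanSpace.norm_eq, EuclideanSpace.norm_eq]
      congr 1
      simp only [Real.norm_eq_abs, sq_abs, mul_pow, rsign_sq, one_mul]
      exact hV _
  have hB : ∀ ε : κ → Bool, γκ.map (fun g : EuclideanSpace ℝ κ =>
      (WithLp.toLp 2 fun j => rsign (ε j) * g j : EuclideanSpace ℝ κ)) = γκ := by
    intro ε
    refine stdGaussian_map_of_adj _ (by fun_prop)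
      (fun t => WithLp.toLp 2 fun i => rsign (ε i) * t i) ?_ ?_
    · intro x t
      simp only [PiLp.inner_apply, RCLike.inner_apply, conj_trivial]
      refine Finset.sum_congr rfl fun i _ => ?_
      ring
    · intro t
      rw [EuclideanSpace.norm_eq, EuclideanSpace.norm_eq]
      congr 1
      simp only [Real.norm_eq_abs, sq_abs, mul_pow, rsign_sq, one_mul]
  have hIA : ∀ ε : m → Bool, Integrable (fun g : EuclideanSpace ℝ m =>
      p (WithLp.toLp 2 fun j => ∑ i, rsign (ε i) * g i * V i j) ^ 2) γm ∧
      ∫ g, p (WithLp.toLp 2 fun j => ∑ i, rsign (ε i) * g i * V i j) ^ 2 ∂γm = J := by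
    intro ε
    have hm : AEMeasurable (fun g : EuclideanSpace ℝ m =>
      (WithLp.toLp 2 fun j => ∑ i, rsign (ε i) * g i * V i j : EuclideanSpace ℝ κ)) γm :=
      Continuous.aemeasurable (by fun_prop)
    constructor
    · have := hpint
      rw [← hA ε] at this
      exact (integrable_map_measure (by fun_prop) hm).1 this
    · rw [hJ, ← hA ε, integral_map hm (by fun_prop)]
  have hIB : ∀ ε : κ → Bool, Integrable (fun g : EuclideanSpace ℝ κ =>
      p (WithLp.toLp 2 fun j => rsign (ε j) * g j) ^ 2) γκ ∧
      ∫ g, p (WithLp.toLp 2 fun j => rsign (ε j) * g j) ^ 2 ∂γκ = J := by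
    intro ε
    have hm : AEMeasurable (fun g : EuclideanSpace ℝ κ =>
      (WithLp.toLp 2 fun j => rsign (ε j) * g j : EuclideanSpace ℝ κ)) γκ :=
      Continuous.aemeasurable (by fun_prop)
    constructor
    · have := hpint
      rw [← hB ε] at this
      exact (integrable_map_measure (by fun_prop) hm).1 this
    · rw [← integral_map (f := fun v => p v ^ 2) hm (by fun_prop), hB ε]
  have hJle : J ≤ T * ∑ j, β j := by
    have h1 : ∫ g, ∑ ε : κ → Bool, p (WithLp.toLp 2 fun j => rsign (ε j) * g j) ^ 2 ∂γκ ≤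
        ∫ g : EuclideanSpace ℝ κ, 2 ^ Fintype.card κ * (T * ∑ j, g j ^ 2 * β j) ∂γκ := by
      refine integral_mono (integrable_finsetSum _ fun ε _ => (hIB ε).1)
        (((integrable_finsetSum _ fun j _ => ((integral_sq_stdGaussian j).1.mul_const _)).const_mul
          _).const_mul _) fun g => ?_
      refine le_trans ?_ (H2 g)
      refine Finset.sum_le_sum fun ε _ => ?_
      have := hp0 (WithLp.toLp 2 fun j => rsign (ε j) * g j)
      have := hpf (WithLp.toLp 2 fun j => rsign (ε j) * g j)
      gcongr
    rw [integral_finsetSum _ fun ε _ => (hIB ε).1, integral_const_mul, integral_const_mul,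
      integral_finsetSum _ fun j _ => ((integral_sq_stdGaussian j).1.mul_const _)] at h1
    simp only [(hIB _).2, integral_mul_const, (integral_sq_stdGaussian _).2, one_mul,
      Finset.sum_const, Finset.card_univ, Fintype.card_fun, Fintype.card_bool, nsmul_eq_mul,
      Nat.cast_pow, Nat.cast_ofNat] at h1
    exact le_of_mul_le_mul_left h1 (by positivity)
  have hαle : ∑ i, α i ≤ D * (k ^ 2 * J) := by
    have h1 : ∫ g : EuclideanSpace ℝ m, 2 ^ Fintype.card m * ∑ i, g i ^ 2 * α i ∂γm ≤
        ∫ g, D * (k ^ 2 * ∑ ε : m → Bool,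
          p (WithLp.toLp 2 fun j => ∑ i, rsign (ε i) * g i * V i j) ^ 2) ∂γm := by
      refine integral_mono
        ((integrable_finsetSum _ fun j _ => ((integral_sq_stdGaussian j).1.mul_const _)).const_mul
          _) (((integrable_finsetSum _ fun ε _ => (hIA ε).1).const_mul _).const_mul _) fun g => ?_
      refine le_trans (H1 g) ?_
      refine mul_le_mul_of_nonneg_left ?_ hD
      rw [Finset.mul_sum]
      refine Finset.sum_le_sum fun ε _ => ?_
      rw [← mul_pow]
      have := h0 (WithLp.toLp 2 fun j => ∑ i, rsign (ε i) * g i * V i j)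
      have := hfp (WithLp.toLp 2 fun j => ∑ i, rsign (ε i) * g i * V i j)
      gcongr
    rw [integral_const_mul, integral_const_mul, integral_const_mul,
      integral_finsetSum _ fun ε _ => (hIA ε).1,
      integral_finsetSum _ fun j _ => ((integral_sq_stdGaussian j).1.mul_const _)] at h1
    simp only [(hIA _).2, integral_mul_const, (integral_sq_stdGaussian _).2, one_mul,
      Finset.sum_const, Finset.card_univ, Fintype.card_fun, Fintype.card_bool, nsmul_eq_mul,
      Nat.cast_pow, Nat.cast_ofNat] at h1
    refine le_of_mul_le_mul_left (h1.trans (le_of_eq ?_)) (show (0:ℝ) < 2 ^ Fintype.card m by positivity)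
    ring
  refine hαle.trans ?_
  have : D * (k ^ 2 * J) ≤ D * (k ^ 2 * (T * ∑ j, β j)) := by gcongr
  linarith

/-- every contraction is a block of an isometry -/
lemma exists_isometry {ι κ : Type} [Fintype ι] [Fintype κ] (a : ι → κ → ℝ)
    (ha : ∀ v : κ → ℝ, ∑ i, (∑ j, a i j * v j) ^ 2 ≤ ∑ j, v j ^ 2) :
    ∃ c : κ → κ → ℝ, ∀ v : κ → ℝ,
      ∑ i, (∑ j, a i j * v j) ^ 2 + ∑ i, (∑ j, c i j * v j) ^ 2 = ∑ j, v j ^ 2 := by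
  classical
  open scoped MatrixOrder in
  set A : Matrix ι κ ℝ := Matrix.of a
  have hq : ∀ {ν : Type} [Fintype ν] (B : Matrix ν κ ℝ) (v : κ → ℝ),
      dotProduct v ((B.transpose * B).mulVec v) = ∑ i, (∑ j, B i j * v j) ^ 2 := by
    intro ν _ B v
    rw [← Matrix.mulVec_mulVec, Matrix.dotProduct_mulVec, Matrix.vecMul_transpose]
    simp [dotProduct, Matrix.mulVec, sq]
  have hpos : (1 - A.transpose * A).PosSemidef := by
    refine Matrix.PosSemidef.of_dotProduct_mulVec_nonneg ?_ fun v => ?_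
    · rw [Matrix.IsHermitian]
      simp [Matrix.conjTranspose_eq_transpose_of_trivial]
    · rw [star_trivial, Matrix.sub_mulVec, dotProduct_sub, hq, Matrix.one_mulVec]
      have := ha v
      simp only [dotProduct, ← sq]
      exact sub_nonneg.2 this
  obtain ⟨B, hB⟩ := CStarAlgebra.nonneg_iff_eq_star_mul_self.mp hpos.nonneg
  refine ⟨B, fun v => ?_⟩
  have h1 := hq A v
  have h2 := hq B v
  have h3 : B.transpose * B = 1 - A.transpose * A := by
    rw [hB, Matrix.star_eq_conjTranspose, Matrix.conjTranspose_eq_transpose_of_trivial]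
  rw [h3, Matrix.sub_mulVec, dotProduct_sub, h1, Matrix.one_mulVec] at h2
  have h4 : dotProduct v v = ∑ j, v j ^ 2 := by simp [dotProduct, sq]
  have h5 : ∑ i, (∑ j, A i j * v j) ^ 2 = ∑ i, (∑ j, a i j * v j) ^ 2 := rfl
  linarith


variable {E : Type uE} [AddCommGroup E] [Module ℝ E] {Z : Type uZ} [AddCommGroup Z] [Module ℝ Z]

lemma rad_sum_equiv {m : Type} [Fintype m] [DecidableEq m] {n : ℕ} (e : m ≃ Fin n) (φ : Z → ℝ)
    (z : m → Z) : ∑ ε : m → Bool, φ (∑ i, rsign (ε i) • z i) =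
      ∑ ε : Fin n → Bool, φ (∑ i, rsign (ε i) • z (e.symm i)) := by
  refine Fintype.sum_equiv (e.arrowCongr (Equiv.refl Bool)) _ _ fun ε => ?_
  congr 1
  refine Fintype.sum_equiv e _ _ fun i => ?_
  simp

lemma cotype_sq {QZ : QuasiNormOn Z} {C : ℝ} (hC : 0 < C) (h : CotypeConstLe QZ.q 2 C)
    {m : Type} [Fintype m] [DecidableEq m] (z : m → Z) :
    2 ^ Fintype.card m * ∑ i, QZ.q (z i) ^ 2 ≤
      C ^ 2 * ∑ ε : m → Bool, QZ.q (∑ i, rsign (ε i) • z i) ^ 2 := by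
  set e := Fintype.equivFin m
  rw [rad_sum_equiv e (fun y => QZ.q y ^ 2)]
  have h1 := h _ (fun i => z (e.symm i))
  simp only [radAvg, Real.rpow_two, ← Real.sqrt_eq_rpow] at h1
  have e1 : ∑ i, QZ.q (z (e.symm i)) ^ 2 = ∑ i, QZ.q (z i) ^ 2 :=
    Fintype.sum_equiv e.symm _ _ fun i => rfl
  rw [e1] at h1
  set S := ∑ i, QZ.q (z i) ^ 2
  set R := ∑ ε : Fin (Fintype.card m) → Bool, QZ.q (∑ i, rsign (ε i) • z (e.symm i)) ^ 2 with hR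
  have hS : 0 ≤ S := Finset.sum_nonneg fun i _ => sq_nonneg _
  have hR : 0 ≤ R := Finset.sum_nonneg fun i _ => sq_nonneg _
  have h2 : √S ^ 2 ≤ (C * √((2 ^ Fintype.card m)⁻¹ * R)) ^ 2 := by gcongr
  rw [Real.sq_sqrt hS, mul_pow, Real.sq_sqrt (by positivity)] at h2
  calc _ ≤ 2 ^ Fintype.card m * (C ^ 2 * ((2 ^ Fintype.card m)⁻¹ * R)) := by gcongr
    _ = _ := by field_simp

lemma crit_of_type2 (QE : QuasiNormOn E) (QZ : QuasiNormOn Z) (u : E →ₗ[ℝ] Z) {C T : ℝ}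
    (hC : 0 < C) (h : CotypeConstLe QZ.q 2 C)
    (hT : ∀ (n : ℕ) (x : Fin n → E),
      ∑ ε : Fin n → Bool, QZ.q (u (∑ j, rsign (ε j) • x j)) ^ 2 ≤ 2 ^ n * (T * ∑ j, QE.q (x j) ^ 2)) :
    Crit QE.q QZ.q u (C ^ 2 * QZ.k ^ 2 * T) := by
  intro ι κ _ _ a ha x
  classical
  obtain ⟨c, hc⟩ := exists_isometry a ha
  set V : ι ⊕ κ → κ → ℝ := Sum.elim a c with hVdef
  set f : EuclideanSpace ℝ κ → ℝ := fun v => QZ.q (u (∑ j, v j • x j)) with hfdef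
  set L : ℝ := QZ.k ^ Fintype.card κ * ∑ j, QZ.q (u (x j)) with hLdef
  have hkp := QZ.k_pos
  have hL : 0 ≤ L := mul_nonneg (by positivity) (Finset.sum_nonneg fun j _ => QZ.nonneg _)
  have key := gauss_main V (fun t => by rw [Fintype.sum_sum_type]; exact hc t) f QZ.one_le_k hL
    (sq_nonneg C) (fun v => QZ.nonneg _) (fun v => ?_) (fun v w => ?_)
    (fun i => QZ.q (u (∑ j, V i j • x j)) ^ 2) (fun j => QE.q (x j) ^ 2) (T := T)
    (fun g => ?_) (fun g => ?_)
  · refine le_trans ?_ key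
    rw [Fintype.sum_sum_type]
    exact le_add_of_nonneg_right (Finset.sum_nonneg fun j _ => sq_nonneg _)
  · simp only [hfdef, map_sum, map_smul]
    refine (QZ.q_sum_le _ _).trans ?_
    rw [hLdef, mul_assoc, Finset.card_univ]
    refine mul_le_mul_of_nonneg_left ?_ (by positivity)
    rw [Finset.sum_mul]
    refine Finset.sum_le_sum fun j _ => ?_
    rw [QZ.smul_eq, mul_comm]
    exact mul_le_mul_of_nonneg_left (PiLp.norm_apply_le v j) (QZ.nonneg _)
  · simp only [hfdef, PiLp.add_apply, add_smul, Finset.sum_add_distrib, map_add]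
    exact QZ.tri _ _
  · have h1 := cotype_sq hC h (fun i => g i • u (∑ j, V i j • x j))
    simp only [QZ.smul_eq, mul_pow, sq_abs] at h1
    refine h1.trans (le_of_eq ?_)
    congr 1
    refine Finset.sum_congr rfl fun ε _ => ?_
    simp only [hfdef]
    congr 2
    simp only [← map_smul, ← map_sum]
    congr 1
    simp only [Finset.smul_sum, smul_smul, Finset.sum_smul]
    rw [Finset.sum_comm]
    simp only [mul_assoc]
  · set e := Fintype.equivFin κ
    have h1 := hT _ (fun i => g (e.symm i) • x (e.symm i))
    rw [← rad_sum_equiv e (fun y => QZ.q (u y) ^ 2) (fun i => g i • x i)] at h1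
    rw [← Fintype.sum_equiv e (fun i => QE.q (g i • x i) ^ 2)
      (fun i => QE.q (g (e.symm i) • x (e.symm i)) ^ 2) (fun i => by simp)] at h1
    simp only [QE.smul_eq, mul_pow, sq_abs, smul_smul] at h1
    exact h1

end Gauss

end Part5

section Part6
open scoped Pointwise

section Boot
variable {E : Type uE} [AddCommGroup E] [Module ℝ E] {Z : Type uZ} [AddCommGroup Z] [Module ℝ Z]

lemma Crit.mono {QE : QuasiNormOn E} {QZ : QuasiNormOn Z} {u : E →ₗ[ℝ] Z} {G G' : ℝ}
    (h : Crit QE.q QZ.q u G) (hG : G ≤ G') : Crit QE.q QZ.q u G' := by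
  intro ι κ _ _ a ha x
  refine (h ι κ a ha x).trans ?_
  exact mul_le_mul_of_nonneg_right hG (Finset.sum_nonneg fun j _ => sq_nonneg _)

lemma crit_boot (QE : QuasiNormOn E) (QZ : QuasiNormOn Z) (hcot : HasCotype QZ.q 2)
    (hdual : DualHasCotype2 QE.q) :
    ∃ B : ℝ, 0 ≤ B ∧ ∀ (u : E →ₗ[ℝ] Z) (M G : ℝ), 0 ≤ M → OpBoundedBy QE.q QZ.q u M → 0 ≤ G →
      Crit QE.q QZ.q u G → Crit QE.q QZ.q u (B * M ^ 2) := by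
  obtain ⟨C, hC, hcot⟩ := hcot
  obtain ⟨C1, hC1, hdual⟩ := hdual
  have hkZ := QZ.k_pos
  have hkE := QE.k_pos
  set P : ℝ := C ^ 2 * QZ.k ^ 2 * (2 * QZ.k ^ 2 * (4 * C1 ^ 2)) with hP
  have hP0 : 0 < P := by positivity
  have hmain : ∀ (m : ℕ) (_ : 0 < m) (d : ℝ) (_ : 0 < d) (_ : d ≤ 1) (u : E →ₗ[ℝ] Z) (M G : ℝ),
      0 ≤ M → OpBoundedBy QE.q QZ.q u M → 0 ≤ G → Crit QE.q QZ.q u G →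
      Crit QE.q QZ.q u
        (P * (2 * QZ.k ^ 2 * (G / m + (M * QE.k ^ m) ^ 2) * (d ^ 2)⁻¹ + d ^ 4 * G)) := by
    intro m hm d hd hd1 u M G hM hu hG h
    have := crit_of_type2 QE QZ u hC hcot
      (T := 2 * QZ.k ^ 2 * (2 * QZ.k ^ 2 * (G / m + (M * QE.k ^ m) ^ 2) * (d ^ 2)⁻¹ + d ^ 4 * G) *
        (4 * C1 ^ 2)) (fun n x => by
        obtain ⟨F, hF, hF2⟩ := exists_lift QE hC1 hdual x
        refine (type2_of_lift hG hM hu h m hm hd hd1 x F hF).trans ?_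
        refine (mul_le_mul_of_nonneg_left hF2 (by positivity)).trans (le_of_eq ?_)
        ring)
    refine this.mono (le_of_eq ?_)
    rw [hP]; ring
  obtain ⟨d, hd, hd1, hdP⟩ : ∃ d : ℝ, 0 < d ∧ d ≤ 1 ∧ P * d ^ 4 ≤ 1 / 4 := by
    refine ⟨(4 * P + 1)⁻¹, by positivity, inv_le_one_of_one_le₀ (by linarith), ?_⟩
    have h1 : (4 * P + 1)⁻¹ ≤ 1 := inv_le_one_of_one_le₀ (by linarith)
    have h2 : ((4 * P + 1)⁻¹) ^ 4 ≤ (4 * P + 1)⁻¹ :=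
      pow_le_of_le_one (by positivity) h1 (by norm_num)
    calc P * ((4 * P + 1)⁻¹) ^ 4 ≤ P * (4 * P + 1)⁻¹ := by gcongr
      _ ≤ 1 / 4 := by
        rw [← div_eq_mul_inv, div_le_div_iff₀ (by positivity) (by norm_num)]; linarith
  obtain ⟨m, hm, hmP⟩ : ∃ m : ℕ, 0 < m ∧ P * (2 * QZ.k ^ 2 * (d ^ 2)⁻¹) / m ≤ 1 / 4 := by
    obtain ⟨m, hm⟩ := exists_nat_gt (4 * (P * (2 * QZ.k ^ 2 * (d ^ 2)⁻¹)))
    have hm0 : (0:ℝ) < m := lt_trans (by positivity) hm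
    refine ⟨m, by exact_mod_cast hm0, ?_⟩
    rw [div_le_div_iff₀ hm0 (by norm_num)]
    linarith
  set B : ℝ := P * (2 * QZ.k ^ 2 * (QE.k ^ m) ^ 2 * (d ^ 2)⁻¹) with hB
  have hB0 : 0 ≤ B := by positivity
  refine ⟨2 * B, by positivity, fun u M G hM hu hG h => ?_⟩
  have hstep : ∀ n : ℕ, Crit QE.q QZ.q u (G / 2 ^ n + 2 * B * M ^ 2) := by
    intro n
    induction n with
    | zero => exact h.mono (by simp; positivity)
    | succ n ih =>
      set G' := G / 2 ^ n + 2 * B * M ^ 2 with hG'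
      have hG0 : 0 ≤ G' := by positivity
      refine (hmain m hm d hd hd1 u M G' hM hu hG0 ih).mono ?_
      have e1 : P * (2 * QZ.k ^ 2 * (G' / m + (M * QE.k ^ m) ^ 2) * (d ^ 2)⁻¹ + d ^ 4 * G') =
        (P * (2 * QZ.k ^ 2 * (d ^ 2)⁻¹) / m) * G' + (P * d ^ 4) * G' + B * M ^ 2 := by
        rw [hB]; ring
      have e2 : G / 2 ^ (n + 1) + 2 * B * M ^ 2 = 1 / 4 * G' + 1 / 4 * G' + B * M ^ 2 := by
        rw [hG', pow_succ]; field_simp; ring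
      rw [e1, e2]
      gcongr
  intro ι κ _ _ a ha x
  have ht : Filter.Tendsto (fun n : ℕ => (G / 2 ^ n + 2 * B * M ^ 2) * ∑ j, QE.q (x j) ^ 2)
      Filter.atTop (nhds ((0 + 2 * B * M ^ 2) * ∑ j, QE.q (x j) ^ 2)) := by
    refine Filter.Tendsto.mul_const _ (Filter.Tendsto.add_const _ ?_)
    exact tendsto_const_nhds.div_atTop (tendsto_pow_atTop_atTop_of_one_lt (by norm_num))
  rw [zero_add] at ht
  exact ge_of_tendsto' ht fun n => hstep n ι κ a ha x

end Boot

section Closure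
variable {E : Type uE} [AddCommGroup E] [Module ℝ E] {Z : Type uZ} [AddCommGroup Z] [Module ℝ Z]
  {V : Type uV} [AddCommGroup V] [Module ℝ V]

/-- bounded finite rank operators satisfy the criterion -/
lemma crit_finite_rank {QE : QuasiNormOn E} {QZ : QuasiNormOn Z} {u : E →ₗ[ℝ] Z}
    (hu : IsBddOp QE.q QZ.q u) (hfin : Module.Finite ℝ (LinearMap.range u)) :
    ∃ G, 0 ≤ G ∧ Crit QE.q QZ.q u G := by
  classical
  obtain ⟨M, hM, hu⟩ := hu
  set n := Module.finrank ℝ (LinearMap.range u)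
  let b := Module.finBasis ℝ (LinearMap.range u)
  let y : Fin n → Z := fun k => (b k : Z)
  let φ : Fin n → E →ₗ[ℝ] ℝ := fun k => b.coord k ∘ₗ u.rangeRestrict
  have hrep : ∀ x, u x = ∑ k, φ k x • y k := fun x => by
    have := b.sum_repr (u.rangeRestrict x)
    have := congrArg Subtype.val this
    simp only [Submodule.coe_sum, Submodule.coe_smul] at this
    exact this.symm
  set f : EuclideanSpace ℝ (Fin n) → ℝ := fun v => QZ.q (∑ j, v j • y j) with hfdef
  set L : ℝ := QZ.k ^ n * ∑ j, QZ.q (y j) with hLdef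
  have hkp := QZ.k_pos
  have hL : 0 ≤ L := mul_nonneg (by positivity) (Finset.sum_nonneg fun j _ => QZ.nonneg _)
  have hf : ∀ v, f v ≤ L * ‖v‖ := fun v => by
    simp only [hfdef]
    refine (QZ.q_sum_le _ _).trans ?_
    rw [hLdef, mul_assoc, Finset.card_univ, Fintype.card_fin]
    refine mul_le_mul_of_nonneg_left ?_ (by positivity)
    rw [Finset.sum_mul]
    refine Finset.sum_le_sum fun j _ => ?_
    rw [QZ.smul_eq, mul_comm]
    exact mul_le_mul_of_nonneg_left (PiLp.norm_apply_le v j) (QZ.nonneg _)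
  obtain ⟨p, hpc, hp0, hpf, hfp⟩ := exists_reg f QZ.one_le_k hL (fun v => QZ.nonneg _) hf
    (fun v w => by
      simp only [hfdef, PiLp.add_apply, add_smul, Finset.sum_add_distrib]
      exact QZ.tri _ _)
  have hfpos : ∀ v, v ≠ 0 → 0 < f v := fun v hv => by
    refine lt_of_le_of_ne (QZ.nonneg _) fun h => hv ?_
    have h1 := (QZ.eq_zero_iff _).1 h.symm
    have h2 : ∑ j, v j • b j = 0 := by
      apply Subtype.val_injective
      simp only [Submodule.coe_sum, Submodule.coe_smul]
      exact h1
    ext j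
    exact Fintype.linearIndependent_iff.1 b.linearIndependent _ h2 j
  obtain ⟨δ, hδ, hδf⟩ : ∃ δ > 0, ∀ v, δ * ‖v‖ ≤ f v := by
    have hcomp : IsCompact (Metric.sphere (0 : EuclideanSpace ℝ (Fin n)) 1) := isCompact_sphere 0 1
    have hbound : ∃ δ > 0, ∀ v ∈ Metric.sphere (0 : EuclideanSpace ℝ (Fin n)) 1, δ ≤ p v := by
      refine hcomp.exists_forall_le' hpc.continuousOn (a := 0) fun v hv => ?_
      have hv0 : v ≠ 0 := by
        rintro rfl
        simp at hv
      have h1 := (hfpos v hv0).trans_le (hfp v)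
      exact pos_of_mul_pos_right h1 hkp.le
    obtain ⟨δ, hδ, h⟩ := hbound
    refine ⟨δ, hδ, fun v => ?_⟩
    by_cases hv : v = 0
    · subst hv; simpa using QZ.nonneg _
    have hn : 0 < ‖v‖ := norm_pos_iff.2 hv
    have h1 := (h (‖v‖⁻¹ • v) (by simp [norm_smul, hn.ne'])).trans (hpf _)
    have h2 : f (‖v‖⁻¹ • v) = ‖v‖⁻¹ * f v := by
      simp only [hfdef, PiLp.smul_apply, smul_eq_mul, mul_smul, ← Finset.smul_sum, QZ.smul_eq]
      rw [abs_of_pos (inv_pos.2 hn)]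
    rw [h2, ← div_eq_inv_mul, le_div_iff₀ hn] at h1
    exact h1
  have hq : ∀ x, QZ.q (u x) ^ 2 ≤ L ^ 2 * ∑ k, φ k x ^ 2 ∧
      ∑ k, φ k x ^ 2 ≤ (δ⁻¹ * M) ^ 2 * QE.q x ^ 2 := by
    intro x
    set v : EuclideanSpace ℝ (Fin n) := WithLp.toLp 2 fun k => φ k x with hv
    have hfv : f v = QZ.q (u x) := by rw [hrep]
    have hn : ∑ k, φ k x ^ 2 = ‖v‖ ^ 2 := by
      rw [EuclideanSpace.real_norm_sq_eq]
    rw [hn, ← hfv, ← mul_pow, ← mul_pow]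
    have h1 := hf v
    have h2 := hδf v
    have h3 : f v ≤ M * QE.q x := hfv ▸ hu x
    have h4 : 0 ≤ f v := QZ.nonneg _
    constructor
    · gcongr
    · have : ‖v‖ ≤ δ⁻¹ * M * QE.q x := by
        rw [mul_assoc, ← div_eq_inv_mul, le_div_iff₀ hδ]; linarith
      gcongr
  refine ⟨L ^ 2 * (δ⁻¹ * M) ^ 2, by positivity, ?_⟩
  intro ι κ _ _ a ha x
  calc _ ≤ ∑ i, L ^ 2 * ∑ k, φ k (∑ j, a i j • x j) ^ 2 := Finset.sum_le_sum fun i _ => (hq _).1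
    _ = L ^ 2 * ∑ k, ∑ i, (∑ j, a i j * φ k (x j)) ^ 2 := by
      rw [← Finset.mul_sum, Finset.sum_comm]
      simp only [map_sum, map_smul, smul_eq_mul]
    _ ≤ L ^ 2 * ∑ k, ∑ j, φ k (x j) ^ 2 := by
      gcongr with k
      exact ha fun j => φ k (x j)
    _ = L ^ 2 * ∑ j, ∑ k, φ k (x j) ^ 2 := by rw [Finset.sum_comm]
    _ ≤ L ^ 2 * ∑ j, (δ⁻¹ * M) ^ 2 * QE.q (x j) ^ 2 := by
      gcongr with j
      exact (hq _).2
    _ = _ := by rw [← Finset.mul_sum, mul_assoc]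

lemma opBounded_comp {W : Type uW} [AddCommGroup W] [Module ℝ W] {qE : E → ℝ} {qV : V → ℝ}
    {qW : W → ℝ} {A : E →ₗ[ℝ] V} {D : V →ₗ[ℝ] W} {MA MD : ℝ} (hD0 : 0 ≤ MD)
    (hA : OpBoundedBy qE qV A MA) (hD : OpBoundedBy qV qW D MD) :
    OpBoundedBy qE qW (D ∘ₗ A) (MD * MA) := fun x => by
  refine (hD _).trans ?_
  rw [mul_assoc]
  exact mul_le_mul_of_nonneg_left (hA x) hD0

lemma crit_of_sap {QE : QuasiNormOn E} {QZ : QuasiNormOn Z} {QV : QuasiNormOn V}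
    (hcot : HasCotype QZ.q 2) (hdual : DualHasCotype2 QE.q)
    (hV : StronglyApproximable QV.q QV.q (LinearMap.id))
    {A : E →ₗ[ℝ] V} {D : V →ₗ[ℝ] Z} {MA MD : ℝ} (hA0 : 0 ≤ MA) (hD0 : 0 ≤ MD)
    (hA : OpBoundedBy QE.q QV.q A MA) (hD : OpBoundedBy QV.q QZ.q D MD) :
    ∃ G, 0 ≤ G ∧ Crit QE.q QZ.q (D ∘ₗ A) G := by
  obtain ⟨B, hB0, hB⟩ := crit_boot QE QZ hcot hdual
  have hkZ := QZ.k_pos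
  have hkV := QV.k_pos
  have key := hV {w | IsBddOp QV.q QV.q w ∧ ∃ G, 0 ≤ G ∧ Crit QE.q QZ.q (D ∘ₗ w ∘ₗ A) G}
    (fun w hw => hw.1) ?_ ?_ ?_ ?_
  · exact key.2
  · rintro w w' ⟨⟨M, hM, hw⟩, G, hG, h⟩ ⟨⟨M', hM', hw'⟩, G', hG', h'⟩
    refine ⟨⟨QV.k * (M + M'), by positivity, fun x => ?_⟩,
      2 * QZ.k ^ 2 * (G + G'), by positivity, ?_⟩
    · refine (QV.tri _ _).trans ?_
      have := hw x
      have := hw' x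
      rw [mul_assoc]
      refine mul_le_mul_of_nonneg_left ?_ hkV.le
      linarith
    · intro ι κ _ _ a ha x
      have h1 := h ι κ a ha x
      have h2 := h' ι κ a ha x
      calc _ ≤ ∑ i, 2 * QZ.k ^ 2 * (QZ.q ((D ∘ₗ w ∘ₗ A) (∑ j, a i j • x j)) ^ 2 +
            QZ.q ((D ∘ₗ w' ∘ₗ A) (∑ j, a i j • x j)) ^ 2) := by
            refine Finset.sum_le_sum fun i _ => ?_
            have := QZ.tri_sq ((D ∘ₗ w ∘ₗ A) (∑ j, a i j • x j))
              ((D ∘ₗ w' ∘ₗ A) (∑ j, a i j • x j))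
            refine le_trans (le_of_eq ?_) this
            congr 2
            simp only [LinearMap.comp_apply, LinearMap.add_apply, map_add]
        _ = 2 * QZ.k ^ 2 * (∑ i, QZ.q ((D ∘ₗ w ∘ₗ A) (∑ j, a i j • x j)) ^ 2 +
            ∑ i, QZ.q ((D ∘ₗ w' ∘ₗ A) (∑ j, a i j • x j)) ^ 2) := by
            rw [← Finset.mul_sum, Finset.sum_add_distrib]
        _ ≤ 2 * QZ.k ^ 2 * (G * ∑ j, QE.q (x j) ^ 2 + G' * ∑ j, QE.q (x j) ^ 2) := by gcongr
        _ = _ := by ring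
  · rintro c w ⟨⟨M, hM, hw⟩, G, hG, h⟩
    refine ⟨⟨|c| * M, by positivity, fun x => ?_⟩, c ^ 2 * G, by positivity, ?_⟩
    · rw [LinearMap.smul_apply, QV.smul_eq, mul_assoc]
      exact mul_le_mul_of_nonneg_left (hw x) (abs_nonneg c)
    · intro ι κ _ _ a ha x
      have h1 := h ι κ a ha x
      calc _ = c ^ 2 * ∑ i, QZ.q ((D ∘ₗ w ∘ₗ A) (∑ j, a i j • x j)) ^ 2 := by
            rw [Finset.mul_sum]
            refine Finset.sum_congr rfl fun i _ => ?_
            simp only [LinearMap.comp_apply, LinearMap.smul_apply, map_smul, QZ.smul_eq, mul_pow,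
              sq_abs]
        _ ≤ _ := by rw [mul_assoc]; gcongr
  · intro w hw hfin
    refine ⟨hw, ?_⟩
    obtain ⟨M, hM, hw⟩ := hw
    refine crit_finite_rank ⟨_, ?_, opBounded_comp hD0 (opBounded_comp hM hA hw) hD⟩ ?_
    · positivity
    · have hle : LinearMap.range (D ∘ₗ w ∘ₗ A) ≤ (LinearMap.range w).map D := by
        rintro _ ⟨x, rfl⟩
        exact ⟨w (A x), ⟨A x, rfl⟩, rfl⟩
      have : FiniteDimensional ℝ ((LinearMap.range w).map D) := inferInstance
      exact Submodule.finiteDimensional_of_le hle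
  · rintro l hl hS ⟨B0, hB0'⟩ v hv
    set K := max B0 0 with hK
    have hK0 : 0 ≤ K := le_max_right _ _
    have hbd : ∀ᶠ w in l, OpBoundedBy QV.q QV.q w K := by
      filter_upwards [hB0'] with w hw x
      exact (hw x).trans (mul_le_mul_of_nonneg_right (le_max_left _ _) (QV.nonneg x))
    have hvb : OpBoundedBy QV.q QV.q v (QV.k * K) := fun x => by
      have ht : Filter.Tendsto (fun w : V →ₗ[ℝ] V => QV.k * (K * QV.q x + QV.q (w x - v x))) l
          (nhds (QV.k * (K * QV.q x + 0))) := ((hv x).const_add _).const_mul _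
      rw [add_zero, ← mul_assoc] at ht
      refine ge_of_tendsto ht ?_
      filter_upwards [hbd] with w hw
      have h1 := QV.tri (w x) (-(w x - v x))
      rw [QV.q_neg] at h1
      have e : w x + -(w x - v x) = v x := by abel
      rw [e] at h1
      refine h1.trans (mul_le_mul_of_nonneg_left ?_ hkV.le)
      have := hw x
      linarith
    refine ⟨⟨_, by positivity, hvb⟩, 2 * QZ.k ^ 2 * (B * (MD * (K * MA)) ^ 2), by positivity, ?_⟩
    intro ι κ _ _ a ha x
    set S := ∑ j, QE.q (x j) ^ 2
    have ht : Filter.Tendsto (fun w : V →ₗ[ℝ] V => 2 * QZ.k ^ 2 * (B * (MD * (K * MA)) ^ 2 * S +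
        ∑ i, (MD * QV.q (w (A (∑ j, a i j • x j)) - v (A (∑ j, a i j • x j)))) ^ 2)) l
          (nhds (2 * QZ.k ^ 2 * (B * (MD * (K * MA)) ^ 2 * S + ∑ i : ι, (MD * 0) ^ 2))) := by
      refine ((tendsto_finsetSum _ fun i _ => ?_).const_add _).const_mul _
      exact ((hv _).const_mul _).pow 2
    simp only [mul_zero, ne_eq, OfNat.ofNat_ne_zero, not_false_eq_true, zero_pow,
      Finset.sum_const_zero, add_zero] at ht
    rw [mul_assoc]
    refine ge_of_tendsto ht ?_
    filter_upwards [hbd, hS] with w hw hwS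
    obtain ⟨G, hG, hwG⟩ := hwS.2
    have h1 := hB _ _ G (by positivity) (opBounded_comp hD0 (opBounded_comp hK0 hA hw) hD) hG hwG
      ι κ a ha x
    refine le_trans (Finset.sum_le_sum (g := fun i => 2 * QZ.k ^ 2 *
      (QZ.q ((D ∘ₗ w ∘ₗ A) (∑ j, a i j • x j)) ^ 2 +
        (MD * QV.q (w (A (∑ j, a i j • x j)) - v (A (∑ j, a i j • x j)))) ^ 2)) fun i _ => ?_)
      (le_trans (le_of_eq ?_)
        (mul_le_mul_of_nonneg_left (add_le_add_left h1 _) (by positivity)))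
    · set y := A (∑ j, a i j • x j) with hy
      have h2 := QZ.tri_sq (D (w y)) (-(D (w y - v y)))
      have e : D (w y) + -(D (w y - v y)) = D (v y) := by rw [map_sub]; abel
      rw [e, QZ.q_neg] at h2
      refine h2.trans (mul_le_mul_of_nonneg_left ?_ (by positivity))
      have h3 := hD (w y - v y)
      have h4 := QZ.nonneg (D (w y - v y))
      have h5 : QZ.q (D (w y - v y)) ^ 2 ≤ (MD * QV.q (w y - v y)) ^ 2 := by gcongr
      exact add_le_add_right h5 _
    · rw [← Finset.mul_sum, Finset.sum_add_distrib]

end Closure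

end Part6

/-- **Theorem 9 (1)**. Let `Z` be a quasi-Banach space of cotype 2 and let `X` be
subordinate to `Z`; assume `X` or `Z` has the strong approximation property. If `Y` is a
closed subspace of `X` whose dual has cotype 2, then `Y` is locally convex. -/
theorem subspace_locally_convex_of_dual_cotype2
    {X : Type uX} {Z : Type uZ} [AddCommGroup X] [Module ℝ X] [AddCommGroup Z] [Module ℝ Z]
    (QX : QuasiNormOn X) (QZ : QuasiNormOn Z)
    (hXcomplete : CauchyComplete QX.q) (hZcomplete : CauchyComplete QZ.q)
    (hsub : Subordinate QX.q QZ.q)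
    (hsap : StronglyApproximable QX.q QX.q (LinearMap.id) ∨
            StronglyApproximable QZ.q QZ.q (LinearMap.id))
    (hcotZ : HasCotype QZ.q 2)
    (Y : Submodule ℝ X) (hYclosed : QClosed QX.q (Y : Set X))
    (hdualY : DualHasCotype2 (fun y : ↥Y => QX.q y.1)) :
    IsLocallyConvexQN (fun y : ↥Y => QX.q y.1) := by
  obtain ⟨I, hI, T, c, C, hc, hC, hTC, hcT⟩ := hsub
  let QY : QuasiNormOn ↥Y :=
    { q := fun y => QX.q y.1
      nonneg := fun y => QX.nonneg _
      eq_zero_iff := fun y => by rw [QX.eq_zero_iff]; exact Submodule.coe_eq_zero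
      smul_eq := fun a y => QX.smul_eq a _
      k := QX.k
      one_le_k := QX.one_le_k
      tri := fun x y => QX.tri _ _ }
  change DualHasCotype2 QY.q at hdualY
  obtain ⟨B, hB0, hB⟩ := crit_boot QY QZ hcotZ hdualY
  have hu : ∀ i : I, OpBoundedBy QY.q QZ.q ((LinearMap.proj i ∘ₗ T) ∘ₗ Y.subtype) C :=
    fun i y => hTC _ i
  have hcrit : ∀ i : I, ∃ G, 0 ≤ G ∧
      Crit QY.q QZ.q ((LinearMap.proj i ∘ₗ T) ∘ₗ Y.subtype) G := by
    intro i
    rcases hsap with h | h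
    · exact crit_of_sap (QV := QX) hcotZ hdualY h (MA := 1) (MD := C) zero_le_one hC.le
        (fun y => by rw [one_mul]; exact le_refl _) (fun x => hTC x i)
    · have := crit_of_sap (QV := QZ) hcotZ hdualY h (D := LinearMap.id)
        (A := (LinearMap.proj i ∘ₗ T) ∘ₗ Y.subtype) (MA := C) (MD := 1) hC.le zero_le_one
        (hu i) (fun y => by rw [one_mul]; exact le_refl _)
      exact this
  refine ⟨QY.env, 1, √(B * C ^ 2) / c, one_pos, QY.env_add_le, QY.env_smul, fun y => ⟨?_, ?_⟩⟩
  · rw [one_mul]; exact QY.env_le y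
  · rw [div_mul_eq_mul_div, le_div_iff₀ hc, mul_comm]
    refine (hcT y.1).trans (csSup_le (Set.range_nonempty _) ?_)
    rintro _ ⟨i, rfl⟩
    obtain ⟨G, hG, hcr⟩ := hcrit i
    have h1 := (hB _ C G hC.le (hu i) hG hcr).single (by positivity) y
    have h2 := QY.env_nonneg y
    have h3 : (QZ.q (T y.1 i)) ^ 2 ≤ (√(B * C ^ 2) * QY.env y) ^ 2 := by
      rw [mul_pow, Real.sq_sqrt (by positivity)]
      exact h1
    exact (sq_le_sq₀ (QZ.nonneg _) (by positivity)).1 h3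
end

section
/- Let X be a quasi-Banach space carrying two equivalent r-norms ‖·‖₀ and ‖·‖₁ (0 < r ≤ 1), and suppose 1 ≤ a < ∞ and 0 < θ < r/(2−r). Then there is a constant C = C(a,θ,r) such that if the type 2 constant satisfies T₂(X₀) ≤ a, then the Lions–Peetre interpolation space X_θ = (X₀,X₁)_{θ,2} satisfies δ_{X_θ} ≤ C, i.e. the ‖·‖_{θ,2} quasi-norm is C-equivalent to its Banach envelope norm. -/
open scoped ENNReal NNReal BigOperators

universe uX uY uZ uW uE uO uG uV

section Defs

variable {X : Type uX} {Y : Type uY} {Z : Type uZ} {W : Type uW}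
  [AddCommGroup X] [Module ℝ X] [AddCommGroup Y] [Module ℝ Y]
  [AddCommGroup Z] [Module ℝ Z] [AddCommGroup W] [Module ℝ W]

/-- An `r`-norm on a real vector space (`0 < r ≤ 1`): the quasi-norm satisfies
`‖x+y‖^r ≤ ‖x‖^r + ‖y‖^r`. -/
structure RNormOn (X : Type uX) [AddCommGroup X] [Module ℝ X] (r : ℝ) : Type uX where
  q : X → ℝ
  nonneg : ∀ x, 0 ≤ q x
  eq_zero_iff : ∀ x, q x = 0 ↔ x = 0
  smul_eq : ∀ (a : ℝ) (x : X), q (a • x) = |a| * q x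
  rtri : ∀ x y, q (x + y) ^ r ≤ q x ^ r + q y ^ r

/-- The Lions–Peetre `K₂`-functional of the couple `((X,q₀),(X,q₁))`. -/
noncomputable def K2fn (q0 q1 : X → ℝ) (t : ℝ) (x : X) : ℝ :=
  sInf {c | ∃ x0 x1, x = x0 + x1 ∧ c = Real.sqrt (q0 x0 ^ 2 + t ^ 2 * q1 x1 ^ 2)}

/-- The Lions–Peetre interpolation quasi-norm `‖x‖_{θ,2}`. -/
noncomputable def thetaNorm (q0 q1 : X → ℝ) (θ : ℝ) (x : X) : ℝ :=
  Real.sqrt (θ * (1 - θ)) *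
    Real.sqrt (∫ t in Set.Ioi (0:ℝ), K2fn q0 q1 t x ^ 2 / t ^ (1 + 2 * θ))

/-- The Banach envelope norm of `(X,q)` : the gauge (Minkowski functional) of the
convex hull of the unit ball of `q`. -/
noncomputable def envNorm (q : X → ℝ) : X → ℝ := gauge (convexHull ℝ {x | q x ≤ 1})

end Defs

section Helpers

variable {X : Type uX} [AddCommGroup X] [Module ℝ X]

lemma ilc_q_zero {r : ℝ} (Q : RNormOn X r) : Q.q 0 = 0 := (Q.eq_zero_iff 0).2 rfl

lemma ilc_K_nonneg (q0 q1 : X → ℝ) (t : ℝ) (x : X) : 0 ≤ K2fn q0 q1 t x := by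
  unfold K2fn
  apply Real.sInf_nonneg
  rintro c ⟨x0, x1, -, rfl⟩
  exact Real.sqrt_nonneg _

lemma ilc_K_le (q0 q1 : X → ℝ) (t : ℝ) (x x0 x1 : X) (h : x = x0 + x1) :
    K2fn q0 q1 t x ≤ Real.sqrt (q0 x0 ^ 2 + t ^ 2 * q1 x1 ^ 2) := by
  unfold K2fn
  apply csInf_le
  · refine ⟨0, ?_⟩
    rintro c ⟨x0, x1, -, rfl⟩
    exact Real.sqrt_nonneg _
  · exact ⟨x0, x1, h, rfl⟩

lemma ilc_Ksq_le (q0 q1 : X → ℝ) (t : ℝ) (x x0 x1 : X) (h : x = x0 + x1) :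
    K2fn q0 q1 t x ^ 2 ≤ q0 x0 ^ 2 + t ^ 2 * q1 x1 ^ 2 := by
  have h1 := ilc_K_le q0 q1 t x x0 x1 h
  have h2 := pow_le_pow_left₀ (ilc_K_nonneg q0 q1 t x) h1 2
  rwa [Real.sq_sqrt (by positivity)] at h2

lemma ilc_K_exists (q0 q1 : X → ℝ) (t : ℝ) (x : X) (δ : ℝ) (hδ : 0 < δ) :
    ∃ x0 x1, x = x0 + x1 ∧ q0 x0 ^ 2 + t ^ 2 * q1 x1 ^ 2 < K2fn q0 q1 t x ^ 2 + δ := by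
  have hK := ilc_K_nonneg q0 q1 t x
  have h1 : K2fn q0 q1 t x < Real.sqrt (K2fn q0 q1 t x ^ 2 + δ) := by
    apply Real.lt_sqrt_of_sq_lt; linarith
  have h2 : sInf {c | ∃ x0 x1, x = x0 + x1 ∧ c = Real.sqrt (q0 x0 ^ 2 + t ^ 2 * q1 x1 ^ 2)}
      < Real.sqrt (K2fn q0 q1 t x ^ 2 + δ) := h1
  have hne : {c | ∃ x0 x1, x = x0 + x1 ∧
      c = Real.sqrt (q0 x0 ^ 2 + t ^ 2 * q1 x1 ^ 2)}.Nonempty :=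
    ⟨_, x, 0, (add_zero x).symm, rfl⟩
  obtain ⟨c, ⟨x0, x1, hx, rfl⟩, hc⟩ := exists_lt_of_csInf_lt hne h2
  exact ⟨x0, x1, hx, (Real.sqrt_lt_sqrt_iff (by positivity)).1 hc⟩

lemma ilc_K_smul {r : ℝ} (Q0 Q1 : RNormOn X r) (t c : ℝ) (x : X) :
    K2fn Q0.q Q1.q t (c • x) ^ 2 ≤ c ^ 2 * K2fn Q0.q Q1.q t x ^ 2 := by
  have key : ∀ δ > 0, K2fn Q0.q Q1.q t (c • x) ^ 2 ≤ c ^ 2 * (K2fn Q0.q Q1.q t x ^ 2 + δ) := by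
    intro δ hδ
    obtain ⟨x0, x1, hx, h⟩ := ilc_K_exists Q0.q Q1.q t x δ hδ
    have := ilc_Ksq_le Q0.q Q1.q t (c • x) (c • x0) (c • x1) (by rw [hx, smul_add])
    rw [Q0.smul_eq, Q1.smul_eq, mul_pow, mul_pow, sq_abs] at this
    nlinarith [mul_le_mul_of_nonneg_left h.le (sq_nonneg c)]
  apply le_of_forall_pos_le_add
  intro ε hε
  have h := key (ε / (c ^ 2 + 1)) (by positivity)
  have : c ^ 2 * (ε / (c ^ 2 + 1)) ≤ ε := by
    rw [mul_div_assoc', div_le_iff₀ (by positivity)]; nlinarith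
  linarith

lemma ilc_q_tri {r : ℝ} (hr0 : 0 < r) (hr1 : r ≤ 1) (Q : RNormOn X r) (l m : ℝ)
    (hl : 0 < l) (hm : 0 < m) (hlm : l + m = 1) (x y : X) :
    Q.q (x + y) ^ 2 ≤ l * (1 / l) ^ (2 / r) * Q.q x ^ 2 + m * (1 / m) ^ (2 / r) * Q.q y ^ 2 := by
  have hp : 1 ≤ 2 / r := by rw [le_div_iff₀ hr0]; linarith
  have e : ∀ z, Q.q z ^ 2 = (Q.q z ^ r) ^ (2 / r) := by
    intro z
    rw [← Real.rpow_mul (Q.nonneg z), mul_div_cancel₀ _ hr0.ne']; norm_num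
  have hu := Real.rpow_nonneg (Q.nonneg x) r
  have hv := Real.rpow_nonneg (Q.nonneg y) r
  rw [e, e x, e y]
  have h1 := Real.rpow_le_rpow (Real.rpow_nonneg (Q.nonneg (x + y)) r) (Q.rtri x y)
    (by positivity : 0 ≤ 2 / r)
  refine h1.trans ?_
  have hcx := (convexOn_rpow hp).2 (x := 1 / l * Q.q x ^ r) (y := 1 / m * Q.q y ^ r)
    (Set.mem_Ici.2 (by positivity)) (Set.mem_Ici.2 (by positivity)) hl.le hm.le hlm
  simp only [smul_eq_mul] at hcx
  have h2 := hcx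
  rw [Real.mul_rpow (by positivity) hu, Real.mul_rpow (by positivity) hv] at h2
  have e1 : l * (1 / l * Q.q x ^ r) + m * (1 / m * Q.q y ^ r) = Q.q x ^ r + Q.q y ^ r := by
    field_simp
  rw [e1] at h2
  linarith

lemma ilc_K_tri {r : ℝ} (hr0 : 0 < r) (hr1 : r ≤ 1) (Q0 Q1 : RNormOn X r) (l m : ℝ)
    (hl : 0 < l) (hm : 0 < m) (hlm : l + m = 1) (t : ℝ) (x y : X) :
    K2fn Q0.q Q1.q t (x + y) ^ 2 ≤ l * (1 / l) ^ (2 / r) * K2fn Q0.q Q1.q t x ^ 2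
      + m * (1 / m) ^ (2 / r) * K2fn Q0.q Q1.q t y ^ 2 := by
  set c := l * (1 / l) ^ (2 / r) with hc
  set d := m * (1 / m) ^ (2 / r) with hd
  have hc0 : 0 < c := by positivity
  have hd0 : 0 < d := by positivity
  apply le_of_forall_pos_le_add
  intro ε hε
  obtain ⟨x0, x1, hx, h⟩ := ilc_K_exists Q0.q Q1.q t x (ε / (c + d)) (by positivity)
  obtain ⟨y0, y1, hy, h'⟩ := ilc_K_exists Q0.q Q1.q t y (ε / (c + d)) (by positivity)
  have := ilc_Ksq_le Q0.q Q1.q t (x + y) (x0 + y0) (x1 + y1) (by rw [hx, hy]; abel)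
  have a0 := ilc_q_tri hr0 hr1 Q0 l m hl hm hlm x0 y0
  have a1 := ilc_q_tri hr0 hr1 Q1 l m hl hm hlm x1 y1
  rw [← hc, ← hd] at a0 a1
  have e : c * (ε / (c + d)) + d * (ε / (c + d)) = ε := by field_simp
  have b1 := mul_le_mul_of_nonneg_left a1 (sq_nonneg t)
  have b2 := mul_le_mul_of_nonneg_left h.le hc0.le
  have b3 := mul_le_mul_of_nonneg_left h'.le hd0.le
  nlinarith

lemma ilc_K_mono (q0 q1 : X → ℝ) (x : X) :
    MonotoneOn (fun t => K2fn q0 q1 t x) (Set.Ioi 0) := by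
  intro s hs t ht hst
  have hs : 0 < s := hs
  apply le_csInf
  · exact ⟨_, x, 0, (add_zero x).symm, rfl⟩
  · rintro c ⟨x0, x1, h, rfl⟩
    refine (ilc_K_le q0 q1 s x x0 x1 h).trans (Real.sqrt_le_sqrt ?_)
    gcongr

lemma ilc_integrable {r : ℝ} (Q0 Q1 : RNormOn X r) {θ : ℝ} (h0 : 0 < θ) (h1 : θ < 1) (x : X) :
    MeasureTheory.IntegrableOn (fun t : ℝ => K2fn Q0.q Q1.q t x ^ 2 / t ^ (1 + 2 * θ))
      (Set.Ioi (0:ℝ)) := by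
  have hmeas : AEMeasurable (fun t : ℝ => K2fn Q0.q Q1.q t x ^ 2 / t ^ (1 + 2 * θ))
      (MeasureTheory.volume.restrict (Set.Ioi (0:ℝ))) := by
    apply AEMeasurable.div
    · exact (aemeasurable_restrict_of_monotoneOn measurableSet_Ioi
        (ilc_K_mono Q0.q Q1.q x)).pow_const 2
    · exact (by fun_prop : Measurable fun t : ℝ => t ^ (1 + 2 * θ)).aemeasurable
  have hU : Set.Ioi (0:ℝ) = Set.Ioc 0 1 ∪ Set.Ioi 1 :=
    (Set.Ioc_union_Ioi_eq_Ioi zero_le_one).symm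
  rw [hU]
  have b0 : ∀ t : ℝ, K2fn Q0.q Q1.q t x ^ 2 ≤ Q0.q x ^ 2 := by
    intro t
    have := ilc_Ksq_le Q0.q Q1.q t x x 0 (by simp)
    simpa [ilc_q_zero] using this
  have b1 : ∀ t : ℝ, K2fn Q0.q Q1.q t x ^ 2 ≤ t ^ 2 * Q1.q x ^ 2 := by
    intro t
    have := ilc_Ksq_le Q0.q Q1.q t x 0 x (by simp)
    simpa [ilc_q_zero] using this
  apply MeasureTheory.IntegrableOn.union
  · have g : MeasureTheory.IntegrableOn (fun t : ℝ => Q1.q x ^ 2 * t ^ (1 - 2 * θ))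
        (Set.Ioc 0 1) := by
      have := intervalIntegral.intervalIntegrable_rpow' (a := 0) (b := 1)
        (by linarith : -1 < 1 - 2 * θ)
      rw [intervalIntegrable_iff_integrableOn_Ioc_of_le zero_le_one] at this
      exact this.const_mul _
    refine MeasureTheory.Integrable.mono' g ?_ ?_
    · exact (hmeas.mono_set (fun t ht => ht.1)).aestronglyMeasurable
    · filter_upwards [MeasureTheory.ae_restrict_mem measurableSet_Ioc] with t ht
      have ht0 : 0 < t := ht.1
      rw [Real.norm_of_nonneg (by positivity), div_le_iff₀ (by positivity), mul_assoc,
        ← Real.rpow_add ht0]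
      have : t ^ (1 - 2 * θ + (1 + 2 * θ)) = t ^ 2 := by
        rw [← Real.rpow_natCast]; congr 1; push_cast; ring
      rw [this, mul_comm]; exact b1 t
  · have g : MeasureTheory.IntegrableOn (fun t : ℝ => Q0.q x ^ 2 * t ^ (-1 - 2 * θ))
        (Set.Ioi 1) :=
      (integrableOn_Ioi_rpow_of_lt (by linarith) zero_lt_one).const_mul _
    refine MeasureTheory.Integrable.mono' g ?_ ?_
    · exact (hmeas.mono_set (fun t (ht : 1 < t) => lt_trans zero_lt_one ht)).aestronglyMeasurable
    · filter_upwards [MeasureTheory.ae_restrict_mem measurableSet_Ioi] with t ht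
      have ht0 : 0 < t := lt_trans zero_lt_one ht
      rw [Real.norm_of_nonneg (by positivity), div_le_iff₀ (by positivity), mul_assoc,
        ← Real.rpow_add ht0]
      have : t ^ (-1 - 2 * θ + (1 + 2 * θ)) = 1 := by
        rw [← Real.rpow_zero t]; congr 1; ring
      rw [this, mul_one]; exact b0 t

/-- The square of the interpolation quasi-norm. -/
noncomputable def ilcN (q0 q1 : X → ℝ) (θ : ℝ) (x : X) : ℝ :=
  (θ * (1 - θ)) * ∫ t in Set.Ioi (0:ℝ), K2fn q0 q1 t x ^ 2 / t ^ (1 + 2 * θ)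

lemma ilc_int_nonneg (q0 q1 : X → ℝ) (θ : ℝ) (x : X) :
    0 ≤ ∫ t in Set.Ioi (0:ℝ), K2fn q0 q1 t x ^ 2 / t ^ (1 + 2 * θ) := by
  apply MeasureTheory.setIntegral_nonneg measurableSet_Ioi
  intro t ht
  have : 0 < t := ht
  positivity

lemma ilc_theta_sq (q0 q1 : X → ℝ) {θ : ℝ} (h0 : 0 < θ) (h1 : θ < 1) (x : X) :
    thetaNorm q0 q1 θ x ^ 2 = ilcN q0 q1 θ x := by
  unfold thetaNorm ilcN
  rw [mul_pow, Real.sq_sqrt (by nlinarith), Real.sq_sqrt (ilc_int_nonneg _ _ _ _)]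

lemma ilc_N_smul {r : ℝ} (Q0 Q1 : RNormOn X r) {θ : ℝ} (h0 : 0 < θ) (h1 : θ < 1)
    (c : ℝ) (x : X) :
    ilcN Q0.q Q1.q θ (c • x) ≤ c ^ 2 * ilcN Q0.q Q1.q θ x := by
  unfold ilcN
  rw [mul_left_comm, ← MeasureTheory.integral_const_mul (c ^ 2)]
  apply mul_le_mul_of_nonneg_left _ (by nlinarith)
  apply MeasureTheory.setIntegral_mono_on (ilc_integrable Q0 Q1 h0 h1 _)
    ((ilc_integrable Q0 Q1 h0 h1 _).const_mul _) measurableSet_Ioi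
  intro t ht
  have ht : 0 < t := ht
  rw [mul_div_assoc']
  gcongr
  exact ilc_K_smul Q0 Q1 t c x

lemma ilc_N_tri {r : ℝ} (hr0 : 0 < r) (hr1 : r ≤ 1) (Q0 Q1 : RNormOn X r) {θ : ℝ}
    (h0 : 0 < θ) (h1 : θ < 1) (A B : ℝ) (hA : 0 < A) (hB : 0 < B) (x y : X)
    (hx : ilcN Q0.q Q1.q θ x ≤ A ^ (2 / r)) (hy : ilcN Q0.q Q1.q θ y ≤ B ^ (2 / r)) :
    ilcN Q0.q Q1.q θ (x + y) ≤ (A + B) ^ (2 / r) := by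
  set l := A / (A + B) with hl
  set m := B / (A + B) with hm
  have hl0 : 0 < l := by positivity
  have hm0 : 0 < m := by positivity
  have hlm : l + m = 1 := by rw [hl, hm]; field_simp
  set c := l * (1 / l) ^ (2 / r) with hc
  set d := m * (1 / m) ^ (2 / r) with hd
  have hc0 : 0 < c := by positivity
  have hd0 : 0 < d := by positivity
  have key : ilcN Q0.q Q1.q θ (x + y) ≤
      c * ilcN Q0.q Q1.q θ x + d * ilcN Q0.q Q1.q θ y := by
    unfold ilcN
    rw [mul_left_comm c, mul_left_comm d, ← mul_add, ← MeasureTheory.integral_const_mul c,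
      ← MeasureTheory.integral_const_mul d, ← MeasureTheory.integral_add
        ((ilc_integrable Q0 Q1 h0 h1 _).const_mul _) ((ilc_integrable Q0 Q1 h0 h1 _).const_mul _)]
    apply mul_le_mul_of_nonneg_left _ (by nlinarith)
    apply MeasureTheory.setIntegral_mono_on (ilc_integrable Q0 Q1 h0 h1 _)
      (((ilc_integrable Q0 Q1 h0 h1 _).const_mul _).add
        ((ilc_integrable Q0 Q1 h0 h1 _).const_mul _)) measurableSet_Ioi
    intro t ht
    have ht : 0 < t := ht
    simp only [Pi.add_apply]
    rw [mul_div_assoc', mul_div_assoc', ← add_div]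
    gcongr
    exact ilc_K_tri hr0 hr1 Q0 Q1 l m hl0 hm0 hlm t x y
  have e1 : c * A ^ (2 / r) = l * (A + B) ^ (2 / r) := by
    rw [hc, mul_assoc, ← Real.mul_rpow (by positivity) hA.le]
    congr 2; rw [hl]; field_simp
  have e2 : d * B ^ (2 / r) = m * (A + B) ^ (2 / r) := by
    rw [hd, mul_assoc, ← Real.mul_rpow (by positivity) hB.le]
    congr 2; rw [hm]; field_simp
  calc _ ≤ c * A ^ (2 / r) + d * B ^ (2 / r) := by
        refine key.trans ?_
        gcongr
    _ = _ := by rw [e1, e2, ← add_mul, hlm, one_mul]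

lemma ilc_type2 {r a : ℝ} (Q : RNormOn X r) (ha : 1 ≤ a) (h : Type2ConstLe Q.q a) (n : ℕ)
    (x : Fin n → X) :
    ∑ ε : Fin n → Bool, Q.q (∑ i, rsign (ε i) • x i) ^ 2 ≤ 2 ^ n * (a ^ 2 * ∑ i, Q.q (x i) ^ 2) := by
  have h1 := h n x
  unfold radAvg at h1
  simp only [Real.rpow_two] at h1
  rw [← Real.sqrt_eq_rpow, ← Real.sqrt_eq_rpow, Real.sqrt_le_left (by positivity), mul_pow,
    Real.sq_sqrt (by positivity), inv_mul_le_iff₀ (by positivity)] at h1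
  exact h1

lemma ilc_q_sum {r : ℝ} (hr0 : 0 < r) (hr1 : r ≤ 1) (Q : RNormOn X r) (n : ℕ)
    (x : Fin n → X) (ε : Fin n → Bool) :
    Q.q (∑ i, rsign (ε i) • x i) ^ 2 ≤ (n:ℝ) ^ (2 / r - 1) * ∑ i, Q.q (x i) ^ 2 := by
  have hp : 1 ≤ 2 / r := by rw [le_div_iff₀ hr0]; linarith
  have e : ∀ z, Q.q z ^ 2 = (Q.q z ^ r) ^ (2 / r) := by
    intro z
    rw [← Real.rpow_mul (Q.nonneg z), mul_div_cancel₀ _ hr0.ne']; norm_num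
  have h1 : ∀ s : Finset (Fin n), Q.q (∑ i ∈ s, rsign (ε i) • x i) ^ r ≤ ∑ i ∈ s, Q.q (x i) ^ r := by
    intro s
    induction s using Finset.induction_on with
    | empty => simp [ilc_q_zero, Real.zero_rpow hr0.ne']
    | insert i s hi ih =>
      rw [Finset.sum_insert hi, Finset.sum_insert hi]
      refine (Q.rtri _ _).trans ?_
      have : Q.q (rsign (ε i) • x i) = Q.q (x i) := by
        rw [Q.smul_eq]; unfold rsign; split_ifs <;> simp
      rw [this]; linarith
  rw [e]
  have h2 := Real.rpow_le_rpow (Real.rpow_nonneg (Q.nonneg _) r) (h1 Finset.univ)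
    (by positivity : 0 ≤ 2 / r)
  refine h2.trans ?_
  have h3 := Real.rpow_sum_le_const_mul_sum_rpow Finset.univ (fun i => Q.q (x i) ^ r) hp
  simp only [Finset.card_univ, Fintype.card_fin, abs_of_nonneg (Real.rpow_nonneg (Q.nonneg _) r),
    ← e] at h3
  exact h3

lemma ilc_K_avg {r a : ℝ} (hr0 : 0 < r) (hr1 : r ≤ 1) (ha : 1 ≤ a) (Q0 Q1 : RNormOn X r)
    (h : Type2ConstLe Q0.q a) (n : ℕ) (x : Fin n → X) (s M : ℝ)
    (hM : M ^ 2 = (n:ℝ) ^ (2 / r - 1)) :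
    ∑ ε : Fin n → Bool, K2fn Q0.q Q1.q s (∑ i, rsign (ε i) • x i) ^ 2 ≤
      2 ^ n * (a ^ 2 * ∑ i, K2fn Q0.q Q1.q (s * M) (x i) ^ 2) := by
  have key : ∀ δ > 0, ∑ ε : Fin n → Bool, K2fn Q0.q Q1.q s (∑ i, rsign (ε i) • x i) ^ 2 ≤
      2 ^ n * (a ^ 2 * ∑ i, (K2fn Q0.q Q1.q (s * M) (x i) ^ 2 + δ)) := by
    intro δ hδ
    choose y z hyz hlt using fun i => ilc_K_exists Q0.q Q1.q (s * M) (x i) δ hδ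
    have h1 : ∀ ε : Fin n → Bool, K2fn Q0.q Q1.q s (∑ i, rsign (ε i) • x i) ^ 2 ≤
        Q0.q (∑ i, rsign (ε i) • y i) ^ 2 + s ^ 2 * (M ^ 2 * ∑ i, Q1.q (z i) ^ 2) := by
      intro ε
      have := ilc_Ksq_le Q0.q Q1.q s (∑ i, rsign (ε i) • x i) (∑ i, rsign (ε i) • y i)
        (∑ i, rsign (ε i) • z i) (by
          rw [← Finset.sum_add_distrib]
          exact Finset.sum_congr rfl fun i _ => by rw [← smul_add, ← hyz])
      refine this.trans ?_
      have := ilc_q_sum hr0 hr1 Q1 n z ε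
      rw [hM]
      gcongr
    have h2 := ilc_type2 Q0 ha h n y
    calc _ ≤ ∑ ε : Fin n → Bool, (Q0.q (∑ i, rsign (ε i) • y i) ^ 2 +
          s ^ 2 * (M ^ 2 * ∑ i, Q1.q (z i) ^ 2)) := Finset.sum_le_sum fun ε _ => h1 ε
      _ ≤ 2 ^ n * (a ^ 2 * ∑ i, Q0.q (y i) ^ 2) +
          2 ^ n * (s ^ 2 * (M ^ 2 * ∑ i, Q1.q (z i) ^ 2)) := by
        rw [Finset.sum_add_distrib]
        simp only [Finset.sum_const, Finset.card_univ, Fintype.card_pi, Fintype.card_bool,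
          Finset.prod_const, Fintype.card_fin, nsmul_eq_mul]
        push_cast
        linarith
      _ ≤ 2 ^ n * (a ^ 2 * ∑ i, Q0.q (y i) ^ 2) +
          2 ^ n * (a ^ 2 * ((s * M) ^ 2 * ∑ i, Q1.q (z i) ^ 2)) := by
        have ha2 : 1 ≤ a ^ 2 := one_le_pow₀ ha
        have : s ^ 2 * (M ^ 2 * ∑ i, Q1.q (z i) ^ 2) = (s * M) ^ 2 * ∑ i, Q1.q (z i) ^ 2 := by ring
        rw [this]
        have h5 : 0 ≤ (s * M) ^ 2 * ∑ i, Q1.q (z i) ^ 2 := by positivity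
        have h6 := le_mul_of_one_le_left h5 ha2
        have h7 := mul_le_mul_of_nonneg_left h6 (by positivity : (0:ℝ) ≤ 2 ^ n)
        linarith
      _ = 2 ^ n * (a ^ 2 * ∑ i, (Q0.q (y i) ^ 2 + (s * M) ^ 2 * Q1.q (z i) ^ 2)) := by
        rw [Finset.sum_add_distrib, Finset.mul_sum Finset.univ _ ((s * M) ^ 2)]; ring
      _ ≤ _ := by
        have h5 := Finset.sum_le_sum fun i (_ : i ∈ Finset.univ) => (hlt i).le
        have h6 := mul_le_mul_of_nonneg_left h5 (sq_nonneg a)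
        exact mul_le_mul_of_nonneg_left h6 (by positivity)
  have e : ∀ δ, 2 ^ n * (a ^ 2 * ∑ i, (K2fn Q0.q Q1.q (s * M) (x i) ^ 2 + δ)) =
      2 ^ n * (a ^ 2 * ∑ i, K2fn Q0.q Q1.q (s * M) (x i) ^ 2) + 2 ^ n * a ^ 2 * n * δ := by
    intro δ
    rw [Finset.sum_add_distrib]
    simp only [Finset.sum_const, Finset.card_univ, Fintype.card_fin, nsmul_eq_mul]
    ring
  apply le_of_forall_pos_le_add
  intro η hη
  set T : ℝ := 2 ^ n * a ^ 2 * n with hT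
  have hT0 : 0 ≤ T := by positivity
  have h3 := key (η / (T + 1)) (by positivity)
  rw [e] at h3
  have : T * (η / (T + 1)) ≤ η := by
    rw [mul_div_assoc', div_le_iff₀ (by positivity)]; nlinarith
  linarith

lemma ilc_N_avg {r a θ : ℝ} (hr0 : 0 < r) (hr1 : r ≤ 1) (ha : 1 ≤ a) (Q0 Q1 : RNormOn X r)
    (h0 : 0 < θ) (h1 : θ < 1)
    (h : Type2ConstLe Q0.q a) (n : ℕ) (hn : 0 < n) (x : Fin n → X)
    (hx : ∀ i, ilcN Q0.q Q1.q θ (x i) ≤ 1) :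
    ∃ ε : Fin n → Bool, ilcN Q0.q Q1.q θ (∑ i, rsign (ε i) • x i) ≤
      a ^ 2 * (n:ℝ) ^ (1 + θ * (2 / r - 1)) := by
  have hn0 : (0:ℝ) < n := by exact_mod_cast hn
  set M : ℝ := (n:ℝ) ^ ((2 / r - 1) / 2) with hMdef
  have hM0 : 0 < M := by positivity
  have hM : M ^ 2 = (n:ℝ) ^ (2 / r - 1) := by
    rw [hMdef, ← Real.rpow_natCast, ← Real.rpow_mul hn0.le]; congr 1; push_cast; ring
  have hMθ : M ^ (2 * θ) = (n:ℝ) ^ (θ * (2 / r - 1)) := by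
    rw [hMdef, ← Real.rpow_mul hn0.le]; congr 1; ring
  have hI := fun z => ilc_integrable Q0 Q1 h0 h1 z
  -- change of variables
  have hsub : ∀ z, (∀ t ∈ Set.Ioi (0:ℝ), K2fn Q0.q Q1.q (t * M) z ^ 2 / t ^ (1 + 2 * θ) =
      M ^ (1 + 2 * θ) * (fun u => K2fn Q0.q Q1.q u z ^ 2 / u ^ (1 + 2 * θ)) (t * M)) := by
    intro z t ht
    have ht : 0 < t := ht
    simp only
    rw [Real.mul_rpow ht.le hM0.le]
    field_simp
  have hIM : ∀ z, MeasureTheory.IntegrableOn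
      (fun t => K2fn Q0.q Q1.q (t * M) z ^ 2 / t ^ (1 + 2 * θ)) (Set.Ioi (0:ℝ)) := by
    intro z
    rw [MeasureTheory.integrableOn_congr_fun (hsub z) measurableSet_Ioi]
    apply MeasureTheory.Integrable.const_mul
    have := (MeasureTheory.integrableOn_Ioi_comp_mul_right_iff
      (fun u => K2fn Q0.q Q1.q u z ^ 2 / u ^ (1 + 2 * θ)) 0 hM0).2 (by rw [zero_mul]; exact hI z)
    exact this
  have hintM : ∀ z, ∫ t in Set.Ioi (0:ℝ), K2fn Q0.q Q1.q (t * M) z ^ 2 / t ^ (1 + 2 * θ) =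
      M ^ (2 * θ) * ∫ t in Set.Ioi (0:ℝ), K2fn Q0.q Q1.q t z ^ 2 / t ^ (1 + 2 * θ) := by
    intro z
    rw [MeasureTheory.setIntegral_congr_fun measurableSet_Ioi (hsub z),
      MeasureTheory.integral_const_mul, MeasureTheory.integral_comp_mul_right_Ioi
      (fun u => K2fn Q0.q Q1.q u z ^ 2 / u ^ (1 + 2 * θ)) 0 hM0, zero_mul, smul_eq_mul,
      Real.rpow_add hM0, Real.rpow_one]
    field_simp
  have hsum : ∑ ε : Fin n → Bool, ilcN Q0.q Q1.q θ (∑ i, rsign (ε i) • x i) ≤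
      2 ^ n * (a ^ 2 * ∑ i, (M ^ (2 * θ) * ilcN Q0.q Q1.q θ (x i))) := by
    have hθθ : 0 ≤ θ * (1 - θ) := by nlinarith
    have e : 2 ^ n * (a ^ 2 * ∑ i, (M ^ (2 * θ) * ilcN Q0.q Q1.q θ (x i))) =
        (θ * (1 - θ)) * ∫ t in Set.Ioi (0:ℝ),
          2 ^ n * (a ^ 2 * ∑ i, K2fn Q0.q Q1.q (t * M) (x i) ^ 2 / t ^ (1 + 2 * θ)) := by
      rw [MeasureTheory.integral_const_mul, MeasureTheory.integral_const_mul,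
        MeasureTheory.integral_finsetSum _ (fun i _ => hIM (x i))]
      simp only [hintM, ilcN]
      rw [← Finset.mul_sum, ← Finset.mul_sum, ← Finset.mul_sum]
      ring
    rw [e]
    unfold ilcN
    rw [← Finset.mul_sum, ← MeasureTheory.integral_finsetSum _ (fun ε _ => hI _)]
    apply mul_le_mul_of_nonneg_left _ hθθ
    apply MeasureTheory.setIntegral_mono_on
      (MeasureTheory.integrable_finsetSum _ (fun ε _ => hI _))
      (((MeasureTheory.integrable_finsetSum _ (fun i _ => hIM (x i))).const_mul _).const_mul _)
      measurableSet_Ioi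
    intro t ht
    have ht : 0 < t := ht
    rw [← Finset.sum_div, ← Finset.sum_div, mul_div_assoc', mul_div_assoc']
    gcongr
    exact ilc_K_avg hr0 hr1 ha Q0 Q1 h n x t M hM
  have hbd : ∑ ε : Fin n → Bool, ilcN Q0.q Q1.q θ (∑ i, rsign (ε i) • x i) ≤
      ∑ ε : Fin n → Bool, a ^ 2 * (n:ℝ) ^ (1 + θ * (2 / r - 1)) := by
    refine hsum.trans ?_
    simp only [Finset.sum_const, Finset.card_univ, Fintype.card_pi, Fintype.card_bool,
          Finset.prod_const, Fintype.card_fin, nsmul_eq_mul]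
    push_cast
    rw [Real.rpow_add hn0, Real.rpow_one, ← hMθ]
    gcongr
    calc _ ≤ ∑ i : Fin n, M ^ (2 * θ) := by
          gcongr with i
          exact mul_le_of_le_one_right (by positivity) (hx i)
      _ = _ := by simp
  obtain ⟨ε, -, hε⟩ := Finset.exists_le_of_sum_le Finset.univ_nonempty hbd
  exact ⟨ε, hε⟩

end Helpers

section Abstract

variable {X : Type uX} [AddCommGroup X] [Module ℝ X]

lemma ilc_abs_iter {r D β : ℝ} (hr0 : 0 < r) (hD : 1 ≤ D) (N : X → ℝ)
    (hsmul : ∀ (c : ℝ) x, N (c • x) ≤ c ^ 2 * N x)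
    (htri : ∀ A B : ℝ, 0 < A → 0 < B → ∀ x y, N x ≤ A ^ (2 / r) → N y ≤ B ^ (2 / r) →
      N (x + y) ≤ (A + B) ^ (2 / r))
    (hβ : 0 ≤ β)
    (havg : ∀ n : ℕ, 0 < n → ∀ x : Fin n → X, (∀ i, N (x i) ≤ 1) →
      ∃ ε : Fin n → Bool, N (∑ i, rsign (ε i) • x i) ≤ D * (n:ℝ) ^ β)
    {ι : Type} (x : ι → X) (hx : ∀ i, N (x i) ≤ 1) (m : ℕ) :
    ∀ s : Finset ι, s.card ≤ 2 ^ m → N (∑ i ∈ s, x i) ≤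
      (((2:ℝ) ^ r) ^ m * (D ^ (r / 2) *
        ∑ k ∈ Finset.range (m + 1), ((2:ℝ) ^ (r * (β / 2 - 1))) ^ k)) ^ (2 / r) := by
  classical
  have hN0 : N 0 ≤ 0 := by simpa using hsmul 0 0
  set D' := D ^ (r / 2) with hD'
  have hD'1 : 1 ≤ D' := Real.one_le_rpow hD (by positivity)
  have hD'0 : 0 < D' := by linarith
  set ρ := (2:ℝ) ^ (r * (β / 2 - 1)) with hρ
  have hρ0 : 0 < ρ := by positivity
  have hDp : D' ^ (2 / r) = D := by
    rw [hD', ← Real.rpow_mul (by linarith)]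
    have : r / 2 * (2 / r) = 1 := by field_simp
    rw [this, Real.rpow_one]
  have h2p : ((2:ℝ) ^ r) ^ (2 / r) = 4 := by
    rw [← Real.rpow_mul (by norm_num), mul_div_cancel₀ _ hr0.ne']; norm_num
  induction m with
  | zero =>
    intro s hs
    have h1 : (1:ℝ) ≤ (((2:ℝ) ^ r) ^ 0 * (D' * ∑ k ∈ Finset.range (0 + 1), ρ ^ k)) ^ (2 / r) := by
      apply Real.one_le_rpow _ (by positivity)
      simpa using hD'1
    refine le_trans ?_ h1
    rw [pow_zero] at hs
    rcases s.eq_empty_or_nonempty with rfl | ⟨i, hi⟩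
    · simp; linarith
    · have : Nonempty ι := ⟨i⟩
      obtain ⟨j, hj⟩ := Finset.card_le_one_iff_subset_singleton.1 hs
      have : s = {i} := by
        have hij := hj hi
        rw [Finset.mem_singleton] at hij
        subst hij
        exact Finset.Subset.antisymm hj (by simpa using hi)
      rw [this]; simpa using hx i
  | succ m ih =>
    intro s hs
    rcases s.eq_empty_or_nonempty with rfl | hne
    · rw [Finset.sum_empty]; refine hN0.trans (by positivity)
    have hcard : 0 < s.card := hne.card_pos
    obtain ⟨ε, hε⟩ := havg s.card hcard (fun i => x (s.equivFin.symm i)) (fun i => hx _)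
    set σ : ι → Bool := fun i => if h : i ∈ s then ε (s.equivFin ⟨i, h⟩) else true with hσ
    have hsum : ∑ i, rsign (ε i) • x (s.equivFin.symm i) = ∑ i ∈ s, rsign (σ i) • x i := by
      rw [← Finset.sum_coe_sort s, ← Equiv.sum_comp s.equivFin]
      apply Finset.sum_congr rfl
      intro i _
      simp [hσ]
    rw [hsum] at hε
    set P := s.filter (fun i => σ i = true) with hP
    set Q := s.filter (fun i => ¬ σ i = true) with hQ
    have hPQ : P.card + Q.card = s.card := Finset.card_filter_add_card_filter_not _
    have hS1 : ∑ i ∈ s, x i = ∑ i ∈ P, x i + ∑ i ∈ Q, x i :=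
      (Finset.sum_filter_add_sum_filter_not s _ _).symm
    have hS2 : ∑ i ∈ s, rsign (σ i) • x i = ∑ i ∈ P, x i - ∑ i ∈ Q, x i := by
      rw [← Finset.sum_filter_add_sum_filter_not s (fun i => σ i = true), sub_eq_add_neg,
        ← Finset.sum_neg_distrib]
      congr 1
      · apply Finset.sum_congr rfl
        intro i hi
        simp [(Finset.mem_filter.1 hi).2, rsign]
      · apply Finset.sum_congr rfl
        intro i hi
        simp [(Finset.mem_filter.1 hi).2, rsign]
    -- bound for the signed sum
    set A := ((2:ℝ) ^ r) ^ (m + 1) * (D' * ρ ^ (m + 1)) with hA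
    have hAp : A ^ (2 / r) = D * ((2:ℝ) ^ (m + 1)) ^ β := by
      have e : A = D' * (((2:ℝ) ^ (m + 1)) ^ β) ^ (r / 2) := by
        rw [hA, mul_left_comm, ← mul_pow, hρ, ← Real.rpow_add (by norm_num)]
        congr 1
        rw [← Real.rpow_natCast, ← Real.rpow_natCast, ← Real.rpow_mul (by positivity),
          ← Real.rpow_mul (by positivity), ← Real.rpow_mul (by positivity)]
        congr 1; ring
      rw [e, Real.mul_rpow hD'0.le (by positivity), hDp, ← Real.rpow_mul (by positivity)]
      have : r / 2 * (2 / r) = 1 := by field_simp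
      rw [this, Real.rpow_one]
    have hbd : N (∑ i ∈ s, rsign (σ i) • x i) ≤ A ^ (2 / r) := by
      rw [hAp]
      refine hε.trans ?_
      gcongr
      exact_mod_cast hs
    have hbd' : N ((-1:ℝ) • ∑ i ∈ s, rsign (σ i) • x i) ≤ A ^ (2 / r) := by
      refine (hsmul _ _).trans ?_
      simpa using hbd
    set G := ∑ k ∈ Finset.range (m + 1), ρ ^ k with hG
    have hG0 : 0 < G := Finset.sum_pos (fun k _ => by positivity) ⟨0, by simp⟩
    set B := ((2:ℝ) ^ r) ^ (m + 1) * (D' * G) with hB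
    have hB2 : ∀ y, N y ≤ (((2:ℝ) ^ r) ^ m * (D' * G)) ^ (2 / r) → N ((2:ℝ) • y) ≤ B ^ (2 / r) := by
      intro y hy
      refine (hsmul _ _).trans ?_
      have : B = (2:ℝ) ^ r * (((2:ℝ) ^ r) ^ m * (D' * G)) := by rw [hB, pow_succ]; ring
      rw [this, Real.mul_rpow (by positivity) (by positivity), h2p]
      have : (2:ℝ) ^ 2 = 4 := by norm_num
      rw [this]
      gcongr
    have hA0 : 0 < A := by positivity
    have hB0 : 0 < B := by positivity
    have hAB : ((2:ℝ) ^ r) ^ (m + 1) * (D' * ∑ k ∈ Finset.range (m + 1 + 1), ρ ^ k) = A + B := by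
      rw [Finset.sum_range_succ, hA, hB]; ring
    rw [hAB]
    have h2m : P.card ≤ 2 ^ m ∨ Q.card ≤ 2 ^ m := by
      rw [pow_succ] at hs
      omega
    rcases h2m with hc | hc
    · have := htri A B hA0 hB0 _ _ hbd' (hB2 _ (ih P hc))
      convert this using 2
      rw [hS1, hS2]; module
    · have := htri A B hA0 hB0 _ _ hbd (hB2 _ (ih Q hc))
      convert this using 2
      rw [hS1, hS2]; module

lemma ilc_abs_convex {r D β : ℝ} (hr0 : 0 < r) (hD : 1 ≤ D) (N : X → ℝ)
    (hsmul : ∀ (c : ℝ) x, N (c • x) ≤ c ^ 2 * N x)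
    (htri : ∀ A B : ℝ, 0 < A → 0 < B → ∀ x y, N x ≤ A ^ (2 / r) → N y ≤ B ^ (2 / r) →
      N (x + y) ≤ (A + B) ^ (2 / r))
    (hβ : 0 ≤ β) (hβ2 : β < 2)
    (havg : ∀ n : ℕ, 0 < n → ∀ x : Fin n → X, (∀ i, N (x i) ≤ 1) →
      ∃ ε : Fin n → Bool, N (∑ i, rsign (ε i) • x i) ≤ D * (n:ℝ) ^ β)
    (n : ℕ) (x : Fin n → X) (hx : ∀ i, N (x i) ≤ 1) (w : Fin n → ℝ) (hw : ∀ i, 0 ≤ w i)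
    (hw1 : ∑ i, w i = 1) :
    N (∑ i, w i • x i) ≤ (D ^ (r / 2) * (1 - (2:ℝ) ^ (r * (β / 2 - 1)))⁻¹ + 1) ^ (2 / r) := by
  set D' := D ^ (r / 2) with hD'
  have hD'1 : 1 ≤ D' := Real.one_le_rpow hD (by positivity)
  set ρ := (2:ℝ) ^ (r * (β / 2 - 1)) with hρ
  have hρ0 : 0 < ρ := by positivity
  have hρ1 : ρ < 1 := Real.rpow_lt_one_of_one_lt_of_neg (by norm_num) (by nlinarith)
  have h1ρ : 0 < 1 - ρ := by linarith
  have h2r : 1 < (2:ℝ) ^ r := Real.one_lt_rpow (by norm_num) hr0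
  have h2p : ((2:ℝ) ^ r) ^ (2 / r) = 4 := by
    rw [← Real.rpow_mul (by norm_num), mul_div_cancel₀ _ hr0.ne']; norm_num
  obtain ⟨m, hm⟩ := pow_unbounded_of_one_lt (n:ℝ) h2r
  set E := D' * (1 - ρ)⁻¹ with hE
  have hE0 : 0 < E := by positivity
  set k : Fin n → ℕ := fun i => ⌊2 ^ m * w i⌋₊ with hk
  have h2m : (0:ℝ) < 2 ^ m := by positivity
  have hkle : ∀ i, (k i : ℝ) ≤ 2 ^ m * w i := fun i =>
    Nat.floor_le (mul_nonneg h2m.le (hw i))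
  have hklt : ∀ i, 2 ^ m * w i < k i + 1 := fun i => Nat.lt_floor_add_one _
  -- main part
  have hmain : N (∑ i, (k i : ℝ) • x i) ≤ (((2:ℝ) ^ r) ^ m * E) ^ (2 / r) := by
    have h := ilc_abs_iter hr0 hD N hsmul htri hβ havg
      (fun p : (Σ i : Fin n, Fin (k i)) => x p.1) (fun p => hx _) m Finset.univ (by
        rw [Finset.card_univ, Fintype.card_sigma]
        simp only [Fintype.card_fin]
        have : ((∑ i, k i : ℕ) : ℝ) ≤ ((2 ^ m : ℕ) : ℝ) := by
          push_cast
          calc _ ≤ ∑ i, 2 ^ m * w i := Finset.sum_le_sum fun i _ => hkle i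
            _ = 2 ^ m := by rw [← Finset.mul_sum, hw1, mul_one]
        exact_mod_cast this)
    rw [Fintype.sum_sigma] at h
    simp only [Finset.sum_const, Finset.card_univ, Fintype.card_fin] at h
    have e : ∑ i, (k i : ℝ) • x i = ∑ i, k i • x i :=
      Finset.sum_congr rfl fun i _ => Nat.cast_smul_eq_nsmul ℝ _ _
    rw [e]
    refine h.trans ?_
    have hg : ∑ j ∈ Finset.range (m + 1), ρ ^ j ≤ (1 - ρ)⁻¹ := by
      rw [← tsum_geometric_of_lt_one hρ0.le hρ1]
      exact (summable_geometric_of_lt_one hρ0.le hρ1).sum_le_tsum _ (fun _ _ => by positivity)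
    rw [hE]
    gcongr
  have hmain' : N (((2:ℝ) ^ m)⁻¹ • ∑ i, (k i : ℝ) • x i) ≤ E ^ (2 / r) := by
    refine (hsmul _ _).trans ?_
    rw [Real.mul_rpow (by positivity) hE0.le, ← Real.rpow_natCast, ← Real.rpow_mul (by positivity),
      mul_comm (m:ℝ), Real.rpow_mul (by positivity), h2p, Real.rpow_natCast] at hmain
    rw [inv_pow, inv_mul_le_iff₀ (by positivity), ← pow_mul, mul_comm m, pow_mul]
    norm_num
    exact hmain
  -- remainder
  set c : ℝ := (((2:ℝ) ^ r) ^ m)⁻¹ with hc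
  have hc0 : 0 < c := by positivity
  have hcp : c ^ (2 / r) = (((2:ℝ) ^ m)⁻¹) ^ 2 := by
    rw [hc, Real.inv_rpow (by positivity), ← Real.rpow_natCast, ← Real.rpow_mul (by positivity),
      mul_comm (m:ℝ), Real.rpow_mul (by positivity), h2p, Real.rpow_natCast, inv_pow,
      ← pow_mul, mul_comm m, pow_mul]
    norm_num
  set v : Fin n → ℝ := fun i => w i - ((2:ℝ) ^ m)⁻¹ * k i with hv
  have hv0 : ∀ i, 0 ≤ v i := by
    intro i
    have := hkle i
    simp only [hv, sub_nonneg]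
    rwa [inv_mul_le_iff₀ h2m]
  have hv1 : ∀ i, v i ≤ ((2:ℝ) ^ m)⁻¹ := by
    intro i
    have := (hklt i).le
    have h3 : w i ≤ ((2:ℝ) ^ m)⁻¹ * (k i + 1) := by rwa [le_inv_mul_iff₀ h2m]
    simp only [hv]
    linarith
  have hrem : ∀ s : Finset (Fin n), s.Nonempty → N (∑ i ∈ s, v i • x i) ≤ (s.card * c) ^ (2 / r) := by
    intro s hs
    have hone : ∀ i, N (v i • x i) ≤ c ^ (2 / r) := by
      intro i
      refine (hsmul _ _).trans ?_
      rw [hcp]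
      calc _ ≤ (v i) ^ 2 * 1 := by gcongr; exact hx i
        _ ≤ _ := by rw [mul_one]; exact pow_le_pow_left₀ (hv0 i) (hv1 i) 2
    induction hs using Finset.Nonempty.cons_induction with
    | singleton i => simpa using hone i
    | cons i s hi hs ih =>
      rw [Finset.sum_cons, Finset.card_cons]
      have hpos : (0:ℝ) < s.card * c := mul_pos (by exact_mod_cast hs.card_pos) hc0
      have := htri c (s.card * c) hc0 hpos _ _ (hone i) ih
      convert this using 2
      push_cast; ring
  have hn : (Finset.univ : Finset (Fin n)).Nonempty := by
    by_contra h
    rw [Finset.not_nonempty_iff_eq_empty] at h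
    rw [h] at hw1; simp at hw1
  have hR := hrem Finset.univ hn
  have hR1 : N (∑ i, v i • x i) ≤ 1 ^ (2 / r) := by
    refine hR.trans ?_
    rw [Finset.card_univ, Fintype.card_fin]
    gcongr
    rw [hc, ← div_eq_mul_inv, div_le_one (by positivity)]
    exact hm.le
  have := htri E 1 hE0 one_pos _ _ hmain' hR1
  convert this using 2
  rw [Finset.smul_sum, ← Finset.sum_add_distrib]
  apply Finset.sum_congr rfl
  intro i _
  rw [smul_smul, ← add_smul]
  congr 1
  simp only [hv]; ring

end Abstract

/-- **Lemma 5**. If `(X,‖·‖₀)` has type 2 constant at most `a` and `0 < θ < r/(2-r)`,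
then the interpolation space `X_θ = (X₀,X₁)_{θ,2}` satisfies `δ_{X_θ} ≤ C(a,θ,r)`. -/
theorem interpolation_space_locally_convex
    (r a θ : ℝ) (hr0 : 0 < r) (hr1 : r ≤ 1) (ha : 1 ≤ a)
    (hθ0 : 0 < θ) (hθ : θ < r / (2 - r)) :
    ∃ C > (0:ℝ), ∀ (X : Type uX) (_ : AddCommGroup X) (_ : Module ℝ X)
      (Q0 Q1 : RNormOn X r),
      (∃ c c' : ℝ, 0 < c ∧ ∀ x, c * Q1.q x ≤ Q0.q x ∧ Q0.q x ≤ c' * Q1.q x) →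
      CauchyComplete Q0.q →
      Type2ConstLe Q0.q a →
      ∀ x, thetaNorm Q0.q Q1.q θ x ≤ C * envNorm (thetaNorm Q0.q Q1.q θ) x := by
  have h2r : 0 < 2 - r := by linarith
  have hθ1 : θ < 1 := by
    refine hθ.trans_le ?_
    rw [div_le_one h2r]; linarith
  set β := 1 + θ * (2 / r - 1) with hβ
  have hpos : 0 < 2 / r - 1 := by
    rw [sub_pos, lt_div_iff₀ hr0]; linarith
  have hβ0 : 0 ≤ β := by positivity
  have hβ2 : β < 2 := by
    have : θ * (2 / r - 1) < r / (2 - r) * (2 / r - 1) := by gcongr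
    have e : r / (2 - r) * (2 / r - 1) = 1 := by
      field_simp
    linarith
  have hD : 1 ≤ a ^ 2 := one_le_pow₀ ha
  set F := ((a ^ 2) ^ (r / 2) * (1 - (2:ℝ) ^ (r * (β / 2 - 1)))⁻¹ + 1) ^ (2 / r) with hF
  have hρ1 : (2:ℝ) ^ (r * (β / 2 - 1)) < 1 :=
    Real.rpow_lt_one_of_one_lt_of_neg (by norm_num) (by nlinarith)
  have h1ρ : 0 < 1 - (2:ℝ) ^ (r * (β / 2 - 1)) := by linarith
  have hF0 : 0 < F := by positivity
  refine ⟨Real.sqrt F, Real.sqrt_pos.2 hF0, ?_⟩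
  intro X _ _ Q0 Q1 _ _ hT x
  set τ := thetaNorm Q0.q Q1.q θ with hτ
  have hτ0 : ∀ y, 0 ≤ τ y := fun y => by rw [hτ]; unfold thetaNorm; positivity
  have hτsq : ∀ y, τ y ^ 2 = ilcN Q0.q Q1.q θ y := ilc_theta_sq Q0.q Q1.q hθ0 hθ1
  have hτsmul : ∀ c : ℝ, ∀ y, 0 ≤ c → τ (c • y) ≤ c * τ y := by
    intro c y hc
    apply (fun h => (pow_le_pow_iff_left₀ (hτ0 _) (mul_nonneg hc (hτ0 y)) two_ne_zero).1 h)
    rw [mul_pow, hτsq, hτsq]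
    exact ilc_N_smul Q0 Q1 hθ0 hθ1 c y
  have hconv : ∀ y ∈ convexHull ℝ {x | τ x ≤ 1}, τ y ≤ Real.sqrt F := by
    intro y hy
    rw [mem_convexHull_iff_exists_fintype] at hy
    obtain ⟨ι, _, w, z, hw0, hw1, hz, rfl⟩ := hy
    apply Real.le_sqrt_of_sq_le
    rw [hτsq]
    let e := Fintype.equivFin ι
    have := ilc_abs_convex (X := X) hr0 hD (ilcN Q0.q Q1.q θ)
      (fun c x => ilc_N_smul Q0 Q1 hθ0 hθ1 c x)
      (fun A B hA hB x y hx hy => ilc_N_tri hr0 hr1 Q0 Q1 hθ0 hθ1 A B hA hB x y hx hy)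
      hβ0 hβ2
      (fun n hn x hx => ilc_N_avg hr0 hr1 ha Q0 Q1 hθ0 hθ1 hT n hn x hx)
      (Fintype.card ι) (fun i => z (e.symm i)) (fun i => by
        rw [← hτsq]; exact pow_le_one₀ (hτ0 _) (hz _))
      (fun i => w (e.symm i)) (fun i => hw0 _) (by rw [Equiv.sum_comp e.symm]; exact hw1)
    rw [Equiv.sum_comp e.symm (fun i => w i • z i)] at this
    exact this
  have hsF : 0 < Real.sqrt F := Real.sqrt_pos.2 hF0
  unfold envNorm
  rw [← div_le_iff₀' hsF, gauge_def]
  apply le_csInf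
  · refine ⟨τ x + 1, by have := hτ0 x; simp; linarith, ?_⟩
    have hp : 0 < τ x + 1 := by linarith [hτ0 x]
    rw [Set.mem_smul_set_iff_inv_smul_mem₀ hp.ne']
    apply subset_convexHull
    refine (hτsmul _ _ (by positivity)).trans ?_
    rw [inv_mul_le_iff₀ hp]; linarith
  · rintro ρ ⟨hρ, hmem⟩
    have hρ : 0 < ρ := hρ
    obtain ⟨y, hy, rfl⟩ := hmem
    rw [div_le_iff₀ hsF]
    exact (hτsmul ρ y hρ.le).trans (mul_le_mul_of_nonneg_left (hconv y hy) hρ.le)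
end

section
/- There is a constant C depending only on r (0 < r ≤ 1) such that every finite-dimensional r-normed space E satisfies d_E ≤ C d_{Ê}^{2/r−1} and δ_E ≤ C d_{Ê}^{2/r−2}, where Ê denotes the Banach envelope of E. -/
open scoped ENNReal NNReal BigOperators

universe uX uY uZ uW uE uO uG uV

section Defs

variable {X : Type uX} {Y : Type uY} {Z : Type uZ} {W : Type uW}
  [AddCommGroup X] [Module ℝ X] [AddCommGroup Y] [Module ℝ Y]
  [AddCommGroup Z] [Module ℝ Z] [AddCommGroup W] [Module ℝ W]

/-- `γ₂(u) ≤ c` : `u` factors through a Hilbert space (every real Hilbert space being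
isometric to some `ℓ²(ι)`) with product of the two operator norms at most `c`. -/
def Gamma2Le (qX : X → ℝ) (qY : Y → ℝ) (u : X →ₗ[ℝ] Y) (c : ℝ) : Prop :=
  ∃ (ι : Type uX) (w : X →ₗ[ℝ] lp (fun _ : ι => ℝ) 2)
    (v : lp (fun _ : ι => ℝ) 2 →ₗ[ℝ] Y) (Cw Cv : ℝ),
    0 ≤ Cw ∧ 0 ≤ Cv ∧ (∀ x, ‖w x‖ ≤ Cw * qX x) ∧ (∀ h, qY (v h) ≤ Cv * ‖h‖) ∧
    (∀ x, v (w x) = u x) ∧ Cv * Cw ≤ c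

end Defs


section Helpers

open scoped Pointwise

variable {E : Type uE} [AddCommGroup E] [Module ℝ E] {r : ℝ}

theorem RNormOn.map_zero' (Q : RNormOn E r) : Q.q 0 = 0 := (Q.eq_zero_iff 0).2 rfl

theorem RNormOn.sum_le (Q : RNormOn E r) (hr0 : 0 < r) {ι : Type*} (s : Finset ι) (f : ι → E) :
    Q.q (∑ i ∈ s, f i) ^ r ≤ ∑ i ∈ s, Q.q (f i) ^ r := by
  classical
  induction s using Finset.induction_on with
  | empty => simp [Q.map_zero', Real.zero_rpow hr0.ne']
  | insert a s ha ih =>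
    rw [Finset.sum_insert ha, Finset.sum_insert ha]
    exact (Q.rtri _ _).trans (by gcongr)

theorem RNormOn.exists_bound (Q : RNormOn E r) (hr0 : 0 < r) [FiniteDimensional ℝ E] :
    ∃ M : ℝ, ∀ x ∈ convexHull ℝ {x | Q.q x ≤ 1}, Q.q x ≤ M := by
  refine ⟨((Module.finrank ℝ E + 1 : ℕ) : ℝ) ^ (1 / r), fun x hx => ?_⟩
  obtain ⟨ι, _, z, w, hz, hind, hw, hsum, hx⟩ := eq_pos_convex_span_of_mem_convexHull hx
  have hcard : Fintype.card ι ≤ Module.finrank ℝ E + 1 := by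
    refine hind.card_le_finrank_succ.trans ?_
    gcongr
    exact Submodule.finrank_le _
  have h1 : Q.q x ^ r ≤ ((Module.finrank ℝ E + 1 : ℕ) : ℝ) := by
    rw [← hx]
    refine (Q.sum_le hr0 _ _).trans ?_
    have : ∀ i ∈ Finset.univ, Q.q (w i • z i) ^ r ≤ 1 := by
      intro i _
      apply Real.rpow_le_one (Q.nonneg _) _ hr0.le
      rw [Q.smul_eq, abs_of_pos (hw i)]
      have h2 : w i ≤ 1 := by
        rw [← hsum]
        exact Finset.single_le_sum (fun j _ => (hw j).le) (Finset.mem_univ i)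
      have h3 : Q.q (z i) ≤ 1 := hz ⟨i, rfl⟩
      exact mul_le_one₀ h2 (Q.nonneg _) h3
    refine (Finset.sum_le_sum this).trans ?_
    simp only [Finset.sum_const, Finset.card_univ, nsmul_eq_mul, mul_one]
    exact_mod_cast hcard
  calc Q.q x = (Q.q x ^ r) ^ (1 / r) := by
        rw [← Real.rpow_mul (Q.nonneg _), mul_one_div_cancel hr0.ne', Real.rpow_one]
    _ ≤ _ := Real.rpow_le_rpow (Real.rpow_nonneg (Q.nonneg _) _) h1 (by positivity)

theorem RNormOn.inv_smul_mem (Q : RNormOn E r) (x : E) (hx : x ≠ 0) :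
    (Q.q x)⁻¹ • x ∈ {x | Q.q x ≤ 1} := by
  have h : Q.q x ≠ 0 := fun h => hx ((Q.eq_zero_iff x).1 h)
  simp [Q.smul_eq, abs_of_nonneg (Q.nonneg x), h]

theorem RNormOn.env_le (Q : RNormOn E r) (x : E) : envNorm Q.q x ≤ Q.q x := by
  by_cases hx : x = 0
  · simp [hx, envNorm, Q.map_zero']
  · have h : Q.q x ≠ 0 := fun h => hx ((Q.eq_zero_iff x).1 h)
    apply gauge_le_of_mem (Q.nonneg x)
    exact ⟨(Q.q x)⁻¹ • x, subset_convexHull ℝ _ (Q.inv_smul_mem x hx), by simp [smul_smul, h]⟩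

theorem RNormOn.le_env (Q : RNormOn E r) {M : ℝ} (hM0 : 0 ≤ M)
    (hM : ∀ x ∈ convexHull ℝ {x | Q.q x ≤ 1}, Q.q x ≤ M) (x : E) :
    Q.q x ≤ M * envNorm Q.q x := by
  by_cases hx : x = 0
  · simp [hx, envNorm, Q.map_zero']
  have hq : 0 < Q.q x := (Q.nonneg x).lt_of_ne' fun h => hx ((Q.eq_zero_iff x).1 h)
  have key : ∀ b, 0 < b → x ∈ b • convexHull ℝ {x | Q.q x ≤ 1} → Q.q x ≤ M * b := by
    rintro b hb ⟨y, hy, rfl⟩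
    simp only [Q.smul_eq, abs_of_pos hb]
    rw [mul_comm]
    exact mul_le_mul_of_nonneg_right (hM y hy) hb.le
  rcases hM0.eq_or_lt with h0 | h0
  · have := key (Q.q x) hq ⟨(Q.q x)⁻¹ • x, subset_convexHull ℝ _ (Q.inv_smul_mem x hx),
      by simp [smul_smul, hq.ne']⟩
    rw [← h0] at this ⊢
    simpa using this
  · rw [← div_le_iff₀' h0]
    refine le_csInf ⟨Q.q x, hq, (Q.inv_smul_mem x hx |> fun h =>
      ⟨(Q.q x)⁻¹ • x, subset_convexHull ℝ _ h, by simp [smul_smul, hq.ne']⟩)⟩ ?_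
    rintro b ⟨hb, hxb⟩
    rw [div_le_iff₀' h0]
    exact key b hb hxb

/-- Greedy Maurey selection. -/
theorem RNormOn.maurey (Q : RNormOn E r) (hr0 : 0 < r) {H : Type*} [NormedAddCommGroup H]
    [InnerProductSpace ℝ H] (w : E →ₗ[ℝ] H) {Cw : ℝ}
    (hw : ∀ x, Q.q x ≤ 1 → ‖w x‖ ≤ Cw) {x : E}
    (hx : x ∈ convexHull ℝ {x | Q.q x ≤ 1}) (n : ℕ) :
    ∃ s : E, Q.q s ^ r ≤ n ∧ ‖w (s - (n : ℝ) • x)‖ ^ 2 ≤ n * Cw ^ 2 := by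
  induction n with
  | zero => exact ⟨0, by simp [Q.map_zero', Real.zero_rpow hr0.ne']⟩
  | succ n ih =>
    obtain ⟨s, hs, hs2⟩ := ih
    set S := w (s - (n : ℝ) • x) with hS
    let l : E →ₗ[ℝ] ℝ := (innerₛₗ ℝ (S - w x)).comp w
    have hy : ∃ y, Q.q y ≤ 1 ∧ l y ≤ l x := by
      by_contra! hcon
      have : convexHull ℝ {x | Q.q x ≤ 1} ⊆ {y | l x < l y} :=
        convexHull_min (fun y hy => hcon y hy) (convex_halfSpace_gt l.isLinear _)
      exact lt_irrefl (l x) (this hx)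
    obtain ⟨y, hy1, hy2⟩ := hy
    refine ⟨s + y, ?_, ?_⟩
    · refine (Q.rtri _ _).trans ?_
      push_cast
      have := Real.rpow_le_one (Q.nonneg y) hy1 hr0.le
      linarith
    · have e : w (s + y - ((n + 1 : ℕ) : ℝ) • x) = S + (w y - w x) := by
        simp only [hS, map_sub, map_add, map_smul]
        push_cast
        module
      have hy2' : inner ℝ (S - w x) (w y) ≤ inner ℝ (S - w x) (w x) := hy2
      rw [inner_sub_left, inner_sub_left] at hy2'
      rw [e, norm_add_sq_real, norm_sub_sq_real, inner_sub_right]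
      have h1 : ‖w y‖ ^ 2 ≤ Cw ^ 2 := pow_le_pow_left₀ (norm_nonneg _) (hw y hy1) 2
      have h2 := real_inner_self_eq_norm_sq (w x)
      have h3 := real_inner_comm (w x) (w y)
      have h4 := sq_nonneg ‖w x‖
      push_cast
      nlinarith

theorem RNormOn.step (Q : RNormOn E r) (hr0 : 0 < r) {H : Type*} [NormedAddCommGroup H]
    [InnerProductSpace ℝ H] (w : E →ₗ[ℝ] H) (v : H →ₗ[ℝ] E) {Cw Cv D M : ℝ}
    (hCw : 0 ≤ Cw) (hCv : 0 ≤ Cv) (hw : ∀ x, ‖w x‖ ≤ Cw * envNorm Q.q x)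
    (hv : ∀ h, envNorm Q.q (v h) ≤ Cv * ‖h‖) (hvw : ∀ x, v (w x) = x) (hD : Cv * Cw ≤ D)
    (hM0 : 0 ≤ M) (hM : ∀ x ∈ convexHull ℝ {x | Q.q x ≤ 1}, Q.q x ≤ M)
    {N : ℕ} (hN : 0 < N) (hND : (4:ℝ) ^ (1 / r) * D ^ 2 ≤ N) {x : E}
    (hx : x ∈ convexHull ℝ {x | Q.q x ≤ 1}) :
    Q.q x ^ r ≤ (N : ℝ) ^ (1 - r) + M ^ r / 2 := by
  have hN' : (0:ℝ) < N := by exact_mod_cast hN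
  obtain ⟨s, hs, hs2⟩ := Q.maurey hr0 w (Cw := Cw) (fun y hy => (hw y).trans (by
    simpa using mul_le_mul_of_nonneg_left ((Q.env_le y).trans hy) hCw)) hx N
  set z := s - (N : ℝ) • x with hz
  have hD0 : 0 ≤ D := (mul_nonneg hCv hCw).trans hD
  have h1 : ‖w z‖ ≤ √N * Cw := by
    refine (sq_le_sq₀ (norm_nonneg _) (by positivity)).1 ?_
    rw [mul_pow, Real.sq_sqrt hN'.le]
    exact hs2
  have h2 : envNorm Q.q z ≤ √N * D := by
    calc envNorm Q.q z = envNorm Q.q (v (w z)) := by rw [hvw]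
      _ ≤ Cv * ‖w z‖ := hv _
      _ ≤ Cv * (√N * Cw) := by gcongr
      _ = √N * (Cv * Cw) := by ring
      _ ≤ _ := by gcongr
  have h3 : Q.q z ≤ M * (√N * D) := (Q.le_env hM0 hM z).trans (by gcongr)
  -- `D ≤ √N * (1/2)^(1/r)`
  have h4 : D ≤ √N * (1 / 2 : ℝ) ^ (1 / r) := by
    have h5 : (4:ℝ) ^ (1 / r) = ((2:ℝ) ^ (1 / r)) ^ 2 := by
      rw [← Real.rpow_natCast, ← Real.rpow_mul (by norm_num), mul_comm, Real.rpow_mul (by norm_num)]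
      norm_num
    have h6 : (2:ℝ) ^ (1 / r) * D ≤ √N := by
      apply Real.le_sqrt_of_sq_le
      rw [mul_pow, ← h5]
      exact hND
    have h7 : (0:ℝ) < (2:ℝ) ^ (1 / r) := by positivity
    rw [Real.div_rpow (by norm_num) (by norm_num), Real.one_rpow, mul_one_div, le_div_iff₀ h7]
    linarith
  have h5 : Q.q z ≤ N * (M * (1 / 2 : ℝ) ^ (1 / r)) := by
    calc Q.q z ≤ M * (√N * D) := h3
      _ ≤ M * (√N * (√N * (1 / 2 : ℝ) ^ (1 / r))) := by gcongr
      _ = (√N * √N) * (M * (1 / 2 : ℝ) ^ (1 / r)) := by ring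
      _ = _ := by rw [Real.mul_self_sqrt hN'.le]
  have h6 : Q.q ((N:ℝ) • x) ^ r ≤ N + (N:ℝ) ^ r * (M ^ r / 2) := by
    have e : (N:ℝ) • x = s + (-1 : ℝ) • z := by rw [hz]; module
    have e2 : Q.q ((-1 : ℝ) • z) = Q.q z := by rw [Q.smul_eq]; simp
    rw [e]
    refine (Q.rtri _ _).trans ?_
    rw [e2]
    refine add_le_add hs ?_
    refine (Real.rpow_le_rpow (Q.nonneg _) h5 hr0.le).trans_eq ?_
    rw [Real.mul_rpow hN'.le (by positivity), Real.mul_rpow hM0 (by positivity),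
      ← Real.rpow_mul (by norm_num), one_div_mul_cancel hr0.ne', Real.rpow_one]
    ring
  rw [Q.smul_eq, abs_of_pos hN', Real.mul_rpow hN'.le (Q.nonneg _)] at h6
  have h7 : (0:ℝ) < (N:ℝ) ^ r := by positivity
  rw [Real.rpow_sub hN', Real.rpow_one]
  have h8 : (N:ℝ) ^ r * (N / (N:ℝ) ^ r) = N := by field_simp
  refine le_of_mul_le_mul_left ?_ h7
  rw [mul_add, h8]
  exact h6

theorem RNormOn.delta (Q : RNormOn E r) (hr0 : 0 < r) (hr1 : r ≤ 1) [FiniteDimensional ℝ E]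
    {H : Type*} [NormedAddCommGroup H]
    [InnerProductSpace ℝ H] (w : E →ₗ[ℝ] H) (v : H →ₗ[ℝ] E) {Cw Cv D : ℝ}
    (hCw : 0 ≤ Cw) (hCv : 0 ≤ Cv) (hw : ∀ x, ‖w x‖ ≤ Cw * envNorm Q.q x)
    (hv : ∀ h, envNorm Q.q (v h) ≤ Cv * ‖h‖) (hvw : ∀ x, v (w x) = x) (hD : Cv * Cw ≤ D)
    (x : E) :
    Q.q x ≤ ((2 * ((4:ℝ) ^ (1 / r) + 1) ^ (1 - r)) ^ (1 / r) * D ^ (2 / r - 2))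
      * envNorm Q.q x := by
  by_cases hx0 : x = 0
  · simp [hx0, envNorm, Q.map_zero']
  obtain ⟨M₀, hM₀⟩ := Q.exists_bound hr0
  have h0 : (0:E) ∈ convexHull ℝ {x | Q.q x ≤ 1} :=
    subset_convexHull ℝ _ (by simp [Q.map_zero'])
  set K := convexHull ℝ {x | Q.q x ≤ 1} with hK
  set M := sSup (Q.q '' K) with hMdef
  have hbdd : BddAbove (Q.q '' K) := ⟨M₀, by rintro _ ⟨y, hy, rfl⟩; exact hM₀ y hy⟩
  have hM : ∀ y ∈ K, Q.q y ≤ M := fun y hy => le_csSup hbdd ⟨y, hy, rfl⟩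
  have hM0 : 0 ≤ M := (Q.nonneg 0).trans (hM 0 h0)
  have hD1 : 1 ≤ D := by
    have hq : 0 < Q.q x := (Q.nonneg x).lt_of_ne' fun h => hx0 ((Q.eq_zero_iff x).1 h)
    have h1 := Q.le_env hM0 hM x
    have h2 : 0 < envNorm Q.q x := by
      by_contra! hc
      nlinarith [mul_nonneg hM0 (neg_nonneg.2 hc)]
    have h3 : envNorm Q.q x ≤ D * envNorm Q.q x := by
      calc envNorm Q.q x = envNorm Q.q (v (w x)) := by rw [hvw]
        _ ≤ Cv * ‖w x‖ := hv _
        _ ≤ Cv * (Cw * envNorm Q.q x) := by gcongr; exact hw x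
        _ = (Cv * Cw) * envNorm Q.q x := by ring
        _ ≤ _ := by gcongr
    exact (le_mul_iff_one_le_left h2).1 h3
  have hc : (0:ℝ) < (4:ℝ) ^ (1 / r) := by positivity
  set c := (4:ℝ) ^ (1 / r) with hcdef
  set N := ⌈c * D ^ 2⌉₊ with hNdef
  have hN : 0 < N := Nat.ceil_pos.2 (by positivity)
  have hN1 : c * D ^ 2 ≤ N := Nat.le_ceil _
  have hN2 : (N : ℝ) ≤ (c + 1) * D ^ 2 := by
    have := (Nat.ceil_lt_add_one (a := c * D ^ 2) (by positivity)).le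
    nlinarith
  have hstep : ∀ y ∈ K, Q.q y ≤ ((N : ℝ) ^ (1 - r) + M ^ r / 2) ^ (1 / r) := by
    intro y hy
    have := Q.step hr0 w v hCw hCv hw hv hvw hD hM0 hM hN hN1 hy
    calc Q.q y = (Q.q y ^ r) ^ (1 / r) := by
          rw [← Real.rpow_mul (Q.nonneg _), mul_one_div_cancel hr0.ne', Real.rpow_one]
      _ ≤ _ := Real.rpow_le_rpow (Real.rpow_nonneg (Q.nonneg _) _) this (by positivity)
  have hMle : M ≤ ((N : ℝ) ^ (1 - r) + M ^ r / 2) ^ (1 / r) :=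
    csSup_le ⟨_, 0, h0, rfl⟩ (by rintro _ ⟨y, hy, rfl⟩; exact hstep y hy)
  have hMr : M ^ r ≤ 2 * (N : ℝ) ^ (1 - r) := by
    have := Real.rpow_le_rpow hM0 hMle hr0.le
    rw [← Real.rpow_mul (by positivity), one_div_mul_cancel hr0.ne', Real.rpow_one] at this
    linarith
  have hMr2 : M ^ r ≤ 2 * ((c + 1) ^ (1 - r) * (D ^ 2) ^ (1 - r)) := by
    refine hMr.trans ?_
    rw [← Real.mul_rpow (by positivity) (by positivity)]
    have := Real.rpow_le_rpow (by positivity) hN2 (sub_nonneg.2 hr1)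
    linarith
  have hfin : M ≤ (2 * (c + 1) ^ (1 - r)) ^ (1 / r) * D ^ (2 / r - 2) := by
    calc M = (M ^ r) ^ (1 / r) := by
          rw [← Real.rpow_mul hM0, mul_one_div_cancel hr0.ne', Real.rpow_one]
      _ ≤ (2 * ((c + 1) ^ (1 - r) * (D ^ 2) ^ (1 - r))) ^ (1 / r) :=
          Real.rpow_le_rpow (by positivity) hMr2 (by positivity)
      _ = _ := by
          rw [← mul_assoc, Real.mul_rpow (by positivity) (by positivity)]
          congr 1
          rw [← Real.rpow_natCast, ← Real.rpow_mul (by positivity), ← Real.rpow_mul (by positivity)]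
          congr 1
          push_cast
          field_simp
  have henv : 0 ≤ envNorm Q.q x := gauge_nonneg _
  exact (Q.le_env hM0 hM x).trans (mul_le_mul_of_nonneg_right hfin henv)

end Helpers

/-- **Lemma 12**. There is `C = C(r)` such that every finite-dimensional `r`-normed space
`E` satisfies `d_E ≤ C d_{Ê}^{2/r-1}` and `δ_E ≤ C d_{Ê}^{2/r-2}`. -/
theorem euclidean_distance_le_envelope_distance
    (r : ℝ) (hr0 : 0 < r) (hr1 : r ≤ 1) :
    ∃ C > (0:ℝ), ∀ (E : Type uE) (_ : AddCommGroup E) (_ : Module ℝ E)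
      (Q : RNormOn E r), FiniteDimensional ℝ E →
      ∀ D : ℝ, Gamma2Le (envNorm Q.q) (envNorm Q.q) LinearMap.id D →
        Gamma2Le Q.q Q.q LinearMap.id (C * D ^ (2/r - 1)) ∧
        ∀ x, Q.q x ≤ (C * D ^ (2/r - 2)) * envNorm Q.q x := by
  refine ⟨(2 * ((4:ℝ) ^ (1 / r) + 1) ^ (1 - r)) ^ (1 / r), by positivity, ?_⟩
  intro E _ _ Q _ D hD
  obtain ⟨ι, w, v, Cw, Cv, hCw, hCv, hw, hv, hvw, hCD⟩ := hD
  have hδ := Q.delta hr0 hr1 w v hCw hCv hw hv hvw hCD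
  refine ⟨?_, hδ⟩
  have hD0 : 0 ≤ D := (mul_nonneg hCv hCw).trans hCD
  set C := (2 * ((4:ℝ) ^ (1 / r) + 1) ^ (1 - r)) ^ (1 / r) with hC
  have hC0 : 0 < C := by positivity
  refine ⟨ι, w, v, Cw, (C * D ^ (2 / r - 2)) * Cv, hCw, by positivity, ?_, ?_, hvw, ?_⟩
  · exact fun x => (hw x).trans (mul_le_mul_of_nonneg_left (Q.env_le x) hCw)
  · intro h
    refine (hδ (v h)).trans ?_
    rw [mul_assoc _ Cv]
    exact mul_le_mul_of_nonneg_left (hv h) (by positivity)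
  · have h2 : 2 ≤ 2 / r := by
      rw [le_div_iff₀ hr0]
      linarith
    have e : D ^ (2 / r - 1) = D ^ (2 / r - 2) * D := by
      rw [← Real.rpow_add_one' hD0 (by linarith)]
      congr 1
      ring
    rw [e, mul_assoc _ Cv, ← mul_assoc C]
    exact mul_le_mul_of_nonneg_left hCD (by positivity)
end

section
/- Let X be a quasi-Banach space of cotype q < ∞, let (Ω, μ) be a probability measure space, and let 0 < s ≤ 2. Then the space Z = L_s(μ, X) of X-valued s-integrable functions, with quasi-norm ‖f‖ = (∫ ‖f(ω)‖_X^s dμ)^{1/s}, has cotype q, with cotype q constant depending only on X, s and q. -/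
open scoped ENNReal NNReal BigOperators

universe uX uY uZ uW uE uO uG uV

section Walk

variable {X : Type uX} [AddCommGroup X] [Module ℝ X]

/-- Average of `F` over the end points of the symmetric walk from `v` with steps `± x`, `x ∈ l`. -/
noncomputable def wAvg (F : X → ℝ) : List X → X → ℝ
  | [], v => F v
  | x :: l, v => (wAvg F l (v + x) + wAvg F l (v - x)) / 2

open Classical in
/-- Probability that the walk ever leaves the ball of radius `t`. -/
noncomputable def wMax (N : X → ℝ) (t : ℝ) : List X → X → ℝ
  | [], v => if t < N v then 1 else 0
  | x :: l, v => if t < N v then 1 else (wMax N t l (v + x) + wMax N t l (v - x)) / 2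

theorem wAvg_mono {F G : X → ℝ} (h : ∀ w, F w ≤ G w) (l : List X) :
    ∀ v, wAvg F l v ≤ wAvg G l v := by
  induction l with
  | nil => intro v; exact h v
  | cons x l ih => intro v; simp only [wAvg]; linarith [ih (v + x), ih (v - x)]

theorem wAvg_add (F G : X → ℝ) (l : List X) :
    ∀ v, wAvg (fun w => F w + G w) l v = wAvg F l v + wAvg G l v := by
  induction l with
  | nil => intro v; rfl
  | cons x l ih => intro v; simp only [wAvg, ih]; ring

theorem wAvg_mul (c : ℝ) (F : X → ℝ) (l : List X) :
    ∀ v, wAvg (fun w => c * F w) l v = c * wAvg F l v := by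
  induction l with
  | nil => intro v; rfl
  | cons x l ih => intro v; simp only [wAvg, ih]; ring

theorem wAvg_const (c : ℝ) (l : List X) : ∀ v, wAvg (fun _ => c) l v = c := by
  induction l with
  | nil => intro v; rfl
  | cons x l ih => intro v; simp only [wAvg, ih]; ring

theorem wAvg_nonneg {F : X → ℝ} (h : ∀ w, 0 ≤ F w) (l : List X) (v : X) : 0 ≤ wAvg F l v := by
  have := wAvg_mono h l v
  rwa [wAvg_const] at this

theorem wAvg_shift (F : X → ℝ) (u : X) (l : List X) :
    ∀ v, wAvg (fun w => F (u + w)) l v = wAvg F l (u + v) := by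
  induction l with
  | nil => intro v; rfl
  | cons x l ih => intro v; simp only [wAvg, ih, add_assoc, add_sub_assoc]

theorem wAvg_neg (F : X → ℝ) (l : List X) :
    ∀ v, wAvg (fun w => F (-w)) l v = wAvg F l (-v) := by
  induction l with
  | nil => intro v; rfl
  | cons x l ih =>
    intro v
    simp only [wAvg, ih]
    rw [show -(v + x) = -v - x by abel, show -(v - x) = -v + x by abel]; ring

theorem wAvg_reflect (F : X → ℝ) (l : List X) (v : X) :
    wAvg (fun w => F (v - w)) l 0 = wAvg F l v := by
  have h := wAvg_neg (fun w => F (v + w)) l 0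
  simp only [neg_zero] at h
  rw [wAvg_shift, add_zero] at h
  simpa [sub_eq_add_neg] using h

theorem wAvg_shift0 (F : X → ℝ) (l : List X) (v : X) :
    wAvg (fun w => F (v + w)) l 0 = wAvg F l v := by
  rw [wAvg_shift, add_zero]

theorem wAvg_append_le {F : X → ℝ} {D : ℝ} {l : List X} (h : ∀ v, D ≤ wAvg F l v) (p : List X) :
    ∀ v, D ≤ wAvg F (p ++ l) v := by
  induction p with
  | nil => exact h
  | cons x p ih => intro v; simp only [List.cons_append, wAvg]; linarith [ih (v + x), ih (v - x)]

theorem quasi_pow {k a b z p : ℝ} (hk : 1 ≤ k) (ha : 0 ≤ a) (hb : 0 ≤ b) (hz : 0 ≤ z) (hp : 0 ≤ p)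
    (h : z ≤ k * (a + b)) : z ^ p ≤ (2 * k) ^ p * (a ^ p + b ^ p) := by
  have hk0 : 0 ≤ k := by linarith
  have h1 : z ≤ (2 * k) * max a b := by
    have : a + b ≤ 2 * max a b := by linarith [le_max_left a b, le_max_right a b]
    nlinarith
  calc z ^ p ≤ ((2 * k) * max a b) ^ p := Real.rpow_le_rpow hz h1 hp
    _ = (2 * k) ^ p * (max a b) ^ p := Real.mul_rpow (by positivity) (by positivity)
    _ ≤ _ := by
      gcongr
      have := Real.rpow_nonneg ha p
      have := Real.rpow_nonneg hb p
      rcases max_choice a b with h | h <;> rw [h] <;> linarith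

variable (Q : QuasiNormOn X)

theorem qn_zero : Q.q 0 = 0 := (Q.eq_zero_iff 0).2 rfl

theorem qn_mid (v w : X) : Q.q w ≤ Q.k * (Q.q (v + w) / 2 + Q.q (v - w) / 2) := by
  have h := Q.tri ((1/2 : ℝ) • (v + w)) ((-1/2 : ℝ) • (v - w))
  rw [Q.smul_eq, Q.smul_eq] at h
  have e : (1/2 : ℝ) • (v + w) + (-1/2 : ℝ) • (v - w) = w := by module
  rw [e, abs_of_pos (by norm_num), abs_of_neg (by norm_num)] at h
  linarith

theorem qn_mid' (v w : X) : Q.q v ≤ Q.k * (Q.q (v + w) / 2 + Q.q (v - w) / 2) := by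
  have h := Q.tri ((1/2 : ℝ) • (v + w)) ((1/2 : ℝ) • (v - w))
  rw [Q.smul_eq, Q.smul_eq] at h
  have e : (1/2 : ℝ) • (v + w) + (1/2 : ℝ) • (v - w) = v := by module
  rw [e, abs_of_pos (by norm_num)] at h
  linarith

theorem wMax_of_lt (N : X → ℝ) (t : ℝ) (l : List X) (v : X) (h : t < N v) : wMax N t l v = 1 := by
  cases l <;> simp [wMax, h]

open Classical in
theorem levy (t : ℝ) (l : List X) :
    ∀ v, wMax Q.q t l v ≤ 2 * wAvg (fun w => if t < Q.k * Q.q w then (1:ℝ) else 0) l v := by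
  have key : ∀ (l : List X) (v : X), t < Q.q v →
      1 ≤ 2 * wAvg (fun w => if t < Q.k * Q.q w then (1:ℝ) else 0) l v := by
    intro l v hv
    set F : X → ℝ := fun w => if t < Q.k * Q.q w then (1:ℝ) else 0 with hF
    have h1 : ∀ w, (1:ℝ) ≤ F (v + w) + F (v - w) := by
      intro w
      have := qn_mid' Q v w
      simp only [hF]
      split_ifs with h1 h2 h2 <;> norm_num
      exfalso; nlinarith
    have := wAvg_mono h1 l 0
    rw [wAvg_const, wAvg_add, wAvg_shift0, wAvg_reflect] at this
    linarith
  have nn : ∀ (l : List X) (v : X),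
      0 ≤ wAvg (fun w => if t < Q.k * Q.q w then (1:ℝ) else 0) l v := by
    intro l v
    apply wAvg_nonneg
    intro w; split_ifs <;> norm_num
  induction l with
  | nil =>
    intro v
    by_cases h : t < Q.q v
    · rw [wMax_of_lt _ _ _ _ h]; exact key _ _ h
    · have := nn [] v
      simp only [wMax, if_neg h]; linarith
  | cons x l ih =>
    intro v
    by_cases h : t < Q.q v
    · rw [wMax_of_lt _ _ _ _ h]; exact key _ _ h
    · simp only [wMax, if_neg h, wAvg]; linarith [ih (v + x), ih (v - x)]

theorem hj {p : ℝ} (hp : 0 ≤ p) {t B : ℝ} (ht : 0 ≤ t) (hB0 : 0 ≤ B) (l : List X) :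
    (∀ l', l' <:+ l → wAvg (fun w => Q.q w ^ p) l' 0 ≤ B) → ∀ v, Q.q v ≤ t →
    wAvg (fun w => Q.q w ^ p) l v ≤ (2 * (2 * Q.k) ^ p) * (t ^ p + wMax Q.q t l v * B) := by
  have hk := Q.one_le_k
  have hc : 1 ≤ (2 * Q.k) ^ p := Real.one_le_rpow (by linarith) hp
  have htp : 0 ≤ t ^ p := Real.rpow_nonneg ht p
  induction l with
  | nil =>
    intro _ v hv
    have h1 : Q.q v ^ p ≤ t ^ p := Real.rpow_le_rpow (Q.nonneg v) hv hp
    simp only [wAvg, wMax, if_neg (not_lt.2 hv)]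
    nlinarith
  | cons x l ih =>
    intro hB v hv
    have ih' := ih (fun l' h => hB l' (h.trans (List.suffix_cons x l)))
    have hx := hB (x :: l) (List.suffix_refl _)
    simp only [wAvg, zero_add, zero_sub] at hx
    have e : wAvg (fun w => Q.q w ^ p) l (-x) = wAvg (fun w => Q.q w ^ p) l x := by
      rw [← wAvg_neg]
      congr 1; funext w
      have := Q.smul_eq (-1) w
      simp at this; rw [this]
    have step : ∀ y, wAvg (fun w => Q.q w ^ p) l y ≤ B →
        wAvg (fun w => Q.q w ^ p) l (v + y) ≤
          (2 * (2 * Q.k) ^ p) * (t ^ p + wMax Q.q t l (v + y) * B) := by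
      intro y hy
      by_cases h : t < Q.q (v + y)
      · rw [wMax_of_lt _ _ _ _ h]
        have h1 : ∀ w, Q.q (v + w) ^ p ≤ (2 * Q.k) ^ p * (t ^ p + Q.q w ^ p) := by
          intro w
          apply quasi_pow hk ht (Q.nonneg _) (Q.nonneg _) hp
          refine (Q.tri v w).trans ?_
          gcongr
        have h2 := wAvg_mono h1 l y
        rw [wAvg_mul, wAvg_add, wAvg_const, wAvg_shift (fun w => Q.q w ^ p)] at h2
        nlinarith
      · exact ih' _ (not_lt.1 h)
    have s1 := step x (by linarith)
    have s2 := step (-x) (by linarith)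
    rw [← sub_eq_add_neg] at s2
    simp only [wAvg, wMax, if_neg (not_lt.2 hv)]
    linarith

theorem suffix_bound {p : ℝ} (hp : 0 ≤ p) (l l' : List X) (h : l' <:+ l) :
    wAvg (fun w => Q.q w ^ p) l' 0 ≤ (2 * (2 * Q.k) ^ p) * wAvg (fun w => Q.q w ^ p) l 0 := by
  obtain ⟨r, rfl⟩ := h
  have hk := Q.one_le_k
  have hc : 1 ≤ (2 * Q.k) ^ p := Real.one_le_rpow (by linarith) hp
  have h1 : ∀ v, wAvg (fun w => Q.q w ^ p) l' 0 / (2 * (2 * Q.k) ^ p) ≤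
      wAvg (fun w => Q.q w ^ p) l' v := by
    intro v
    rw [div_le_iff₀ (by positivity)]
    have h2 : ∀ w, Q.q w ^ p ≤ (2 * Q.k) ^ p * (Q.q (v + w) ^ p + Q.q (v - w) ^ p) := by
      intro w
      apply quasi_pow hk (Q.nonneg _) (Q.nonneg _) (Q.nonneg _) hp
      refine (qn_mid Q v w).trans ?_
      have := Q.nonneg (v + w)
      have := Q.nonneg (v - w)
      gcongr <;> linarith
    have h3 := wAvg_mono h2 l' 0
    rw [wAvg_mul, wAvg_add, wAvg_shift0 (fun w => Q.q w ^ p),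
      wAvg_reflect (fun w => Q.q w ^ p)] at h3
    linarith
  have := wAvg_append_le h1 r 0
  rwa [div_le_iff₀ (by positivity), mul_comm] at this

theorem kahane {p s : ℝ} (hp : 0 ≤ p) (hs : 0 < s) :
    ∃ K > (0:ℝ), ∀ l : List X, wAvg (fun w => Q.q w ^ p) l 0 ≤
      K * (wAvg (fun w => Q.q w ^ s) l 0) ^ (p / s) := by
  have hk := Q.one_le_k
  have hk0 : 0 < Q.k := by linarith
  set c := 2 * (2 * Q.k) ^ p with hc
  have hcpos : 0 < c := by positivity
  set N := 4 * c ^ 2 * Q.k ^ s with hN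
  have hNpos : 0 < N := by positivity
  refine ⟨2 * c * N ^ (p / s), by positivity, fun l => ?_⟩
  set E := wAvg (fun w => Q.q w ^ p) l 0 with hE
  set m := wAvg (fun w => Q.q w ^ s) l 0 with hm
  have hE0 : 0 ≤ E := wAvg_nonneg (fun w => Real.rpow_nonneg (Q.nonneg w) p) l 0
  have hm0 : 0 ≤ m := wAvg_nonneg (fun w => Real.rpow_nonneg (Q.nonneg w) s) l 0
  have main : ∀ δ > (0:ℝ), E ≤ 2 * c * N ^ (p / s) * (m + δ) ^ (p / s) := by
    intro δ hδ
    have hmd : 0 < m + δ := by linarith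
    set t := (N * (m + δ)) ^ (1 / s) with ht
    have htpos : 0 < t := by positivity
    have hts : t ^ s = N * (m + δ) := by
      rw [ht, ← Real.rpow_mul (by positivity), one_div_mul_cancel hs.ne', Real.rpow_one]
    have htp : t ^ p = N ^ (p / s) * (m + δ) ^ (p / s) := by
      rw [ht, ← Real.rpow_mul (by positivity), ← Real.mul_rpow (by positivity) (by positivity)]
      congr 1; ring
    have h1 := hj Q hp htpos.le (B := c * E) (by positivity) l
      (fun l' h => suffix_bound Q hp l l' h) 0 (by rw [qn_zero]; exact htpos.le)
    have h2 := levy Q t l 0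
    classical
    have h3 : ∀ w, (if t < Q.k * Q.q w then (1:ℝ) else 0) ≤ (Q.k ^ s / t ^ s) * Q.q w ^ s := by
      intro w
      split_ifs with h
      · rw [div_mul_eq_mul_div, le_div_iff₀ (by positivity), one_mul,
          ← Real.mul_rpow hk0.le (Q.nonneg w)]
        exact Real.rpow_le_rpow htpos.le h.le hs.le
      · have := Real.rpow_nonneg (Q.nonneg w) s
        positivity
    have h4 := wAvg_mono h3 l 0
    rw [wAvg_mul, ← hm, hts] at h4
    have h5 : Q.k ^ s / (N * (m + δ)) * m ≤ 1 / (4 * c ^ 2) := by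
      rw [div_mul_eq_mul_div, div_le_div_iff₀ (by positivity) (by positivity), hN]
      have : 0 < 4 * c ^ 2 * Q.k ^ s := by positivity
      nlinarith
    have h6 : wMax Q.q t l 0 ≤ 1 / (2 * c ^ 2) := by
      have : 1 / (2 * c ^ 2) = 2 * (1 / (4 * c ^ 2)) := by field_simp; norm_num
      rw [this]
      refine h2.trans ?_
      have h7 := h4.trans h5
      convert mul_le_mul_of_nonneg_left h7 (zero_le_two (α := ℝ)) using 1
    have h8 : wMax Q.q t l 0 * (c * E) ≤ 1 / (2 * c ^ 2) * (c * E) := by gcongr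
    have h9 : c * (1 / (2 * c ^ 2) * (c * E)) = E / 2 := by field_simp
    have h10 : c * (wMax Q.q t l 0 * (c * E)) ≤ E / 2 := by
      rw [← h9]; exact mul_le_mul_of_nonneg_left h8 hcpos.le
    rw [mul_assoc, ← htp]
    have h1' : E ≤ c * (t ^ p + wMax Q.q t l 0 * (c * E)) := h1
    linarith
  have hcont : Continuous (fun δ : ℝ => 2 * c * N ^ (p / s) * (m + δ) ^ (p / s)) :=
    continuous_const.mul ((continuous_const.add continuous_id).rpow_const
      (fun _ => Or.inr (by positivity)))
  have hlim := (hcont.tendsto 0).mono_left (nhdsWithin_le_nhds (s := Set.Ioi 0))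
  rw [add_zero] at hlim
  exact ge_of_tendsto hlim (Filter.eventually_of_mem self_mem_nhdsWithin (fun δ hδ => main δ hδ))

theorem wAvg_ofFn (F : X → ℝ) : ∀ (n : ℕ) (x : Fin n → X) (v : X),
    ((2:ℝ) ^ n)⁻¹ * ∑ ε : Fin n → Bool, F (v + ∑ i, rsign (ε i) • x i) =
      wAvg F (List.ofFn x) v := by
  intro n
  induction n with
  | zero => intro x v; simp [wAvg]
  | succ n ih =>
    intro x v
    rw [List.ofFn_succ]
    simp only [wAvg]
    rw [← ih, ← ih, ← (Fin.consEquiv (fun _ => Bool)).sum_comp, Fintype.sum_prod_type]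
    simp only [Fintype.sum_bool, Fin.consEquiv_apply, Fin.sum_univ_succ, Fin.cons_zero,
      Fin.cons_succ, rsign, if_true]
    simp [pow_succ, add_assoc, sub_eq_add_neg]
    ring

end Walk

theorem minkowski_int {Ω : Type uO} [MeasurableSpace Ω] (μ : MeasureTheory.Measure Ω) {n : ℕ}
    (g : Fin n → Ω → ℝ) (h0 : ∀ i ω, 0 ≤ g i ω) (hg : ∀ i, MeasureTheory.Integrable (g i) μ)
    {r : ℝ} (hr : 1 ≤ r) :
    MeasureTheory.Integrable (fun ω => (∑ i, g i ω ^ r) ^ (1 / r)) μ ∧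
    (∑ i, (∫ ω, g i ω ∂μ) ^ r) ^ (1 / r) ≤ ∫ ω, (∑ i, g i ω ^ r) ^ (1 / r) ∂μ := by
  have hr0 : 0 < r := by linarith
  haveI : Fact (1 ≤ ENNReal.ofReal r) := ⟨by simpa using hr⟩
  have hto : (ENNReal.ofReal r).toReal = r := ENNReal.toReal_ofReal hr0.le
  let h : Ω → PiLp (ENNReal.ofReal r) (fun _ : Fin n => ℝ) := fun ω => WithLp.toLp _ (fun i => g i ω)
  have hn : ∀ ω, ‖h ω‖ = (∑ i, g i ω ^ r) ^ (1 / r) := by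
    intro ω
    rw [PiLp.norm_eq_sum (by rw [hto]; exact hr0), hto]
    simp [h, abs_of_nonneg (h0 _ _)]
  have hint : MeasureTheory.Integrable h μ := by
    have h1 : MeasureTheory.Integrable (fun ω i => g i ω) μ := MeasureTheory.Integrable.of_eval hg
    exact (PiLp.continuousLinearEquiv (ENNReal.ofReal r) ℝ
      (fun _ : Fin n => ℝ)).symm.toContinuousLinearMap.integrable_comp h1
  refine ⟨by simpa only [hn] using hint.norm, ?_⟩
  have hle := MeasureTheory.norm_integral_le_integral_norm (μ := μ) h
  simp only [hn] at hle
  refine le_trans (le_of_eq ?_) hle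
  rw [PiLp.norm_eq_sum (by rw [hto]; exact hr0), hto]
  congr 2
  funext i
  have : (∫ ω, h ω ∂μ) i = ∫ ω, g i ω ∂μ := by
    have := (PiLp.proj (𝕜 := ℝ) (ENNReal.ofReal r) (fun _ : Fin n => ℝ) i).integral_comp_comm hint
    simpa [h] using this.symm
  rw [this, Real.norm_of_nonneg (MeasureTheory.integral_nonneg (h0 i))]

/-- If `X` has cotype `q < ∞` and `(Ω,μ)` is a probability space and `0 < s ≤ 2`, then
`L_s(μ,X)` has cotype `q`, with constant depending only on `X`, `s`, `q`. -/
theorem Ls_space_has_cotype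
    {X : Type uX} [AddCommGroup X] [Module ℝ X] (QX : QuasiNormOn X)
    (hXcomplete : CauchyComplete QX.q)
    (qc cX : ℝ) (hqc : 2 ≤ qc) (hcX : 0 < cX) (hcot : CotypeConstLe QX.q qc cX)
    (s : ℝ) (hs0 : 0 < s) (hs2 : s ≤ 2) :
    ∃ C > (0:ℝ), ∀ (Ω : Type uO) (_ : MeasurableSpace Ω) (μ : MeasureTheory.Measure Ω),
      MeasureTheory.IsProbabilityMeasure μ →
      ∀ (n : ℕ) (f : Fin n → Ω → X),
      (∀ c : Fin n → ℝ,
        MeasureTheory.Integrable (fun ω => QX.q (∑ i, c i • f i ω) ^ s) μ) →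
      (∑ i, ((∫ ω, QX.q (f i ω) ^ s ∂μ) ^ (1/s)) ^ qc) ^ (1/qc) ≤
        C * ((((2:ℝ) ^ n)⁻¹ * ∑ ε : Fin n → Bool,
          ((∫ ω, QX.q (∑ i, rsign (ε i) • f i ω) ^ s ∂μ) ^ (1/s)) ^ qc) ^ (1/qc)) := by
  have hq0 : 0 < qc := by linarith
  obtain ⟨K, hK, hkah⟩ := kahane QX (p := qc) (s := s) hq0.le hs0
  have hr : 1 ≤ qc / s := by rw [le_div_iff₀ hs0]; linarith
  have hr0 : 0 < qc / s := by linarith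
  -- pointwise inequality
  have hpt : ∀ (n : ℕ) (x : Fin n → X),
      (∑ i, (QX.q (x i) ^ s) ^ (qc / s)) ^ (1 / (qc / s)) ≤ (cX ^ qc * K) ^ (s / qc) *
        (((2:ℝ) ^ n)⁻¹ * ∑ ε : Fin n → Bool, QX.q (∑ i, rsign (ε i) • x i) ^ s) := by
    intro n x
    have e1 := wAvg_ofFn (fun w => QX.q w ^ qc) n x 0
    have e2 := wAvg_ofFn (fun w => QX.q w ^ s) n x 0
    simp only [zero_add] at e1 e2
    have hc := hcot n x
    have hk := hkah (List.ofFn x)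
    rw [radAvg, e1] at hc
    rw [e2]
    have hE0 : 0 ≤ wAvg (fun w => QX.q w ^ qc) (List.ofFn x) 0 :=
      wAvg_nonneg (fun w => Real.rpow_nonneg (QX.nonneg w) _) _ _
    have hm0 : 0 ≤ wAvg (fun w => QX.q w ^ s) (List.ofFn x) 0 :=
      wAvg_nonneg (fun w => Real.rpow_nonneg (QX.nonneg w) _) _ _
    generalize wAvg (fun w => QX.q w ^ qc) (List.ofFn x) 0 = E at *
    generalize wAvg (fun w => QX.q w ^ s) (List.ofFn x) 0 = m at *
    have e3 : ∀ i, (QX.q (x i) ^ s) ^ (qc / s) = QX.q (x i) ^ qc := by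
      intro i
      rw [← Real.rpow_mul (QX.nonneg _)]; congr 1; field_simp
    simp only [e3]
    have hS0 : 0 ≤ ∑ i, QX.q (x i) ^ qc :=
      Finset.sum_nonneg fun i _ => Real.rpow_nonneg (QX.nonneg _) _
    generalize ∑ i, QX.q (x i) ^ qc = S at *
    have h1 : S ≤ cX ^ qc * E := by
      have := Real.rpow_le_rpow (by positivity) hc hq0.le
      rwa [Real.mul_rpow hcX.le (by positivity), ← Real.rpow_mul hS0, ← Real.rpow_mul hE0,
        one_div_mul_cancel hq0.ne', Real.rpow_one, Real.rpow_one] at this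
    have h2 : S ≤ (cX ^ qc * K) * m ^ (qc / s) := by
      refine h1.trans ?_
      rw [mul_assoc]; gcongr
    have h3 := Real.rpow_le_rpow hS0 h2 (z := s / qc) (by positivity)
    rw [Real.mul_rpow (by positivity) (by positivity), ← Real.rpow_mul hm0,
      show qc / s * (s / qc) = 1 by field_simp, Real.rpow_one] at h3
    rwa [one_div_div]
  set C2 := (cX ^ qc * K) ^ (s / qc) with hC2
  have hC2pos : 0 < C2 := by positivity
  refine ⟨(C2 ^ (qc / s)) ^ (1 / qc), by positivity, ?_⟩
  intro Ω _ μ _ n f hint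
  have hgi : ∀ i, MeasureTheory.Integrable (fun ω => QX.q (f i ω) ^ s) μ := by
    intro i
    have := hint (Pi.single i 1)
    simpa [Pi.single_apply, ite_smul] using this
  have hSi : ∀ ε : Fin n → Bool,
      MeasureTheory.Integrable (fun ω => QX.q (∑ i, rsign (ε i) • f i ω) ^ s) μ :=
    fun ε => hint (fun i => rsign (ε i))
  obtain ⟨hI, hM⟩ := minkowski_int μ (fun i ω => QX.q (f i ω) ^ s)
    (fun i ω => Real.rpow_nonneg (QX.nonneg _) _) hgi hr
  have hI2 : ∫ ω, (∑ i, (QX.q (f i ω) ^ s) ^ (qc / s)) ^ (1 / (qc / s)) ∂μ ≤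
      C2 * (((2:ℝ) ^ n)⁻¹ * ∑ ε : Fin n → Bool,
        ∫ ω, QX.q (∑ i, rsign (ε i) • f i ω) ^ s ∂μ) := by
    rw [← MeasureTheory.integral_finsetSum _ (fun ε _ => hSi ε),
      ← MeasureTheory.integral_const_mul, ← MeasureTheory.integral_const_mul]
    exact MeasureTheory.integral_mono hI
      (((MeasureTheory.integrable_finsetSum _ (fun ε _ => hSi ε)).const_mul _).const_mul _)
      (fun ω => hpt n (fun i => f i ω))
  have hG0 : ∀ i, 0 ≤ ∫ ω, QX.q (f i ω) ^ s ∂μ :=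
    fun i => MeasureTheory.integral_nonneg fun ω => Real.rpow_nonneg (QX.nonneg _) _
  have hJ0 : ∀ ε : Fin n → Bool, 0 ≤ ∫ ω, QX.q (∑ i, rsign (ε i) • f i ω) ^ s ∂μ :=
    fun ε => MeasureTheory.integral_nonneg fun ω => Real.rpow_nonneg (QX.nonneg _) _
  have hfin := hM.trans hI2
  have e4 : ∀ a : ℝ, 0 ≤ a → (a ^ (1 / s)) ^ qc = a ^ (qc / s) := by
    intro a ha
    rw [← Real.rpow_mul ha]; congr 1; ring
  simp only [e4 _ (hG0 _), e4 _ (hJ0 _)]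
  set J : (Fin n → Bool) → ℝ := fun ε => ∫ ω, QX.q (∑ i, rsign (ε i) • f i ω) ^ s ∂μ with hJ
  have hJs : 0 ≤ ∑ ε, J ε := Finset.sum_nonneg fun ε _ => hJ0 ε
  have hpm : (((2:ℝ) ^ n)⁻¹ * ∑ ε, J ε) ^ (qc / s) ≤ ((2:ℝ) ^ n)⁻¹ * ∑ ε, J ε ^ (qc / s) := by
    have := Real.rpow_arith_mean_le_arith_mean_rpow Finset.univ
      (fun _ : Fin n → Bool => ((2:ℝ) ^ n)⁻¹) J (fun _ _ => by positivity) (by simp)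
      (fun ε _ => hJ0 ε) hr
    simpa only [← Finset.mul_sum] using this
  have hsum0 : 0 ≤ ∑ i, (∫ ω, QX.q (f i ω) ^ s ∂μ) ^ (qc / s) :=
    Finset.sum_nonneg fun i _ => Real.rpow_nonneg (hG0 i) _
  have h5 := Real.rpow_le_rpow (by positivity) hfin hr0.le
  rw [← Real.rpow_mul hsum0, one_div_mul_cancel hr0.ne', Real.rpow_one,
    Real.mul_rpow hC2pos.le (by positivity)] at h5
  have h6 := h5.trans (mul_le_mul_of_nonneg_left hpm (by positivity))
  have hJr : 0 ≤ ∑ ε, J ε ^ (qc / s) := Finset.sum_nonneg fun ε _ => Real.rpow_nonneg (hJ0 ε) _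
  rw [← Real.mul_rpow (by positivity) (by positivity)]
  exact Real.rpow_le_rpow hsum0 h6 (by positivity)
end
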